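/- Let f be a homeomorphism of the open annulus 𝔸 isotopic to the identity and satisfying the intersection property, and let F be a lift of f to ℝ². Suppose there exist two path-connected sets X₁ and X₂ in ℝ² satisfying: (1) F(X_i) ∩ X_i = ∅ for i = 1, 2; (2) T^k(X_i) ∩ X_i = ∅ for i = 1, 2 and every k ∈ ℤ \ {0}; (3) either X₁ = X₂ or T^k(X₁) ∩ X₂ = ∅ for every k ∈ ℤ; (4) there exist positive integers p_i, q_i (i = 1, 2) such that F^{q₁}(X₁) ∩ T^{p₁}(X₁) ≠ ∅ and F^{q₂}(X₂) ∩ T^{−p₂}(X₂) ≠ ∅. Then F has a fixed point. -/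

import Mathlib

open Filter Topology Set

noncomputable section

/-- The plane ℝ². -/
abbrev Plane := ℝ × ℝ

/-- The open annulus 𝔸 = ℝ/ℤ × ℝ. -/
abbrev Ann := AddCircle (1 : ℝ) × ℝ

/-- The covering map π : ℝ² → 𝔸, (x,y) ↦ (x + ℤ, y). -/
def prj : Plane → Ann := fun p => ((p.1 : AddCircle (1 : ℝ)), p.2)

/-- The deck transformation T^k : ℝ² → ℝ², (x,y) ↦ (x + k, y). -/
def Tr (k : ℤ) : Plane → Plane := fun p => (p.1 + (k : ℝ), p.2)

/-- `F` is a lift of `f` to the universal cover ℝ² of the annulus. -/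
def IsLift (f : Ann ≃ₜ Ann) (F : Plane ≃ₜ Plane) : Prop :=
  ∀ p : Plane, prj (F p) = f (prj p)

/-- `f` is isotopic to the identity: there is a continuous family of homeomorphisms
joining the identity to `f`. -/
def IsotopicToId (f : Ann ≃ₜ Ann) : Prop :=
  ∃ H : ℝ → Ann → Ann,
    Continuous (fun q : ℝ × Ann => H q.1 q.2) ∧
    (∀ t : ℝ, ∃ h : Ann ≃ₜ Ann, ∀ z, H t z = h z) ∧
    (∀ z, H 0 z = z) ∧ (∀ z, H 1 z = f z)

/-- An essential circle in 𝔸: a simple closed curve which is not null-homotopic. -/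
def IsEssentialCircle (c : Set Ann) : Prop :=
  ∃ φ : C(AddCircle (1 : ℝ), Ann), Function.Injective φ ∧ Set.range φ = c ∧
    ¬ ∃ pt : Ann, φ.Homotopic (ContinuousMap.const _ pt)

/-- `f` has the intersection property: every essential circle meets its image. -/
def IntersectionProperty (f : Ann → Ann) : Prop :=
  ∀ c : Set Ann, IsEssentialCircle c → (c ∩ f '' c).Nonempty

/-- `z` is a positively recurrent point of `g`: some subsequence of the forward orbit
of `z` converges to `z`. -/
def PosRec {X : Type*} [TopologicalSpace X] (g : X → X) (z : X) : Prop :=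
  ∃ φ : ℕ → ℕ, StrictMono φ ∧ Tendsto (fun k => g^[φ k] z) atTop (𝓝 z)

/-- The positively recurrent point `z` has rotation number `ρ` for the lift `F` of `f`. -/
def HasRotNum (f : Ann → Ann) (F : Plane → Plane) (z : Ann) (ρ : ℝ) : Prop :=
  PosRec f z ∧
    ∀ zt : Plane, prj zt = z →
      ∀ φ : ℕ → ℕ, StrictMono φ →
        Tendsto (fun k => f^[φ k] z) atTop (𝓝 z) →
        Tendsto (fun k => ((F^[φ k] zt).1 - zt.1) / (φ k : ℝ)) atTop (𝓝 ρ)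

/-- The rotation set Rot(F): the set of rotation numbers of positively recurrent
points of `f`. -/
def Rot (f : Ann → Ann) (F : Plane → Plane) : Set ℝ := {ρ | ∃ z, HasRotNum f F z ρ}

/-- The region `L(Γ)` of the plane on the left (west) of a line `Γ` (as a subset of ℝ²):
points lying in the connected component of the complement of `Γ` containing all far-west
points of the horizontal axis. -/
def Lset (Γ : Set Plane) : Set Plane :=
  {p | ∃ s : ℝ, ∀ x ≤ s, p ∈ connectedComponentIn Γᶜ ((x, 0) : Plane)}

/-- The region `R(Γ)` of the plane on the right (east) of a line `Γ`. -/
def Rset (Γ : Set Plane) : Set Plane :=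
  {p | ∃ s : ℝ, ∀ x ≥ s, p ∈ connectedComponentIn Γᶜ ((x, 0) : Plane)}

/-- The relation `Γ₁ < Γ₂` on (essential, oriented from south to north) lines:
`Cl(L(Γ₁)) ⊆ L(Γ₂)`. -/
def lineLT (Γ₁ Γ₂ : Set Plane) : Prop := closure (Lset Γ₁) ⊆ Lset Γ₂

/-- An essential line in ℝ², oriented from south to north: a properly embedded copy of ℝ
whose second coordinate tends to ±∞ at ±∞. -/
def IsEssLinePlane (Γ : ℝ → Plane) : Prop :=
  Continuous Γ ∧ Function.Injective Γ ∧ IsProperMap Γ ∧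
    Tendsto (fun t => (Γ t).2) atTop atTop ∧ Tendsto (fun t => (Γ t).2) atBot atBot

/-- An essential line in the annulus 𝔸: a properly embedded simple path joining one end
to the other. -/
def IsEssLineAnn (γ : ℝ → Ann) : Prop :=
  Continuous γ ∧ Function.Injective γ ∧ IsProperMap γ ∧
    ((Tendsto (fun t => (γ t).2) atTop atTop ∧ Tendsto (fun t => (γ t).2) atBot atBot) ∨
     (Tendsto (fun t => (γ t).2) atTop atBot ∧ Tendsto (fun t => (γ t).2) atBot atTop))

/-- An oriented essential line in 𝔸 joining the lower end S to the upper end N. -/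
def IsEssLineAnnSN (γ : ℝ → Ann) : Prop :=
  Continuous γ ∧ Function.Injective γ ∧ IsProperMap γ ∧
    Tendsto (fun t => (γ t).2) atTop atTop ∧ Tendsto (fun t => (γ t).2) atBot atBot

theorem Tr_zero (z : Plane) : Tr 0 z = z := by simp [Tr]
theorem Tr_add (a b : ℤ) (z : Plane) : Tr (a + b) z = Tr a (Tr b z) := by
  simp only [Tr, Prod.mk.injEq, and_true]; push_cast; ring
theorem Tr_neg_self (a : ℤ) (z : Plane) : Tr (-a) (Tr a z) = z := by
  rw [← Tr_add]; simp [Tr_zero]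
theorem Tr_self_neg (a : ℤ) (z : Plane) : Tr a (Tr (-a) z) = z := by
  rw [← Tr_add]; simp [Tr_zero]
theorem Tr_eq_add (k : ℤ) (z : Plane) : Tr k z = z + ((k : ℝ), (0 : ℝ)) := by
  simp [Tr, Prod.ext_iff]
theorem dist_Tr (k : ℤ) (z w : Plane) : dist (Tr k z) (Tr k w) = dist z w := by
  rw [Tr_eq_add, Tr_eq_add, dist_add_right]
theorem Tr_inj (k : ℤ) : Function.Injective (Tr k) := by
  intro a b h
  have := congrArg (Tr (-k)) h
  simpa [Tr_neg_self] using this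
theorem Tr_cont (k : ℤ) : Continuous (Tr k) := by
  unfold Tr; fun_prop
theorem Tr_fst (k : ℤ) (z : Plane) : (Tr k z).1 = z.1 + k := rfl
theorem Tr_snd (k : ℤ) (z : Plane) : (Tr k z).2 = z.2 := rfl
theorem Tr_ne {k : ℤ} (hk : k ≠ 0) (z : Plane) : Tr k z ≠ z := by
  intro h
  have := congrArg Prod.fst h
  simp [Tr, hk] at this

/-- isotopic to the identity through injective maps -/
def IsoId (F : Plane → Plane) : Prop :=
  ∃ H : ℝ → Plane → Plane, Continuous (fun q : ℝ × Plane => H q.1 q.2) ∧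
    (∀ t, Function.Injective (H t)) ∧ (∀ z, H 0 z = z) ∧ (∀ z, H 1 z = F z)

theorem IsoId.refl : IsoId (fun z => z) :=
  ⟨fun _ z => z, by fun_prop, fun _ => Function.injective_id, fun _ => rfl, fun _ => rfl⟩

theorem IsoId.comp {F G : Plane → Plane} (hF : IsoId F) (hG : IsoId G) :
    IsoId (fun z => F (G z)) := by
  obtain ⟨H, h1, h2, h3, h4⟩ := hF
  obtain ⟨K, k1, k2, k3, k4⟩ := hG
  refine ⟨fun t z => H t (K t z), ?_, fun t => (h2 t).comp (k2 t), ?_, ?_⟩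
  · exact h1.comp (continuous_fst.prodMk k1)
  · intro z; simp [h3, k3]
  · intro z; simp [h4, k4]

theorem IsoId.conj {F : Plane → Plane} (hF : IsoId F) (Φ : Plane ≃ₜ Plane) :
    IsoId (fun z => Φ (F (Φ.symm z))) := by
  obtain ⟨H, h1, h2, h3, h4⟩ := hF
  refine ⟨fun t z => Φ (H t (Φ.symm z)), ?_, fun t =>
    Φ.injective.comp ((h2 t).comp Φ.symm.injective), ?_, ?_⟩
  · exact Φ.continuous.comp (h1.comp (continuous_fst.prodMk (Φ.symm.continuous.comp continuous_snd)))
  · intro z; simp [h3]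
  · intro z; simp [h4]

/-- bump weight -/
def wt (S : Set Plane) (r : ℝ) (z : Plane) : ℝ := max 0 (1 - Metric.infDist z S / r)

theorem wt_nonneg (S r z) : 0 ≤ wt S r z := le_max_left _ _

theorem wt_cont (S r) : Continuous (wt S r) := by
  unfold wt
  have := Metric.continuous_infDist_pt S
  fun_prop

theorem wt_lip (S : Set Plane) {r : ℝ} (hr : 0 < r) (z w : Plane) :
    |wt S r z - wt S r w| ≤ dist z w / r := by
  unfold wt
  refine (abs_max_sub_max_le_max _ _ _ _).trans ?_
  rw [sub_self, abs_zero, max_eq_right (abs_nonneg _)]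
  have h := (Metric.lipschitz_infDist_pt S).dist_le_mul z w
  rw [Real.dist_eq] at h
  have : |1 - Metric.infDist z S / r - (1 - Metric.infDist w S / r)|
      = |Metric.infDist z S - Metric.infDist w S| / r := by
    rw [← abs_of_pos hr, ← abs_div, abs_of_pos hr, ← abs_neg]
    congr 1; field_simp; ring
  rw [this]
  gcongr
  simpa using h

theorem push_aux (S : Set Plane) {r : ℝ} (hr : 0 < r) (v : Plane) (hv : ‖v‖ < r) :
    ApproximatesLinearOn (fun z => z + wt S r z • v)
      ((ContinuousLinearEquiv.refl ℝ Plane : Plane ≃L[ℝ] Plane) : Plane →L[ℝ] Plane) univ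
      (Real.toNNReal (‖v‖ / r)) := by
  intro x _ y _
  have : (fun z => z + wt S r z • v) x - (fun z => z + wt S r z • v) y -
    ((ContinuousLinearEquiv.refl ℝ Plane : Plane ≃L[ℝ] Plane) : Plane →L[ℝ] Plane) (x - y)
      = (wt S r x - wt S r y) • v := by
    simp [sub_smul]; abel
  rw [this, norm_smul, Real.coe_toNNReal _ (by positivity), Real.norm_eq_abs, ← dist_eq_norm]
  calc |wt S r x - wt S r y| * ‖v‖ ≤ (dist x y / r) * ‖v‖ := by
        gcongr; exact wt_lip S hr x y
    _ = ‖v‖ / r * dist x y := by ring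

theorem push_inj (S : Set Plane) {r : ℝ} (hr : 0 < r) (v : Plane) (hv : ‖v‖ < r) :
    Function.Injective (fun z => z + wt S r z • v) := by
  intro x y h
  by_contra hne
  have h1 := push_aux S hr v hv x (mem_univ _) y (mem_univ _)
  rw [h] at h1
  have hp : 0 < ‖x - y‖ := norm_pos_iff.2 (sub_ne_zero.2 hne)
  simp only [sub_self, zero_sub, norm_neg, ContinuousLinearEquiv.coe_coe,
    ContinuousLinearEquiv.refl_apply, Real.coe_toNNReal _ (show 0 ≤ ‖v‖ / r by positivity)] at h1
  have : ‖v‖ / r < 1 := (div_lt_one hr).2 hv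
  nlinarith

theorem push_homeo (S : Set Plane) {r : ℝ} (hr : 0 < r) (v : Plane) (hv : ‖v‖ < r) :
    ∃ g : Plane ≃ₜ Plane, (∀ z, g z = z + wt S r z • v) ∧ IsoId g := by
  have hc : (Real.toNNReal (‖v‖ / r)) <
     ‖((ContinuousLinearEquiv.refl ℝ Plane).symm : Plane →L[ℝ] Plane)‖₊⁻¹ := by
    have h1 : ‖((ContinuousLinearEquiv.refl ℝ Plane).symm : Plane →L[ℝ] Plane)‖₊ = 1 := by
      have : ((ContinuousLinearEquiv.refl ℝ Plane).symm : Plane →L[ℝ] Plane)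
        = ContinuousLinearMap.id ℝ Plane := rfl
      rw [this]; ext; simp [ContinuousLinearMap.norm_id]
    rw [h1, inv_one, ← NNReal.coe_lt_coe, Real.coe_toNNReal _ (by positivity)]
    exact (div_lt_one hr).2 hv
  refine ⟨(push_aux S hr v hv).toHomeomorph _ (Or.inr hc), fun z => rfl, ?_⟩
  refine ⟨fun t z => z + wt S r z • ((max 0 (min 1 t)) • v), ?_, ?_, ?_, ?_⟩
  · have := wt_cont S r
    fun_prop
  · intro t
    apply push_inj S hr
    rw [norm_smul, Real.norm_eq_abs, abs_of_nonneg (le_max_left _ _)]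
    have : max 0 (min 1 t) ≤ 1 := max_le zero_le_one (min_le_left _ _)
    nlinarith [norm_nonneg v]
  · intro z; simp
  · intro z; simp; rfl

/-- `U` is disjoint from its translates by nonzero elements of `N`. -/
def NFree (N : AddSubgroup ℤ) (U : Set Plane) : Prop :=
  ∀ k ∈ N, k ≠ 0 → ∀ z ∈ U, Tr k z ∉ U

/-- homeomorphisms supported in the translates of U. -/
structure GoodPush (N : AddSubgroup ℤ) (U : Set Plane) (g : Plane ≃ₜ Plane) : Prop where
  iso : IsoId g
  comm : ∀ k ∈ N, ∀ z, g (Tr k z) = Tr k (g z)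
  supp : ∀ z, (∀ k ∈ N, Tr k z ∉ U) → g z = z
  maps : ∀ z, z ∈ U → g z ∈ U

theorem GoodPush.refl (N U) : GoodPush N U (Homeomorph.refl Plane) :=
  ⟨IsoId.refl, fun _ _ _ => rfl, fun _ _ => rfl, fun _ h => h⟩

theorem GoodPush.trans {N U} {g h : Plane ≃ₜ Plane} (hg : GoodPush N U g) (hh : GoodPush N U h) :
    GoodPush N U (g.trans h) := by
  refine ⟨hh.iso.comp hg.iso, ?_, ?_, ?_⟩
  · intro k hk z; simp [hg.comm k hk, hh.comm k hk]
  · intro z hz; simp [hg.supp z hz, hh.supp z hz]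
  · intro z hz; exact hh.maps _ (hg.maps _ hz)

theorem GoodPush.mono {N U V} {g : Plane ≃ₜ Plane} (hg : GoodPush N U g) (hUV : U ⊆ V)
    (hV : NFree N V) : GoodPush N V g := by
  refine ⟨hg.iso, hg.comm, fun z hz => hg.supp z fun k hk h => hz k hk (hUV h), ?_⟩
  intro z hz
  by_cases h : ∀ k ∈ N, Tr k z ∉ U
  · rw [hg.supp z h]; exact hz
  · push Not at h
    obtain ⟨k, hk, hkz⟩ := h
    have : k = 0 := by
      by_contra hk0
      exact hV k hk hk0 z hz (hUV hkz)
    subst this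
    rw [Tr_zero] at hkz
    exact hUV (hg.maps _ hkz)

theorem GoodPush.inv {N U} {g : Plane ≃ₜ Plane} (hg : GoodPush N U g) (hU : NFree N U)
    {z : Plane} (hz : g z ∈ U) : z ∈ U := by
  by_contra hzU
  by_cases h : ∀ k ∈ N, Tr k z ∉ U
  · rw [hg.supp z h] at hz; exact hzU hz
  · push Not at h
    obtain ⟨k, hk, hkz⟩ := h
    have hk0 : k ≠ 0 := by
      rintro rfl; rw [Tr_zero] at hkz; exact hzU hkz
    have h1 := hg.maps _ hkz
    rw [hg.comm k hk] at h1
    exact hU k hk hk0 _ hz h1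

theorem push_ball (N : AddSubgroup ℤ) {U : Set Plane} (hU : NFree N U) {a b : Plane} {r : ℝ}
    (hr : 0 < r) (hball : Metric.ball a r ⊆ U) (hab : dist a b < r) :
    ∃ g : Plane ≃ₜ Plane, GoodPush N U g ∧ g a = b := by
  set S : Set Plane := {z | ∃ k ∈ N, z = Tr k a} with hS
  have haS : a ∈ S := ⟨0, N.zero_mem, (Tr_zero a).symm⟩
  have hne : S.Nonempty := ⟨a, haS⟩
  have hv : ‖b - a‖ < r := by rwa [← dist_eq_norm, dist_comm]
  obtain ⟨g, hg, hiso⟩ := push_homeo S hr (b - a) hv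
  have hSk : ∀ k ∈ N, Tr k '' S = S := by
    intro k hk
    ext z
    constructor
    · rintro ⟨w, ⟨m, hm, rfl⟩, rfl⟩
      exact ⟨k + m, N.add_mem hk hm, (Tr_add _ _ _).symm⟩
    · rintro ⟨m, hm, rfl⟩
      refine ⟨Tr (m - k) a, ⟨m - k, N.sub_mem hm hk, rfl⟩, ?_⟩
      rw [← Tr_add]; congr 1; ring
  have hwt : ∀ k ∈ N, ∀ z, wt S r (Tr k z) = wt S r z := by
    intro k hk z
    unfold wt
    conv_lhs => rw [← hSk k hk]
    rw [Metric.infDist_image (Isometry.of_dist_eq (dist_Tr k))]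
  have hzero : ∀ z, ¬ Metric.infDist z S < r → g z = z := by
    intro z hz
    have : wt S r z = 0 := by
      unfold wt
      rw [max_eq_left]
      have : 1 ≤ Metric.infDist z S / r := (one_le_div hr).2 (not_lt.1 hz)
      linarith
    rw [hg, this]; simp
  refine ⟨g, ⟨hiso, ?_, ?_, ?_⟩, ?_⟩
  · intro k hk z
    rw [hg, hg, hwt k hk, Tr_eq_add, Tr_eq_add]; abel
  · intro z hz
    apply hzero
    intro h
    obtain ⟨y, ⟨k, hk, rfl⟩, hd⟩ := (Metric.infDist_lt_iff hne).1 h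
    apply hz (-k) (N.neg_mem hk)
    apply hball
    rw [Metric.mem_ball, ← dist_Tr k, Tr_self_neg]; exact hd
  · intro z hz
    by_cases h : Metric.infDist z S < r
    · apply hball
      have key : dist z a ≤ Metric.infDist z S := by
        refine le_of_forall_gt_imp_ge_of_dense fun ρ hρ => ?_
        have hρ' : Metric.infDist z S < min ρ r := lt_min hρ h
        obtain ⟨y, ⟨k, hk, rfl⟩, hd⟩ := (Metric.infDist_lt_iff hne).1 hρ'
        have hk0 : k = 0 := by
          by_contra hk0
          have : Tr (-k) z ∈ U := by
            apply hball
            rw [Metric.mem_ball, ← dist_Tr k, Tr_self_neg]; exact hd.trans_le (min_le_right _ _)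
          exact hU (-k) (N.neg_mem hk) (neg_ne_zero.2 hk0) z hz this
        subst hk0
        rw [Tr_zero] at hd
        exact (hd.trans_le (min_le_left _ _)).le
      have hw : wt S r z = 1 - Metric.infDist z S / r := by
        unfold wt
        rw [max_eq_right]
        have : Metric.infDist z S / r < 1 := (div_lt_one hr).2 h
        linarith
      have hpos : 0 < wt S r z := by
        rw [hw]
        have : Metric.infDist z S / r < 1 := (div_lt_one hr).2 h
        linarith
      rw [Metric.mem_ball]
      calc dist (g z) a ≤ dist (g z) z + dist z a := dist_triangle _ _ _
        _ = wt S r z * ‖b - a‖ + dist z a := by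
            rw [hg, dist_eq_norm, add_sub_cancel_left, norm_smul, Real.norm_eq_abs,
              abs_of_pos hpos]
        _ < wt S r z * r + Metric.infDist z S := by
            have := mul_lt_mul_of_pos_left hv hpos
            linarith
        _ = r := by rw [hw]; field_simp; ring
    · rw [hzero z h]; exact hz
  · rw [hg]
    have : wt S r a = 1 := by
      unfold wt; rw [Metric.infDist_zero_of_mem haS]; simp
    rw [this]; simp

theorem push_open (N : AddSubgroup ℤ) {U : Set Plane} (hU : NFree N U) (hUo : IsOpen U)
    (hUc : IsPreconnected U) {a b : Plane} (ha : a ∈ U) (hb : b ∈ U) :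
    ∃ g : Plane ≃ₜ Plane, GoodPush N U g ∧ g a = b := by
  refine hUc.induction₂' (fun a b => ∃ g : Plane ≃ₜ Plane, GoodPush N U g ∧ g a = b) ?_ ?_ ha hb
  · intro x hx
    obtain ⟨r, hr, hrU⟩ := Metric.isOpen_iff.1 hUo x hx
    filter_upwards [mem_nhdsWithin_of_mem_nhds (Metric.ball_mem_nhds x (half_pos hr))] with y hy
    constructor
    · exact push_ball N hU hr hrU (by rw [dist_comm]; exact (Metric.mem_ball.1 hy).trans (by linarith))
    · refine push_ball N hU (half_pos hr) (fun z hz => hrU ?_) hy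
      rw [Metric.mem_ball] at *
      linarith [dist_triangle z y x]
  · rintro x y z _ _ _ ⟨g, hg, rfl⟩ ⟨h, hh, rfl⟩
    exact ⟨g.trans h, hg.trans hh, rfl⟩

theorem preconn_thickening {K : Set Plane} (hK : IsPreconnected K) (δ : ℝ) (hδ : 0 < δ) :
    IsPreconnected (Metric.thickening δ K) := by
  rcases K.eq_empty_or_nonempty with rfl | ⟨x0, hx0⟩
  · simp [Metric.thickening_empty, isPreconnected_empty]
  have : Metric.thickening δ K = ⋃₀ {s | ∃ x ∈ K, s = K ∪ Metric.ball x δ} := by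
    ext z
    rw [Metric.mem_thickening_iff]
    constructor
    · rintro ⟨x, hx, h⟩
      exact ⟨K ∪ Metric.ball x δ, ⟨x, hx, rfl⟩, Or.inr h⟩
    · rintro ⟨s, ⟨x, hx, rfl⟩, h | h⟩
      · exact ⟨z, h, by simpa using hδ⟩
      · exact ⟨x, hx, h⟩
  rw [this]
  apply isPreconnected_sUnion x0
  · rintro s ⟨x, hx, rfl⟩; exact Or.inl hx0
  · rintro s ⟨x, hx, rfl⟩
    exact hK.union x hx (Metric.mem_ball_self hδ) (convex_ball x δ).isPreconnected

theorem thick_disj {K L : Set Plane} (hK : IsCompact K) (hL : IsCompact L) (h : Disjoint K L) :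
    ∀ᶠ δ in 𝓝[>] (0:ℝ), Disjoint (Metric.thickening δ K) (Metric.thickening δ L) := by
  obtain ⟨δ, hδ, hd⟩ := h.exists_thickenings hK hL.isClosed
  filter_upwards [Ioo_mem_nhdsGT hδ] with ε hε
  exact hd.mono (Metric.thickening_mono hε.2.le _) (Metric.thickening_mono hε.2.le _)

theorem thick_free {K : Set Plane} (hK : IsCompact K) (F : Plane ≃ₜ Plane)
    (h : ∀ z ∈ K, F z ∉ K) :
    ∀ᶠ δ in 𝓝[>] (0:ℝ), ∀ z ∈ Metric.thickening δ K, F z ∉ Metric.thickening δ K := by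
  have hd : Disjoint K (F '' K) := by
    rw [Set.disjoint_left]; rintro _ hz ⟨w, hw, rfl⟩; exact h w hw hz
  obtain ⟨δ, hδ, hd⟩ := hd.exists_thickenings hK (hK.image F.continuous).isClosed
  have hop : IsOpen (F ⁻¹' Metric.thickening δ (F '' K)) :=
    Metric.isOpen_thickening.preimage F.continuous
  obtain ⟨δ', hδ', hs⟩ := hK.exists_thickening_subset_open hop
    (fun z hz => Metric.self_subset_thickening hδ _ ⟨z, hz, rfl⟩)
  filter_upwards [Ioo_mem_nhdsGT hδ, Ioo_mem_nhdsGT hδ'] with ε hε hε' z hz hFz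
  have h1 := hs (Metric.thickening_mono hε'.2.le _ hz)
  have h2 := Metric.thickening_mono hε.2.le _ hFz
  exact Set.disjoint_left.1 hd h2 h1

theorem nfree_bot (U : Set Plane) : NFree ⊥ U := by
  intro k hk hk0; exact absurd (AddSubgroup.mem_bot.1 hk) hk0

theorem mp_open {ι : Type*} [DecidableEq ι] (U : ι → Set Plane) (hUo : ∀ i, IsOpen (U i))
    (hUc : ∀ i, IsPreconnected (U i)) (hd : ∀ i j, i ≠ j → Disjoint (U i) (U j))
    (a b : ι → Plane) (ha : ∀ i, a i ∈ U i) (hb : ∀ i, b i ∈ U i) (s : Finset ι) :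
    ∃ g : Plane ≃ₜ Plane, IsoId g ∧ (∀ i ∈ s, g (a i) = b i) ∧ (∀ i, ∀ z ∈ U i, g z ∈ U i) ∧
      ∀ z, (∀ i, z ∉ U i) → g z = z := by
  induction s using Finset.induction_on with
  | empty => exact ⟨Homeomorph.refl _, IsoId.refl, by simp, fun _ _ h => h, fun _ _ => rfl⟩
  | insert i s his ih =>
    obtain ⟨g, g1, g2, g3, g4⟩ := ih
    obtain ⟨h, hh, hab⟩ := push_open ⊥ (nfree_bot (U i)) (hUo i) (hUc i) (g3 i _ (ha i)) (hb i)
    have hid : ∀ z, z ∉ U i → h z = z := by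
      intro z hz
      apply hh.supp
      intro k hk
      rw [AddSubgroup.mem_bot.1 hk, Tr_zero]; exact hz
    refine ⟨g.trans h, hh.iso.comp g1, ?_, ?_, ?_⟩
    · intro j hj
      rcases Finset.mem_insert.1 hj with rfl | hj
      · exact hab
      · have hne : i ≠ j := by rintro rfl; exact his hj
        simp only [Homeomorph.trans_apply]
        rw [g2 j hj, hid]
        exact fun hc => Set.disjoint_left.1 (hd i j hne) hc (hb j)
    · intro j z hz
      simp only [Homeomorph.trans_apply]
      by_cases hij : i = j
      · subst hij; exact hh.maps _ (g3 _ _ hz)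
      · rw [hid]
        · exact g3 _ _ hz
        · exact fun hc => Set.disjoint_left.1 (hd i j hij) hc (g3 _ _ hz)
    · intro z hz
      simp only [Homeomorph.trans_apply]
      rw [g4 z hz, hid z (hz i)]

theorem mp_compact {ι : Type*} [Fintype ι] (F : Plane ≃ₜ Plane) (hF : IsoId F)
    (hfpf : ∀ z, F z ≠ z) (K : ι → Set Plane) (hKc : ∀ i, IsCompact (K i))
    (hKp : ∀ i, IsPreconnected (K i)) (hd : ∀ i j, i ≠ j → Disjoint (K i) (K j))
    (hfree : ∀ i, ∀ z ∈ K i, F z ∉ K i)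
    (a b : ι → Plane) (ha : ∀ i, a i ∈ K i) (hb : ∀ i, b i ∈ K i) :
    ∃ H : Plane ≃ₜ Plane, IsoId H ∧ (∀ z, H z ≠ z) ∧ ∀ i x, F x = a i → H x = b i := by
  classical
  have e1 : ∀ᶠ δ in 𝓝[>] (0:ℝ), ∀ i, ∀ z ∈ Metric.thickening δ (K i),
      F z ∉ Metric.thickening δ (K i) :=
    eventually_all.2 fun i => thick_free (hKc i) F (hfree i)
  have e2 : ∀ᶠ δ in 𝓝[>] (0:ℝ), ∀ i j, i ≠ j →
      Disjoint (Metric.thickening δ (K i)) (Metric.thickening δ (K j)) := by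
    refine eventually_all.2 fun i => eventually_all.2 fun j => ?_
    by_cases hij : i = j
    · exact Eventually.of_forall fun _ h => absurd hij h
    · filter_upwards [thick_disj (hKc i) (hKc j) (hd i j hij)] with δ h _ using h
  obtain ⟨δ, ⟨f1, f2⟩, hδ⟩ := ((e1.and e2).and self_mem_nhdsWithin).exists
  have hδ : 0 < δ := hδ
  obtain ⟨g, g1, g2, g3, g4⟩ := mp_open (fun i => Metric.thickening δ (K i))
    (fun i => Metric.isOpen_thickening) (fun i => preconn_thickening (hKp i) δ hδ) f2 a b
    (fun i => Metric.self_subset_thickening hδ _ (ha i))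
    (fun i => Metric.self_subset_thickening hδ _ (hb i)) Finset.univ
  refine ⟨F.trans g, g1.comp hF, ?_, ?_⟩
  · intro z hz
    simp only [Homeomorph.trans_apply] at hz
    by_cases h : ∀ i, F z ∉ Metric.thickening δ (K i)
    · rw [g4 _ h] at hz; exact hfpf z hz
    · push Not at h
      obtain ⟨i, hi⟩ := h
      have := g3 i _ hi
      rw [hz] at this
      exact f1 i z this hi
  · intro i x hx
    simp only [Homeomorph.trans_apply]
    rw [hx, g2 i (Finset.mem_univ i)]

theorem exp_const {X : Type*} [TopologicalSpace X] [PreconnectedSpace X] (φ : X → ℂ)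
    (hφ : Continuous φ) (h : ∀ x y, Complex.exp (φ x) = Complex.exp (φ y)) (x y : X) :
    φ x = φ y := by
  refine Complex.isCoveringMap_exp.const_of_comp hφ ?_ x y
  intro a b
  exact Subtype.ext (h a b)

theorem log_lift {X : Type*} [NormedAddCommGroup X] [NormedSpace ℝ X] (g : X → ℂ)
    (hg : Continuous g) (h0 : ∀ x, g x ≠ 0) :
    ∃ Θ : X → ℂ, Continuous Θ ∧ ∀ x, Complex.exp (Θ x) = g x := by
  have hs : IsSimplyConnected (univ : Set X) := by
    have : ContractibleSpace (univ : Set X) := convex_univ.contractibleSpace univ_nonempty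
    exact (inferInstance : SimplyConnectedSpace (univ : Set X))
  obtain ⟨f, hf, hfg⟩ := Complex.exists_continuousOn_eqOn_exp_comp (U := (univ : Set X))
    hs isOpen_univ hg.continuousOn (by rintro ⟨x, _, hx⟩; exact h0 x hx)
  exact ⟨f, continuousOn_univ.1 hf, fun x => hfg (mem_univ x)⟩

def toC (p : Plane) : ℂ := ⟨p.1, p.2⟩
theorem toC_cont : Continuous toC := by
  have : toC = fun p : Plane => (p.1 : ℂ) + p.2 * Complex.I := by
    funext p; apply Complex.ext <;> simp [toC]
  rw [this]; fun_prop
theorem toC_neg (p : Plane) : toC (-p) = - toC p := by apply Complex.ext <;> simp [toC]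
theorem toC_ne {p : Plane} (h : p ≠ 0) : toC p ≠ 0 := by
  intro h0
  apply h
  have h1 := congrArg Complex.re h0
  have h2 := congrArg Complex.im h0
  simp [toC] at h1 h2
  exact Prod.ext h1 h2

theorem no_period_two (F : Plane ≃ₜ Plane) (hF : IsoId F) (hfpf : ∀ z, F z ≠ z) (z : Plane) :
    F (F z) ≠ z := by
  intro hz
  obtain ⟨H, h1, h2, h3, h4⟩ := hF
  set e : ℝ × Plane → ℂ := fun q => toC (H q.1 (F q.2) - H q.1 q.2) with he
  have hec : Continuous e := by
    apply toC_cont.comp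
    apply Continuous.sub
    · exact h1.comp (continuous_fst.prodMk (F.continuous.comp continuous_snd))
    · exact h1
  have he0 : ∀ q, e q ≠ 0 := by
    intro q
    apply toC_ne
    rw [sub_ne_zero]
    exact fun h => hfpf _ (h2 _ h)
  obtain ⟨Θ, hΘ, hexp⟩ := log_lift e hec he0
  have k1 : ∀ p q, Θ (1, p) - Θ (0, F p) = Θ (1, q) - Θ (0, F q) := by
    apply exp_const (fun p : Plane => Θ (1, p) - Θ (0, F p))
    · have := F.continuous
      fun_prop
    · have : ∀ x, Complex.exp (Θ (1, x) - Θ (0, F x)) = 1 := by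
        intro x
        rw [Complex.exp_sub, hexp, hexp]
        have : e (1, x) = e (0, F x) := by
          simp only [he, h3, h4]
        rw [this, div_self (he0 _)]
      intro x y; rw [this, this]
  have k2 : ∀ t, Complex.exp (Θ (t, F z) - Θ (t, z)) = -1 := by
    intro t
    rw [Complex.exp_sub, hexp, hexp]
    have : e (t, F z) = - e (t, z) := by
      simp only [he, hz]
      rw [← toC_neg, neg_sub]
    rw [this, neg_div, div_self (he0 _)]
  have k3 : Θ (1, F z) - Θ (1, z) = Θ (0, F z) - Θ (0, z) := by
    apply exp_const (fun t : ℝ => Θ (t, F z) - Θ (t, z))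
    · fun_prop
    · intro x y; rw [k2, k2]
  have k4 := k1 z (F z)
  rw [hz] at k4
  have k5 : Θ (0, F z) - Θ (0, z) = 0 := by
    linear_combination (-1/2 : ℂ) * k4 - (1/2 : ℂ) * k3
  have := k2 0
  rw [k5, Complex.exp_zero] at this
  norm_num at this

theorem seg_dist {y x w : Plane} {r : ℝ} (hr : 0 < r) (hy : dist y x = r)
    (hw : w ∈ segment ℝ y x) : w = y ∨ dist w x < r := by
  rw [segment_eq_image'] at hw
  obtain ⟨θ, ⟨h0, h1⟩, rfl⟩ := hw
  rcases h0.eq_or_lt with rfl | h0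
  · left; simp
  · right
    have : dist (y + θ • (x - y)) x = (1 - θ) * r := by
      rw [dist_eq_norm, ← hy, dist_eq_norm]
      have : y + θ • (x - y) - x = (1 - θ) • (y - x) := by
        simp only [smul_sub, sub_smul, one_smul]; abel
      rw [this, norm_smul, Real.norm_eq_abs, abs_of_nonneg (by linarith)]
    rw [this]; nlinarith

theorem seg_inter {y y' x z : Plane} {r : ℝ} (hr : 0 < r) (hy : dist y x = r)
    (hy' : dist y' x = r) (hne : y ≠ y')
    (h1 : z ∈ segment ℝ y x) (h2 : z ∈ segment ℝ x y') : z = x := by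
  rw [segment_eq_image'] at h2
  rw [segment_symm, segment_eq_image'] at h1
  obtain ⟨θ, ⟨a0, a1⟩, rfl⟩ := h1
  obtain ⟨θ', ⟨b0, b1⟩, h⟩ := h2
  have h : θ' • (y' - x) = θ • (y - x) := by simpa using h
  have hn := congrArg norm h
  rw [norm_smul, norm_smul, ← dist_eq_norm, ← dist_eq_norm, hy, hy', Real.norm_eq_abs,
    Real.norm_eq_abs, abs_of_nonneg a0, abs_of_nonneg b0] at hn
  have hθ : θ' = θ := mul_right_cancel₀ hr.ne' hn
  subst hθ
  rcases a0.eq_or_lt with h0 | h0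
  · simp [← h0]
  · have := smul_right_injective Plane h0.ne' h
    exact absurd (sub_left_injective this).symm hne

theorem seg_end {y x : Plane} {s : ℝ} (hs0 : 0 ≤ s) (hs : s < 1) (hne : y ≠ x) :
    x ∉ segment ℝ y (y + s • (x - y)) := by
  intro h
  rw [segment_eq_image'] at h
  obtain ⟨θ, ⟨h0, h1⟩, h⟩ := h
  simp only [add_sub_cancel_left, smul_smul] at h
  have h2 : (θ * s - 1) • (x - y) = 0 := by
    rw [sub_smul, one_smul, sub_eq_zero, eq_sub_iff_add_eq, add_comm]; exact h
  rcases smul_eq_zero.1 h2 with h3 | h3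
  · nlinarith
  · exact hne (sub_eq_zero.1 h3).symm

/-- critical ball -/
theorem critical_ball (h : Plane ≃ₜ Plane) (hfpf : ∀ z, h z ≠ z) (x : Plane) :
    ∃ r > 0, ∃ y, dist y x = r ∧ dist (h y) x = r ∧
      (∀ z, dist z x < r → r < dist (h z) x) ∧ (∀ z, dist (h z) x < r → r < dist z x) := by
  set φ : Plane → ℝ := fun z => max (dist z x) (dist (h z) x) with hφ
  have hφc : Continuous φ := by
    have := h.continuous
    fun_prop
  obtain ⟨y, hyK, hy⟩ := (isCompact_closedBall x (φ x)).exists_isMinOn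
    ⟨x, by simp [hφ]⟩ hφc.continuousOn
  have hmin : ∀ z, φ y ≤ φ z := by
    intro z
    by_cases hz : z ∈ Metric.closedBall x (φ x)
    · exact hy hz
    · have h1 : φ y ≤ φ x := hy (by simp [hφ])
      rw [Metric.mem_closedBall, not_le] at hz
      exact h1.trans (hz.le.trans (le_max_left _ _))
  set r := φ y with hr
  have hr0 : 0 < r := by
    by_contra hc
    have h1 : dist y x ≤ 0 := (le_max_left _ _).trans (not_lt.1 hc)
    have h2 : dist (h y) x ≤ 0 := (le_max_right _ _).trans (not_lt.1 hc)
    have e1 := dist_le_zero.1 h1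
    have e2 := dist_le_zero.1 h2
    exact hfpf y (e2.trans e1.symm)
  have hshrink : ∀ w : Plane, dist w x ≤ r → ∀ s ∈ Ioo (0:ℝ) 1, dist (w + s • (x - w)) x < r := by
    intro w hw s hs
    have : w + s • (x - w) - x = (1 - s) • (w - x) := by
      simp only [smul_sub, sub_smul, one_smul]; abel
    rw [dist_eq_norm, this, norm_smul, Real.norm_eq_abs, abs_of_nonneg (by linarith [hs.2]),
      ← dist_eq_norm]
    have := hs.1; have := hs.2
    nlinarith [dist_nonneg (x := w) (y := x)]
  have hlim : ∀ w : Plane, Tendsto (fun s : ℝ => w + s • (x - w)) (𝓝[>] 0) (𝓝 w) := by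
    intro w
    have : Continuous (fun s : ℝ => w + s • (x - w)) := by fun_prop
    have h2 := (this.tendsto 0).mono_left (nhdsWithin_le_nhds (s := Ioi 0))
    simpa using h2
  have hA : ∀ z, dist z x < r → r < dist (h z) x := by
    intro z hz
    by_contra hc
    have hc := not_lt.1 hc
    have h1 : Tendsto (fun s : ℝ => h.symm (h z + s • (x - h z))) (𝓝[>] 0) (𝓝 z) := by
      have := (h.symm.continuous.tendsto (h z)).comp (hlim (h z))
      simpa [Function.comp_def] using this
    have h2 : ∀ᶠ s in 𝓝[>] (0:ℝ), dist (h.symm (h z + s • (x - h z))) x < r :=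
      h1.eventually (Metric.isOpen_ball.mem_nhds hz : Metric.ball x r ∈ 𝓝 z)
    obtain ⟨s, hs1, hs2⟩ := (h2.and (Ioo_mem_nhdsGT one_pos)).exists
    have h3 := hshrink (h z) hc s hs2
    have h4 := hmin (h.symm (h z + s • (x - h z)))
    rcases le_max_iff.1 h4 with h5 | h5
    · linarith
    · rw [h.apply_symm_apply] at h5; linarith
  have hB : ∀ z, dist (h z) x < r → r < dist z x := by
    intro z hz
    by_contra hc
    have hc := not_lt.1 hc
    have h1 : Tendsto (fun s : ℝ => h (z + s • (x - z))) (𝓝[>] 0) (𝓝 (h z)) :=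
      (h.continuous.tendsto z).comp (hlim z)
    have h2 : ∀ᶠ s in 𝓝[>] (0:ℝ), dist (h (z + s • (x - z))) x < r :=
      h1.eventually (Metric.isOpen_ball.mem_nhds hz : Metric.ball x r ∈ 𝓝 (h z))
    obtain ⟨s, hs1, hs2⟩ := (h2.and (Ioo_mem_nhdsGT one_pos)).exists
    have h3 := hshrink z hc s hs2
    have h4 := hmin (z + s • (x - z))
    rcases le_max_iff.1 h4 with h5 | h5 <;> linarith
  refine ⟨r, hr0, y, ?_, ?_, hA, hB⟩
  · refine le_antisymm (le_max_left _ _) (not_lt.1 fun hc => ?_)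
    exact absurd (hA y hc) (not_lt.2 (le_max_right _ _))
  · refine le_antisymm (le_max_right _ _) (not_lt.1 fun hc => ?_)
    exact absurd (hB y hc) (not_lt.2 (le_max_left _ _))

theorem brouwer_step (h : Plane ≃ₜ Plane) (hI : IsoId h) (hfpf : ∀ z, h z ≠ z) (n : ℕ)
    (hn : 3 ≤ n) (x : Plane) (hper : h^[n] x = x)
    (IH : ∀ m, 1 ≤ m → m < n → ∀ H : Plane ≃ₜ Plane, IsoId H → (∀ z, H z ≠ z) →
      ∀ z, H^[m] z ≠ z) : False := by
  obtain ⟨r, hr, y, hy1, hy2, hA, hB⟩ := critical_ball h hfpf x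
  have hyne : y ≠ h y := fun e => hfpf y e.symm
  have hyx : y ≠ x := by rintro rfl; simp at hy1; linarith
  -- facts on the two radii
  have R1 : ∀ w ∈ segment ℝ y x, w = y ∨ dist w x < r := fun w hw => seg_dist hr hy1 hw
  have R2 : ∀ w ∈ segment ℝ x (h y), w = h y ∨ dist w x < r := fun w hw =>
    seg_dist hr hy2 (by rwa [segment_symm])
  have R1' : ∀ w ∈ segment ℝ y x, dist w x ≤ r := by
    intro w hw; rcases R1 w hw with rfl | h1
    · exact hy1.le
    · exact h1.le
  have R2' : ∀ w ∈ segment ℝ x (h y), dist w x ≤ r := by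
    intro w hw; rcases R2 w hw with rfl | h1
    · exact hy2.le
    · exact h1.le
  -- claim P
  have hP : ∀ w ∈ segment ℝ y x, h (h w) ∉ segment ℝ x (h y) := by
    intro w hw hv
    have hwB : dist w x < r := by
      rcases R1 w hw with rfl | h1
      · exfalso
        rcases R2 _ hv with h2 | h2
        · exact hfpf _ h2
        · exact absurd (hB _ h2) (not_lt.2 hy2.le)
      · exact h1
    have hvB : dist (h (h w)) x < r := by
      rcases R2 _ hv with h2 | h2
      · have := h.injective h2
        exact absurd (hA w hwB) (not_lt.2 (by rw [this]; exact hy1.le))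
      · exact h2
    have hwB' : r < dist (h w) x := hA w hwB
    have hsub : segment ℝ (h (h w)) w ⊆ Metric.ball x r :=
      (convex_ball x r).segment_subset hvB hwB
    obtain ⟨H, H1, H2, H3⟩ := mp_compact (ι := Bool) h hI hfpf
      (fun i => if i then segment ℝ (h (h w)) w else {h w})
      (by
        intro i; cases i
        · simp
        · simp only [if_true]
          rw [segment_eq_image']
          exact isCompact_Icc.image (by fun_prop))
      (by
        intro i; cases i
        · simpa using isPreconnected_singleton
        · simpa using (convex_segment _ _).isPreconnected)
      (by
        have : Disjoint (segment ℝ (h (h w)) w) {h w} := by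
          rw [Set.disjoint_singleton_right]
          intro hc
          have := hsub hc
          rw [Metric.mem_ball] at this
          linarith
        intro i j hij
        cases i <;> cases j
        · exact absurd rfl hij
        · simpa using this.symm
        · simpa using this
        · exact absurd rfl hij)
      (by
        intro i; cases i
        · intro z hz; simp only [Bool.false_eq_true, if_false, mem_singleton_iff] at hz ⊢
          subst hz; exact hfpf _
        · simp only [if_true]
          intro z hz hz'
          have := hA z (hsub hz)
          have h3 := hsub hz'
          rw [Metric.mem_ball] at h3
          linarith)
      (fun i => if i then h (h w) else h w) (fun i => if i then w else h w)
      (by intro i; cases i <;> simp [left_mem_segment])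
      (by intro i; cases i <;> simp [right_mem_segment])
    have e1 : H w = h w := by simpa using H3 false w (by simp)
    have e2 : H (h w) = w := by simpa using H3 true (h w) (by simp)
    exact no_period_two H H1 H2 w (by rw [e1, e2])
  -- orbit
  set X : ℕ → Plane := fun j => h^[j] x with hX
  have hXs : ∀ j, h (X j) = X (j + 1) := by
    intro j; simp only [hX, Function.iterate_succ_apply']
  have hX0 : X 0 = x := rfl
  have hX1 : X 1 = h x := rfl
  have hX2 : X 2 = h (h x) := rfl
  have hXd : ∀ i j, i < j → j < n + i → j - i < n → X i ≠ X j := by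
    intro i j hij _ hlt he
    have : X j = h^[j - i] (X i) := by
      simp only [hX, ← Function.iterate_add_apply]; congr 2; omega
    rw [this] at he
    exact IH (j - i) (by omega) hlt h hI hfpf _ he.symm
  have hxX : dist x x < r := by simpa using hr
  have hX2' : ∀ w ∈ segment ℝ y x, X 2 ≠ h w := by
    intro w hw he
    rw [hX2] at he
    have e := h.injective he
    have := hA x hxX
    rw [e] at this
    linarith [R1' w hw]
  have hX2'' : X 2 ∉ segment ℝ x (h y) := hP x (right_mem_segment _ _ _)
  have segcomp : ∀ a b : Plane, IsCompact (segment ℝ a b) := by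
    intro a b
    rw [segment_eq_image']
    exact isCompact_Icc.image (by fun_prop)
  -- small ball around X 2
  have hcl : IsClosed (segment ℝ x (h y) ∪ h '' segment ℝ y x ∪ X '' (Ico 3 n)) := by
    refine IsClosed.union (IsClosed.union (segcomp _ _).isClosed ?_) ?_
    · exact ((segcomp _ _).image h.continuous).isClosed
    · exact ((finite_Ico 3 n).image X).isClosed
  have hX2n : X 2 ∉ segment ℝ x (h y) ∪ h '' segment ℝ y x ∪ X '' (Ico 3 n) := by
    rintro ((h1 | ⟨w, hw, h1⟩) | ⟨j, hj, h1⟩)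
    · exact hX2'' h1
    · exact hX2' w hw h1.symm
    · have := hj.1; have := hj.2
      exact hXd 2 j (by omega) (by omega) (by omega) h1.symm
  obtain ⟨ε1, hε1, hball1⟩ := Metric.isOpen_iff.1 hcl.isOpen_compl _ hX2n
  have hfr := thick_free (isCompact_singleton (x := X 2)) h (by
    intro z hz; rw [mem_singleton_iff] at hz ⊢; subst hz; exact hfpf _)
  obtain ⟨ε, hε2, hε3⟩ := (hfr.and (Ioo_mem_nhdsGT hε1)).exists
  rw [Metric.thickening_singleton] at hε2
  -- choose x'
  have hlim : Tendsto (fun s : ℝ => h (h (y + s • (x - y)))) (𝓝[<] 1) (𝓝 (X 2)) := by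
    have : Continuous (fun s : ℝ => h (h (y + s • (x - y)))) := by
      have := h.continuous
      fun_prop
    have h2 := (this.tendsto 1).mono_left (nhdsWithin_le_nhds (s := Iio 1))
    simpa [hX2] using h2
  obtain ⟨s, hs1, hs2⟩ := ((hlim.eventually (Metric.ball_mem_nhds (X 2) hε3.1)).and
    (Ioo_mem_nhdsLT (zero_lt_one (α := ℝ)))).exists
  set x' := y + s • (x - y) with hx'
  have hx'seg : x' ∈ segment ℝ y x := by
    rw [segment_eq_image']; exact ⟨s, ⟨hs2.1.le, hs2.2.le⟩, rfl⟩
  have hsubseg : segment ℝ y x' ⊆ segment ℝ y x :=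
    (convex_segment y x).segment_subset (left_mem_segment _ _ _) hx'seg
  have hxnot : x ∉ segment ℝ y x' := seg_end hs2.1.le hs2.2 hyx
  set c := segment ℝ x (h y) ∪ h '' segment ℝ y x' with hc
  have hcc : IsCompact c := (segcomp _ _).union ((segcomp _ _).image h.continuous)
  have hcp : IsPreconnected c := by
    refine IsPreconnected.union (h y) (right_mem_segment _ _ _) ⟨y, left_mem_segment _ _ _, rfl⟩
      (convex_segment _ _).isPreconnected ?_
    exact (convex_segment _ _).isPreconnected.image _ h.continuous.continuousOn
  have hcfree : ∀ z ∈ c, h z ∉ c := by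
    rintro z (hz | ⟨w, hw, rfl⟩) (hz' | ⟨w', hw', hz'⟩)
    · rcases R2 z hz with rfl | h1
      · rcases R2 _ hz' with h2 | h2
        · exact hfpf _ h2
        · linarith [hB _ h2, R2' _ hz]
      · linarith [hA _ h1, R2' _ hz']
    · have e := h.injective hz'
      subst e
      have := seg_inter hr hy1 hy2 hyne (hsubseg hw') hz
      exact hxnot (this ▸ hw')
    · exact hP w (hsubseg hw) hz'
    · have e := h.injective hz'
      rcases R1 w (hsubseg hw) with rfl | h1
      · rcases R1 w' (hsubseg hw') with h2 | h2
        · exact hfpf _ (e ▸ h2)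
        · rw [e] at h2; linarith
      · have := hA w h1
        rw [← e] at this
        linarith [R1' _ (hsubseg hw')]
  -- smallest i
  have hex : ∃ i, 3 ≤ i ∧ X i ∈ c := ⟨n, hn, by
    have : X n = x := hper
    rw [this]; exact Or.inl (left_mem_segment _ _ _)⟩
  classical
  set i := Nat.find hex with hi
  obtain ⟨hi3, hic⟩ := Nat.find_spec hex
  have hin : i ≤ n := Nat.find_min' hex ⟨hn, by
    have : X n = x := hper
    rw [this]; exact Or.inl (left_mem_segment _ _ _)⟩
  have himin : ∀ j, 3 ≤ j → j < i → X j ∉ c := fun j h3 hj hcj =>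
    Nat.find_min hex hj ⟨h3, hcj⟩
  set K2 := segment ℝ (h (h x')) (X 2) with hK2
  have hK2b : K2 ⊆ Metric.ball (X 2) ε :=
    (convex_ball _ _).segment_subset hs1 (Metric.mem_ball_self hε3.1)
  have hK2n : ∀ z ∈ K2, z ∉ segment ℝ x (h y) ∪ h '' segment ℝ y x ∪ X '' (Ico 3 n) :=
    fun z hz => hball1 (Metric.ball_subset_ball hε3.2.le (hK2b hz))
  have hcK2 : Disjoint c K2 := by
    rw [Set.disjoint_left]
    rintro z hz hz2
    apply hK2n z hz2
    left
    rcases hz with hz | hz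
    · exact Or.inl hz
    · exact Or.inr (image_mono hsubseg hz)
  have hK2X : ∀ j : Fin (i - 3), Disjoint K2 {X (3 + j)} := by
    intro j
    rw [Set.disjoint_singleton_right]
    intro hz
    exact hK2n _ hz (Or.inr ⟨3 + j, ⟨by omega, by omega⟩, rfl⟩)
  have hcX : ∀ j : Fin (i - 3), Disjoint c {X (3 + j)} := by
    intro j
    rw [Set.disjoint_singleton_right]
    exact himin _ (by omega) (by omega)
  obtain ⟨H, H1, H2, H3⟩ := mp_compact (ι := Option (Option (Fin (i - 3)))) h hI hfpf
    (fun k => match k with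
      | none => c
      | some none => K2
      | some (some j) => {X (3 + j)})
    (by
      rintro (_ | _ | j)
      · exact hcc
      · exact segcomp _ _
      · exact isCompact_singleton)
    (by
      rintro (_ | _ | j)
      · exact hcp
      · exact (convex_segment _ _).isPreconnected
      · exact isPreconnected_singleton)
    (by
      rintro (_ | _ | j) (_ | _ | k) hne
      · exact absurd rfl hne
      · exact hcK2
      · exact hcX k
      · exact hcK2.symm
      · exact absurd rfl hne
      · exact hK2X k
      · exact (hcX j).symm
      · exact (hK2X j).symm
      · change Disjoint {X (3 + j)} {X (3 + k)}
        rw [Set.disjoint_singleton]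
        have hjk : (j : ℕ) ≠ k := by
          intro e; apply hne; rw [Fin.ext e]
        rcases lt_or_gt_of_ne hjk with hl | hl
        · exact hXd _ _ (by omega) (by omega) (by omega)
        · exact (hXd _ _ (by omega) (by omega) (by omega)).symm)
    (by
      rintro (_ | _ | j)
      · exact hcfree
      · intro z hz hz2
        exact hε2 z (hK2b hz) (hK2b hz2)
      · rintro z hz hz2
        have e1 : z = X (3 + j) := hz
        have e2 : h z = X (3 + j) := hz2
        exact hfpf z (e2.trans e1.symm))
    (fun k => match k with
      | none => X i
      | some none => h (h x')
      | some (some j) => X (3 + j))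
    (fun k => match k with
      | none => h x'
      | some none => X 2
      | some (some j) => X (3 + j))
    (by
      rintro (_ | _ | j)
      · exact hic
      · exact left_mem_segment _ _ _
      · exact rfl)
    (by
      rintro (_ | _ | j)
      · exact Or.inr ⟨x', right_mem_segment _ _ _, rfl⟩
      · exact right_mem_segment _ _ _
      · exact rfl)
  have s1 : H (h x') = X 2 := H3 (some none) _ rfl
  have s2 : H (X (i - 1)) = h x' := H3 none _ (by
    rw [hXs]; change X (i - 1 + 1) = X i; congr 1; omega)
  have s3 : ∀ j, j < i - 3 → H (X (2 + j)) = X (3 + j) := fun j hj =>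
    H3 (some (some ⟨j, hj⟩)) _ (by rw [hXs]; change X (2 + j + 1) = X (3 + j); congr 1; omega)
  have s4 : ∀ k, k ≤ i - 3 → H^[k] (X 2) = X (2 + k) := by
    intro k
    induction k with
    | zero => intro _; rfl
    | succ k ih =>
      intro hk
      rw [Function.iterate_succ_apply', ih (by omega), s3 k (by omega)]
      congr 1; omega
  have s5 : H^[i - 1] (X 2) = X 2 := by
    have : i - 1 = (i - 3) + 1 + 1 := by omega
    rw [this, Function.iterate_succ_apply', Function.iterate_succ_apply', s4 _ le_rfl]
    have : 2 + (i - 3) = i - 1 := by omega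
    rw [this, s2, s1]
  exact IH (i - 1) (by omega) (by omega) H H1 H2 _ s5

theorem brouwer (n : ℕ) : 1 ≤ n → ∀ H : Plane ≃ₜ Plane, IsoId H → (∀ z, H z ≠ z) →
      ∀ z, H^[n] z ≠ z := by
  induction n using Nat.strong_induction_on with
  | _ n ih =>
    intro hn H hI hf z hz
    rcases Nat.lt_or_ge n 3 with h3 | h3
    · interval_cases n
      · exact hf z hz
      · exact no_period_two H hI hf z hz
    · exact brouwer_step H hI hf n h3 z hz (fun m h1 h2 => ih m h2 h1)

structure CellSys (F : Plane → Plane) (C : Set (Set Plane)) : Prop where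
  conv : ∀ b ∈ C, Convex ℝ b
  closed : ∀ b ∈ C, IsClosed b
  int : ∀ b ∈ C, (interior b).Nonempty
  disj : ∀ b ∈ C, ∀ b' ∈ C, b ≠ b' → Disjoint (interior b) (interior b')
  free : ∀ b ∈ C, ∀ z ∈ interior b, F z ∉ interior b
  bdry : ∀ b ∈ C, ∀ b' ∈ C, b ≠ b' → ∀ z, z ∈ b → z ∈ b' → F z ∈ b → F z ∉ b'

/-- the arrow relation between cells -/
def Arr (F : Plane → Plane) (C : Set (Set Plane)) (b b' : Set Plane) : Prop :=
  b ∈ C ∧ b' ∈ C ∧ b ≠ b' ∧ ∃ z ∈ b, F z ∈ b'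

theorem CellSys.sub {F C} (h : CellSys F C) {b} (hb : b ∈ C) : b ⊆ closure (interior b) := by
  rw [(h.conv b hb).closure_interior_eq_closure_of_nonempty_interior (h.int b hb)]
  exact subset_closure

theorem CellSys.disj' {F C} (h : CellSys F C) {b b'} (hb : b ∈ C) (hb' : b' ∈ C) (hne : b ≠ b')
    {z} (hz : z ∈ interior b) : z ∉ b' := by
  intro hz'
  obtain ⟨w, hw1, hw2⟩ := mem_closure_iff.1 (h.sub hb' hz') _ isOpen_interior hz
  exact Set.disjoint_left.1 (h.disj b hb b' hb' hne) hw1 hw2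

theorem CellSys.free1 {F : Plane ≃ₜ Plane} {C} (h : CellSys F C) {b} (hb : b ∈ C)
    {z} (hz : z ∈ interior b) : F z ∉ b := by
  intro hz'
  have ho : IsOpen (F.symm ⁻¹' interior b) := isOpen_interior.preimage F.symm.continuous
  obtain ⟨w, hw1, hw2⟩ := mem_closure_iff.1 (h.sub hb hz') _ ho (by simpa using hz)
  apply h.free b hb (F.symm w) hw1
  simpa using hw2

theorem CellSys.free2 {F : Plane ≃ₜ Plane} {C} (h : CellSys F C) {b} (hb : b ∈ C)
    {z} (hz : F z ∈ interior b) : z ∉ b := by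
  intro hz'
  have ho : IsOpen (F ⁻¹' interior b) := isOpen_interior.preimage F.continuous
  obtain ⟨w, hw1, hw2⟩ := mem_closure_iff.1 (h.sub hb hz') _ ho hz
  exact h.free b hb w hw2 hw1

/-- periodic cycles -/
def IsCyc (R : Set Plane → Set Plane → Prop) (n : ℕ) (b : ℕ → Set Plane) : Prop :=
  1 ≤ n ∧ (∀ i, R (b i) (b (i + 1))) ∧ ∀ i, b (i + n) = b i

theorem mkCyc (R : Set Plane → Set Plane → Prop) (b : ℕ → Set Plane) (i L : ℕ) (hL : 1 ≤ L)
    (h1 : ∀ m, m + 1 < L → R (b (i + m)) (b (i + m + 1)))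
    (h2 : R (b (i + (L - 1))) (b i)) : ∃ c, IsCyc R L c := by
  refine ⟨fun m => b (i + m % L), hL, ?_, ?_⟩
  · intro m
    have hm : m % L < L := Nat.mod_lt _ hL
    by_cases h : m % L + 1 < L
    · have : (m + 1) % L = m % L + 1 := by
        rw [Nat.add_mod, Nat.mod_eq_of_lt (show 1 < L by omega), Nat.mod_eq_of_lt h]
      simp only [this]
      exact h1 _ h
    · have e : m % L = L - 1 := by omega
      have : (m + 1) % L = 0 := by
        have h3 := Nat.div_add_mod m L
        have : m + 1 = L * (m / L + 1) := by rw [mul_add]; omega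
        rw [this]; simp
      simp only [this, e, add_zero]
      exact h2
  · intro m; simp

theorem cyc_of_transGen (R : Set Plane → Set Plane → Prop) {b : Set Plane}
    (h : Relation.TransGen R b b) : ∃ n c, IsCyc R n c := by
  have key : ∀ b b', Relation.TransGen R b b' → ∃ n, ∃ c : ℕ → Set Plane, 1 ≤ n ∧
      c 0 = b ∧ c n = b' ∧ ∀ m < n, R (c m) (c (m + 1)) := by
    intro b b' h
    induction h with
    | single h => exact ⟨1, fun m => if m = 0 then b else _, le_rfl, by simp, by simp; rfl, by
        intro m hm; interval_cases m; simpa using h⟩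
    | @tail x y _ h ih =>
      obtain ⟨n, c, hn, c0, cn, hc⟩ := ih
      refine ⟨n + 1, fun m => if m ≤ n then c m else y, by omega, by simp [c0], by simp, ?_⟩
      intro m hm
      by_cases hmn : m = n
      · subst hmn; simp [cn, h]
      · have : m < n := by omega
        simp [this.le, Nat.succ_le_of_lt this]; exact hc m this
  obtain ⟨n, c, hn, c0, cn, hc⟩ := key b b h
  obtain ⟨c', hc'⟩ := mkCyc R c 0 n hn (by intro m hm; simpa using hc m (by omega)) (by
    have := hc (n - 1) (by omega)
    rw [Nat.sub_add_cancel hn, cn, ← c0] at this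
    simpa using this)
  exact ⟨n, c', hc'⟩

theorem acyclic (F : Plane ≃ₜ Plane) (hI : IsoId F) (hfpf : ∀ z, F z ≠ z)
    {C : Set (Set Plane)} (hC : CellSys F C) (b0 : Set Plane) :
    ¬ Relation.TransGen (Arr F C) b0 b0 := by
  intro h
  classical
  set R := Arr F C with hR
  have hex := cyc_of_transGen R h
  set n := Nat.find hex with hn
  obtain ⟨b, hn1, hstep, hper⟩ := Nat.find_spec hex
  rw [← hn] at hn1 hper
  have hmin : ∀ m, m < n → ∀ c, ¬ IsCyc R m c := fun m hm c hc => Nat.find_min hex hm ⟨c, hc⟩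
  have hbC : ∀ i, b i ∈ C := fun i => (hstep i).1
  have hn2 : 2 ≤ n := by
    by_contra hlt
    have : n = 1 := by omega
    have := hper 0
    rw [‹n = 1›] at this
    exact (hstep 0).2.2.1 this.symm
  have hdist : ∀ i j, i < j → j < i + n → b i ≠ b j := by
    intro i j hij hj he
    obtain ⟨c, hc⟩ := mkCyc R b i (j - i) (by omega) (fun m _ => hstep _) (by
      have := hstep (i + (j - i - 1))
      rw [show i + (j - i - 1) + 1 = j by omega, ← he] at this
      exact this)
    exact hmin _ (by omega) c hc
  -- reduce mod n
  have hpermul : ∀ k i, b (i + k * n) = b i := by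
    intro k; induction k with
    | zero => intro i; simp
    | succ k ih => intro i; rw [show i + (k + 1) * n = (i + k * n) + n by ring, hper, ih]
  have hmeet : ∀ i j, i < j → j < i + n → ∀ z ∈ b i, F z ∈ b j → j = i + 1 := by
    intro i j hij hj z hz hFz
    by_contra hne
    obtain ⟨c, hc⟩ := mkCyc R b j (i + n - j + 1) (by omega) (fun m _ => hstep _) (by
      rw [show j + (i + n - j + 1 - 1) = i + n by omega, hper]
      exact ⟨hbC _, hbC _, hdist i j hij hj, z, hz, hFz⟩)
    exact hmin _ (by omega) c hc
  -- choose points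
  have hz : ∀ i, ∃ z, z ∈ b i ∧ F z ∈ b (i + 1) := fun i => by
    obtain ⟨_, _, _, z, h1, h2⟩ := hstep i; exact ⟨z, h1, h2⟩
  choose z0 hz1 hz2 using hz
  set z : ℕ → Plane := fun i => z0 (i % n) with hzdef
  have hbmod : ∀ i, b (i % n) = b i := by
    intro i
    conv_rhs => rw [← Nat.mod_add_div i n, mul_comm n]
    rw [hpermul]
  have hbmod1 : ∀ i, b (i % n + 1) = b (i + 1) := by
    intro i
    conv_rhs => rw [← Nat.mod_add_div i n, mul_comm n, add_right_comm]
    rw [hpermul]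
  have hzb : ∀ i, z i ∈ b i := fun i => by rw [← hbmod]; exact hz1 _
  have hzb' : ∀ i, F (z i) ∈ b (i + 1) := fun i => by rw [← hbmod1]; exact hz2 _
  have hzper : ∀ i, z (i + n) = z i := by intro i; simp [hzdef]
  -- distinct z
  have hzd : ∀ i j, i < j → j < i + n → z i ≠ z j := by
    intro i j hij hj he
    have hFj : F (z i) ∈ b (j + 1) := he ▸ hzb' j
    by_cases h2 : j + 1 = i + n
    · -- b (j+1) = b i ; then i+1 → compare
      have hjn : b (j + 1) = b i := by rw [h2, hper]
      -- F (z j) ∈ b (i+1), z j ∈ b j ; i + 1 + n vs j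
      have hFi : F (z j) ∈ b (i + 1 + n) := by rw [hper, ← he]; exact hzb' i
      by_cases h3 : j = i + 1
      · -- n = 2
        have m1 : z i ∈ b j := he ▸ hzb j
        have m2 : F (z i) ∈ b j := by rw [h3]; exact hzb' i
        have m3 : F (z i) ∈ b i := by rw [← hjn]; exact hFj
        exact hC.bdry _ (hbC i) _ (hbC j) (hdist i j hij hj) (z i) (hzb i) m1 m3 m2
      · have := hmeet j (i + 1 + n) (by omega) (by omega) (z j) (hzb j) hFi
        omega
    · have := hmeet i (j + 1) (by omega) (by omega) (z i) (hzb i) hFj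
      omega
  -- indices in Fin n: cell b (k+1), points w k = F (z k), z (k+1)
  have hzd' : ∀ j k : Fin n, j ≠ k → z j ≠ z k := by
    intro j k hjk
    have hv : (j : ℕ) ≠ k := fun e => hjk (Fin.ext e)
    rcases lt_or_gt_of_ne hv with hl | hl
    · exact hzd _ _ hl (by omega)
    · exact (hzd _ _ hl (by omega)).symm
  have hzd1 : ∀ j k : Fin n, j ≠ k → z (j + 1) ≠ z (k + 1) := by
    intro j k hjk
    have hv : (j : ℕ) ≠ k := fun e => hjk (Fin.ext e)
    rcases lt_or_gt_of_ne hv with hl | hl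
    · exact hzd _ _ (by omega) (by omega)
    · exact (hzd _ _ (by omega) (by omega)).symm
  have hbd1 : ∀ j k : Fin n, j ≠ k → b (j + 1) ≠ b (k + 1) := by
    intro j k hjk
    have hv : (j : ℕ) ≠ k := fun e => hjk (Fin.ext e)
    rcases lt_or_gt_of_ne hv with hl | hl
    · exact hdist _ _ (by omega) (by omega)
    · exact (hdist _ _ (by omega) (by omega)).symm
  have hwz : ∀ j k : Fin n, j ≠ k → F (z j) ≠ z (k + 1) := by
    intro j k hjk he
    have hv : (j : ℕ) ≠ k := fun e => hjk (Fin.ext e)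
    have m1 : F (z j) ∈ b (k + 1) := he ▸ hzb (k + 1)
    by_cases h1 : (k : ℕ) + 1 = j
    · rw [h1] at he; exact hfpf _ he
    by_cases h2 : (k : ℕ) + 1 = j + n
    · rw [h2, hzper] at he; exact hfpf _ he
    rcases lt_or_gt_of_ne hv with hl | hl
    · have := hmeet j (k + 1) (by omega) (by omega) _ (hzb j) m1
      omega
    · have := hmeet j (k + 1 + n) (by omega) (by omega) _ (hzb j) (by rw [hper]; exact m1)
      omega
  choose m hm using fun i => hC.int (b i) (hbC i)
  set P : Fin n → Set Plane := fun k =>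
    segment ℝ (F (z k)) (m (k + 1)) ∪ segment ℝ (m (k + 1)) (z (k + 1)) with hP
  have hPint : ∀ k : Fin n, ∀ x ∈ P k, x ∈ interior (b (k + 1)) ∨ x = F (z k) ∨ x = z (k + 1) := by
    intro k x hx
    have hcv := hC.conv _ (hbC (k + 1))
    rcases hx with hx | hx
    · rw [← insert_endpoints_openSegment] at hx
      rcases hx with rfl | rfl | hx
      · simp
      · left; exact hm _
      · left
        rw [openSegment_symm] at hx
        exact hcv.openSegment_interior_self_subset_interior (hm _) (hzb' _) hx
    · rw [← insert_endpoints_openSegment] at hx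
      rcases hx with rfl | rfl | hx
      · left; exact hm _
      · simp
      · left
        exact hcv.openSegment_interior_self_subset_interior (hm _) (hzb _) hx
  have hPb : ∀ k : Fin n, ∀ x, (x ∈ interior (b (k + 1)) ∨ x = F (z k) ∨ x = z (k + 1)) →
      x ∈ b (k + 1) := by
    rintro k x (h1 | rfl | rfl)
    · exact interior_subset h1
    · exact hzb' _
    · exact hzb _
  set nat : Fin n → Prop := fun k => F (F (z k)) = z (k + 1) with hnat
  set Q : Fin n → Set Plane := fun k => if nat k then {F (z k)} else P k with hQ
  have hQint : ∀ k : Fin n, ∀ x ∈ Q k, x ∈ interior (b (k + 1)) ∨ x = F (z k) ∨ x = z (k + 1) := by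
    intro k x hx
    by_cases hk : nat k
    · simp only [hQ, hk, if_true, mem_singleton_iff] at hx; right; left; exact hx
    · simp only [hQ, hk, if_false] at hx; exact hPint k x hx
  have hdj : ∀ j k : Fin n, j ≠ k → ∀ x,
     (x ∈ interior (b (j + 1)) ∨ x = F (z j) ∨ x = z (j + 1)) →
     (x ∈ interior (b (k + 1)) ∨ x = F (z k) ∨ x = z (k + 1)) → False := by
    intro j k hjk x hj hk
    have hjb := hPb j x hj
    have hkb := hPb k x hk
    rcases hj with hj | hj
    · exact hC.disj' (hbC _) (hbC _) (hbd1 j k hjk) hj hkb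
    rcases hk with hk | hk
    · exact hC.disj' (hbC _) (hbC _) (hbd1 j k hjk).symm hk hjb
    rcases hj with hj | hj <;> rcases hk with hk | hk
    · exact hzd' j k hjk (F.injective (hj.symm.trans hk))
    · exact hwz j k hjk (hj.symm.trans hk)
    · exact hwz k j hjk.symm (hk.symm.trans hj)
    · exact hzd1 j k hjk (hj.symm.trans hk)
  have segcomp : ∀ a b : Plane, IsCompact (segment ℝ a b) := by
    intro a b
    rw [segment_eq_image']
    exact isCompact_Icc.image (by fun_prop)
  obtain ⟨H, H1, H2, H3⟩ := mp_compact (ι := Fin n ⊕ {k : Fin n // nat k}) F hI hfpf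
    (fun i => Sum.elim Q (fun k => {z (k.1 + 1)}) i)
    (by
      rintro (k | k)
      · simp only [Sum.elim_inl, hQ]
        split_ifs
        · exact isCompact_singleton
        · exact (segcomp _ _).union (segcomp _ _)
      · exact isCompact_singleton)
    (by
      rintro (k | k)
      · simp only [Sum.elim_inl, hQ]
        split_ifs
        · exact isPreconnected_singleton
        · exact IsPreconnected.union _ (right_mem_segment _ _ _) (left_mem_segment _ _ _)
            (convex_segment _ _).isPreconnected (convex_segment _ _).isPreconnected
      · exact isPreconnected_singleton)
    (by
      have aux : ∀ j : Fin n, ∀ k : {k : Fin n // nat k}, Disjoint (Q j) {z (k.1 + 1)} := by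
        intro j k
        rw [Set.disjoint_left]
        intro x hx hx'
        rw [mem_singleton_iff] at hx'
        by_cases hjk : j = k.1
        · have hnk : nat j := hjk ▸ k.2
          simp only [hQ, hnk, if_true, mem_singleton_iff] at hx
          have e := k.2
          rw [← hjk] at hx' e
          have e' : F (F (z j)) = z (j + 1) := e
          rw [← hx', hx] at e'
          exact hfpf _ e'
        · exact hdj j k.1 hjk x (hQint j x hx) (Or.inr (Or.inr hx'))
      rintro (j | j) (k | k) hne
      · rw [Set.disjoint_left]
        intro x hx hx'
        exact hdj j k (fun e => hne (by rw [e])) x (hQint j x hx) (hQint k x hx')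
      · exact aux j k
      · exact (aux k j).symm
      · simp only [Sum.elim_inr]
        rw [Set.disjoint_singleton]
        exact hzd1 _ _ (fun e => hne (by rw [Subtype.ext e])))
    (by
      rintro (k | k)
      · simp only [Sum.elim_inl]
        intro x hx hx'
        have i1 := hQint k x hx
        have i2 := hQint k _ hx'
        have b1 := hPb k x i1
        have b2 := hPb k _ i2
        rcases i1 with i1 | i1
        · exact hC.free1 (hbC _) i1 b2
        rcases i2 with i2 | i2
        · exact hC.free2 (hbC _) i2 b1
        by_cases hk : nat k
        · simp only [hQ, hk, if_true, mem_singleton_iff] at hx hx'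
          exact hfpf x (hx'.trans hx.symm)
        · rcases i1 with i1 | i1 <;> rcases i2 with i2 | i2
          · exact hfpf _ (i2.trans i1.symm)
          · apply hk; rw [i1] at i2; exact i2
          · have := F.injective i2
            rw [i1] at this
            exact hzd k (k + 1) (by omega) (by omega) this.symm
          · exact hfpf _ (i2.trans i1.symm)
      · intro x hx hx'
        simp only [Sum.elim_inr, mem_singleton_iff] at hx hx'
        exact hfpf x (hx'.trans hx.symm))
    (fun i => Sum.elim (fun k : Fin n => F (z k)) (fun k : {k : Fin n // nat k} => z (k.1 + 1)) i)
    (fun i => Sum.elim (fun k : Fin n => if nat k then F (z k) else z (k + 1))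
      (fun k : {k : Fin n // nat k} => z (k.1 + 1)) i)
    (by
      rintro (k | k)
      · simp only [Sum.elim_inl, hQ]
        split_ifs
        · rfl
        · exact Or.inl (left_mem_segment _ _ _)
      · rfl)
    (by
      rintro (k | k)
      · simp only [Sum.elim_inl, hQ]
        split_ifs
        · rfl
        · exact Or.inr (right_mem_segment _ _ _)
      · rfl)
  have step : ∀ k, k < n → ∃ m, 1 ≤ m ∧ H^[m] (z k) = z (k + 1) := by
    intro k hk
    have e1 := H3 (Sum.inl ⟨k, hk⟩) (z k) rfl
    simp only [Sum.elim_inl] at e1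
    by_cases hnk : nat ⟨k, hk⟩
    · rw [if_pos hnk] at e1
      have e2 := H3 (Sum.inr ⟨⟨k, hk⟩, hnk⟩) (F (z k)) hnk
      simp only [Sum.elim_inr] at e2
      exact ⟨2, by omega, by
        change H (H (z k)) = _
        rw [e1, e2]⟩
    · rw [if_neg hnk] at e1
      exact ⟨1, le_rfl, e1⟩
  have iter : ∀ k, k ≤ n → ∃ m, k ≤ m ∧ H^[m] (z 0) = z k := by
    intro k
    induction k with
    | zero => intro _; exact ⟨0, le_rfl, rfl⟩
    | succ k ih =>
      intro hk
      obtain ⟨m, hm, e⟩ := ih (by omega)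
      obtain ⟨m', hm', e'⟩ := step k (by omega)
      exact ⟨m' + m, by omega, by rw [Function.iterate_add_apply, e, e']⟩
  obtain ⟨M, hM, e⟩ := iter n le_rfl
  have : z n = z 0 := by simpa using hzper 0
  rw [this] at e
  exact brouwer M (by omega) H H1 H2 _ e

/-- partitions of the line in half open intervals -/
structure IvPart (lo hi : ℝ → ℝ) : Prop where
  le : ∀ x, lo x ≤ x
  lt : ∀ x, x < hi x
  eq : ∀ x x', lo x ≤ x' → x' < hi x → lo x' = lo x ∧ hi x' = hi x
  fin : ∀ K : ℝ, {q : ℝ × ℝ | ∃ x, |x| ≤ K ∧ q = (lo x, hi x)}.Finite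
  wid : ∀ x, hi x ≤ lo x + 1

def plo (l M u : ℝ) : ℝ := if u < l then 0 else l + ⌊(u - l) * M⌋ / M
def phi (l M u : ℝ) : ℝ := if u < l then l else min 1 (l + (⌊(u - l) * M⌋ + 1) / M)

theorem plo_le {l M u : ℝ} (hM : 0 < M) (hu : 0 ≤ u) : plo l M u ≤ u := by
  unfold plo
  split_ifs with h
  · exact hu
  · have : (⌊(u - l) * M⌋ : ℝ) / M ≤ u - l := by
      rw [div_le_iff₀ hM]; exact Int.floor_le _
    linarith

theorem lt_phi {l M u : ℝ} (hM : 0 < M) (hu : u < 1) : u < phi l M u := by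
  unfold phi
  split_ifs with h
  · exact h
  · refine lt_min hu ?_
    have : u - l < ((⌊(u - l) * M⌋ : ℝ) + 1) / M := by
      rw [lt_div_iff₀ hM]; exact Int.lt_floor_add_one _
    linarith

theorem plo_nonneg {l M u : ℝ} (hl : 0 < l) (hM : 0 < M) : 0 ≤ plo l M u := by
  unfold plo
  split_ifs with h
  · exact le_rfl
  · have : 0 ≤ (⌊(u - l) * M⌋ : ℝ) := by
      exact_mod_cast Int.floor_nonneg.2 (mul_nonneg (by linarith) hM.le)
    positivity

theorem phi_le_one {l M u : ℝ} (hl : l ≤ 1) : phi l M u ≤ 1 := by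
  unfold phi
  split_ifs with h
  · exact hl
  · exact min_le_left _ _

theorem plo_eq {l M u u' : ℝ} (hM : 0 < M) (h1 : plo l M u ≤ u')
    (h2 : u' < phi l M u) : plo l M u' = plo l M u ∧ phi l M u' = phi l M u := by
  by_cases h : u < l
  · have : u' < l := by simpa [phi, h] using h2
    simp [plo, phi, h, this]
  · simp only [plo, h, if_false] at h1
    simp only [phi, h, if_false] at h2
    have h2 := h2.trans_le (min_le_right _ _)
    have hk : 0 ≤ (⌊(u - l) * M⌋ : ℝ) := by
      exact_mod_cast Int.floor_nonneg.2 (mul_nonneg (by linarith) hM.le)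
    have hk' : 0 ≤ (⌊(u - l) * M⌋ : ℝ) / M := by positivity
    have h' : ¬ u' < l := by linarith
    have : ⌊(u' - l) * M⌋ = ⌊(u - l) * M⌋ := by
      rw [Int.floor_eq_iff]
      constructor
      · rw [← div_le_iff₀ hM]; linarith
      · rw [← lt_div_iff₀ hM]; linarith
    simp [plo, phi, h, h', this]

theorem p_fin {l M : ℝ} (hM : 0 < M) :
    {q : ℝ × ℝ | ∃ u, 0 ≤ u ∧ u < 1 ∧ q = (plo l M u, phi l M u)}.Finite := by
  refine Set.Finite.subset (s := insert (0, l) ((fun k : ℤ => (l + (k:ℝ) / M,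
    min 1 (l + ((k:ℝ) + 1) / M))) '' (Icc 0 ⌊(1 + |l|) * M⌋))) ?_ ?_
  · exact ((finite_Icc _ _).image _).insert _
  · rintro q ⟨u, h0, h1, rfl⟩
    by_cases h : u < l
    · left; simp [plo, phi, h]
    · right
      refine ⟨⌊(u - l) * M⌋, ⟨Int.floor_nonneg.2 (mul_nonneg (by linarith) hM.le), ?_⟩, ?_⟩
      · apply Int.floor_le_floor
        gcongr
        linarith [neg_abs_le l]
      · simp [plo, phi, h]

theorem p_small {l M u : ℝ} (hM : 0 < M) (h : ¬ u < l) :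
    l ≤ plo l M u ∧ phi l M u ≤ plo l M u + 1 / M := by
  have hk : 0 ≤ (⌊(u - l) * M⌋ : ℝ) := by
    exact_mod_cast Int.floor_nonneg.2 (mul_nonneg (by linarith) hM.le)
  have hk' : 0 ≤ (⌊(u - l) * M⌋ : ℝ) / M := by positivity
  simp only [plo, phi, h, if_false]
  refine ⟨by linarith, (min_le_right _ _).trans ?_⟩
  rw [add_div]; linarith

theorem part_exists (c : ℝ) (l M : ℤ → ℝ) (hl : ∀ n, 0 < l n) (hl1 : ∀ n, l n ≤ 1)
    (hM : ∀ n, 0 < M n) :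
    ∃ lo hi, IvPart lo hi ∧
      (∀ n : ℤ, ∀ x, c + n ≤ x → x < c + n + 1 →
        (lo x = c + n ∧ hi x = c + n + l n) ∨
        (c + n + l n ≤ x ∧ hi x ≤ lo x + 1 / M n ∧ c + n ≤ lo x ∧ hi x ≤ c + n + 1)) ∧
      (∀ n : ℤ, ∀ x, c + n ≤ x → x < c + n + l n → lo x = c + n ∧ hi x = c + n + l n) ∧
      ((∀ n m, l n = l m) → (∀ n m, M n = M m) → ∀ (k : ℤ) x, lo (x + k) = lo x + k ∧
        hi (x + k) = hi x + k) := by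
  set N : ℝ → ℤ := fun x => ⌊x - c⌋ with hN
  set lo : ℝ → ℝ := fun x => c + N x + plo (l (N x)) (M (N x)) (x - c - N x) with hlo
  set hi : ℝ → ℝ := fun x => c + N x + phi (l (N x)) (M (N x)) (x - c - N x) with hhi
  have hN1 : ∀ x, 0 ≤ x - c - N x := fun x => by
    have := Int.floor_le (x - c); simp only [hN]; linarith
  have hN2 : ∀ x, x - c - N x < 1 := fun x => by
    have := Int.lt_floor_add_one (x - c); simp only [hN]; linarith
  have hNe : ∀ n : ℤ, ∀ x, c + n ≤ x → x < c + n + 1 → N x = n := by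
    intro n x h1 h2
    simp only [hN]
    rw [Int.floor_eq_iff]
    constructor <;> linarith
  refine ⟨lo, hi, ⟨?_, ?_, ?_, ?_, ?_⟩, ?_, ?_, ?_⟩
  · intro x
    have := plo_le (l := l (N x)) (hM (N x)) (hN1 x)
    simp only [hlo]; linarith
  · intro x
    have := lt_phi (l := l (N x)) (hM (N x)) (hN2 x)
    simp only [hhi]; linarith
  · intro x x' h1 h2
    have e1 := plo_nonneg (u := x - c - N x) (hl (N x)) (hM (N x))
    have e2 := phi_le_one (M := M (N x)) (u := x - c - N x) (hl1 (N x))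
    have hNN : N x' = N x := by
      apply hNe
      · simp only [hlo] at h1; linarith
      · simp only [hhi] at h2; linarith
    have := plo_eq (l := l (N x)) (u := x - c - N x) (u' := x' - c - N x) (hM (N x))
      (by simp only [hlo] at h1; linarith) (by simp only [hhi] at h2; linarith)
    simp only [hlo, hhi, hNN, this.1, this.2, and_self]
  · intro K
    refine Set.Finite.subset (s := ⋃ n ∈ Icc (⌊-K - c⌋) (⌊K - c⌋), (fun q : ℝ × ℝ =>
      (c + (n:ℝ) + q.1, c + (n:ℝ) + q.2)) ''
      {q : ℝ × ℝ | ∃ u, 0 ≤ u ∧ u < 1 ∧ q = (plo (l n) (M n) u, phi (l n) (M n) u)}) ?_ ?_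
    · exact (finite_Icc _ _).biUnion fun n _ => (p_fin (hM n)).image _
    · rintro q ⟨x, hx, rfl⟩
      have hx := abs_le.1 hx
      simp only [mem_iUnion]
      exact ⟨N x, ⟨Int.floor_le_floor (by linarith [hx.1]), Int.floor_le_floor (by linarith [hx.2])⟩,
        _, ⟨x - c - N x, hN1 x, hN2 x, rfl⟩, rfl⟩
  · intro x
    have e1 := plo_nonneg (u := x - c - N x) (hl (N x)) (hM (N x))
    have e2 := phi_le_one (M := M (N x)) (u := x - c - N x) (hl1 (N x))
    simp only [hlo, hhi]; linarith
  · intro n x h1 h2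
    have e := hNe n x h1 h2
    by_cases h : x - c - n < l n
    · left
      simp only [hlo, hhi, e, plo, phi, h, if_true, add_zero, and_self]
    · right
      have := p_small (hM n) h
      have e2 := phi_le_one (M := M n) (u := x - c - n) (hl1 n)
      have := hl n
      simp only [hlo, hhi, e]
      refine ⟨by linarith, by linarith, by linarith, by linarith⟩
  · intro n x h1 h2
    have e := hNe n x h1 (by linarith [hl1 n])
    have h : x - c - n < l n := by linarith
    simp only [hlo, hhi, e, plo, phi, h, if_true, add_zero, and_self]
  · intro hlc hMc k x
    have e : N (x + k) = N x + k := by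
      simp only [hN]
      rw [show x + k - c = x - c + k by ring, Int.floor_add_intCast]
    simp only [hlo, hhi, e]
    rw [hlc (N x + k) (N x), hMc (N x + k) (N x)]
    push_cast
    rw [show x + k - c - (N x + k) = x - c - N x by ring]
    constructor <;> ring

structure Decomp (F : Plane → Plane) (C : Set (Set Plane)) : Prop extends CellSys F C where
  cover : ∀ z, ∃ b ∈ C, z ∈ b
  lf : LocallyFinite (fun b : C => (b : Set Plane))
  inv : ∀ b ∈ C, ∀ k, Tr k '' b ∈ C
  moved : ∀ b ∈ C, ∀ k, k ≠ 0 → Tr k '' b ≠ b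

theorem band_pos (F : Plane ≃ₜ Plane) (hT : ∀ k z, F (Tr k z) = Tr k (F z))
    (hfpf : ∀ z, F z ≠ z) (n : ℤ) :
    ∃ δ > 0, ∀ z : Plane, (n:ℝ) ≤ z.2 → z.2 ≤ n + 1 → δ ≤ dist (F z) z := by
  have hK : IsCompact (Icc (0:ℝ) 1 ×ˢ Icc (n:ℝ) (n + 1)) := isCompact_Icc.prod isCompact_Icc
  obtain ⟨z0, hz0, hmin⟩ := hK.exists_isMinOn ⟨(0, n), by simp⟩
    (f := fun z => dist (F z) z) (by have := F.continuous; fun_prop)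
  refine ⟨dist (F z0) z0, dist_pos.2 (hfpf z0), fun z h1 h2 => ?_⟩
  have := hmin (a := Tr (-⌊z.1⌋) z) (by
    simp only [Tr, mem_prod, mem_Icc]
    push_cast
    have := Int.floor_le z.1
    have := Int.lt_floor_add_one z.1
    refine ⟨⟨by linarith, by linarith⟩, h1, h2⟩)
  replace this : dist (F z0) z0 ≤ dist (F (Tr (-⌊z.1⌋) z)) (Tr (-⌊z.1⌋) z) := this
  rwa [hT, dist_Tr] at this

theorem crit_exists (F : Plane ≃ₜ Plane) (c s t τ : ℝ) (hτ1 : τ ≤ 1)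
    (hfree : ∀ z ∈ Icc c (c + τ) ×ˢ Icc s t, F z ∉ Icc c (c + τ) ×ˢ Icc s t) :
    ∃ l, τ ≤ l ∧ l ≤ 1 ∧
      (∀ l' < l, ∀ z ∈ Icc c (c + l') ×ˢ Icc s t, F z ∉ Icc c (c + l') ×ˢ Icc s t) ∧
      ((∃ z ∈ Icc c (c + l) ×ˢ Icc s t, F z ∈ Icc c (c + l) ×ˢ Icc s t) ∨ l = 1) := by
  have hR : IsCompact (Icc c (c + 1) ×ˢ Icc s t) := isCompact_Icc.prod isCompact_Icc
  set Z : Set Plane := (Icc c (c + 1) ×ˢ Icc s t) ∩ F ⁻¹' (Icc c (c + 1) ×ˢ Icc s t) with hZ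
  have hZc : IsCompact Z := hR.inter_right (hR.isClosed.preimage F.continuous)
  rcases Z.eq_empty_or_nonempty with h | h
  · refine ⟨1, hτ1, le_rfl, ?_, Or.inr rfl⟩
    intro l' hl' z hz hFz
    have : z ∈ Z := ⟨⟨⟨hz.1.1, by linarith [hz.1.2]⟩, hz.2⟩, ⟨hFz.1.1, by linarith [hFz.1.2]⟩, hFz.2⟩
    rw [h] at this; exact this
  · obtain ⟨z0, hz0, hmin⟩ := hZc.exists_isMinOn h (f := fun z => max (z.1 - c) ((F z).1 - c))
      (by have := F.continuous; fun_prop)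
    have hmin : ∀ z ∈ Z, max (z0.1 - c) ((F z0).1 - c) ≤ max (z.1 - c) ((F z).1 - c) :=
      fun z hz => hmin hz
    set l := max (z0.1 - c) ((F z0).1 - c) with hl
    have a1 : z0.1 - c ≤ l := le_max_left _ _
    have a2 : (F z0).1 - c ≤ l := le_max_right _ _
    refine ⟨l, ?_, ?_, ?_, ?_⟩
    · by_contra hc
      have hc := not_le.1 hc
      exact hfree z0 ⟨⟨hz0.1.1.1, by linarith⟩, hz0.1.2⟩ ⟨⟨hz0.2.1.1, by linarith⟩, hz0.2.2⟩
    · exact max_le (by linarith [hz0.1.1.2]) (by linarith [hz0.2.1.2])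
    · have hl1 : l ≤ 1 := max_le (by linarith [hz0.1.1.2]) (by linarith [hz0.2.1.2])
      intro l' hl' z hz hFz
      have hzZ : z ∈ Z := ⟨⟨⟨hz.1.1, by linarith [hz.1.2]⟩, hz.2⟩, ⟨hFz.1.1, by linarith [hFz.1.2]⟩, hFz.2⟩
      have := hmin z hzZ
      have h2 : max (z.1 - c) ((F z).1 - c) ≤ l' :=
        max_le (by linarith [hz.1.2]) (by linarith [hFz.1.2])
      linarith
    · left
      exact ⟨z0, ⟨⟨hz0.1.1.1, by linarith⟩, hz0.1.2⟩, ⟨hz0.2.1.1, by linarith⟩, hz0.2.2⟩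

theorem decomp_exists (F : Plane ≃ₜ Plane) (hT : ∀ k z, F (Tr k z) = Tr k (F z))
    (hfpf : ∀ z, F z ≠ z) (c : Bool → Plane) (hne : (c true).2 ≠ (c false).2)
    (τ : Bool → ℝ) (hτ0 : ∀ i, 0 < τ i) (hτ1 : ∀ i, τ i ≤ 1)
    (hfree : ∀ i, ∀ z ∈ Icc (c i).1 ((c i).1 + τ i) ×ˢ {(c i).2},
      F z ∉ Icc (c i).1 ((c i).1 + τ i) ×ˢ {(c i).2}) :
    ∃ C, Decomp F C ∧ ∀ i, ∃ R ∈ C, Icc (c i).1 ((c i).1 + τ i) ×ˢ {(c i).2} ⊆ R ∧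
      ((∃ z ∈ R, F z ∈ R) ∨ ∃ z ∈ R, Tr 1 z ∈ R) := by
  classical
  choose δ hδ0 hδ using band_pos F hT hfpf
  -- smallness near the segments
  have e1 : ∀ᶠ ε in 𝓝[>] (0:ℝ), ∀ i, ∀ z ∈ Metric.thickening ε (Icc (c i).1 ((c i).1 + τ i) ×ˢ {(c i).2}),
      F z ∉ Metric.thickening ε (Icc (c i).1 ((c i).1 + τ i) ×ˢ {(c i).2}) :=
    eventually_all.2 fun i => thick_free (isCompact_Icc.prod isCompact_singleton) F (hfree i)
  have hgap : 0 < |(c true).2 - (c false).2| := abs_pos.2 (sub_ne_zero.2 hne)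
  obtain ⟨ε, hε1, hε2⟩ := (e1.and (Ioo_mem_nhdsGT hgap)).exists
  set w : ℤ → ℝ := fun n => min (min 1 (ε / 2)) (δ n / 2) with hw
  have hε0 := hε2.1
  have hw0 : ∀ n, 0 < w n := fun n => lt_min (lt_min one_pos (by linarith)) (by linarith [hδ0 n])
  have hw1 : ∀ n, w n ≤ 1 := fun n => (min_le_left _ _).trans (min_le_left _ _)
  have hwε : ∀ n, w n ≤ ε / 2 := fun n => (min_le_left _ _).trans (min_le_right _ _)
  have hwδ : ∀ n, w n ≤ δ n / 2 := fun n => min_le_right _ _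
  have hinv : ∀ n, 1 / (1 / w n) = w n := fun n => one_div_one_div _
  obtain ⟨lv, hv, hvp, hv1, -, -⟩ := part_exists 0 w (fun n => 1 / w n) hw0 hw1
    (fun n => by have := hw0 n; positivity)
  have hvb : ∀ y, (⌊y⌋ : ℝ) ≤ lv y ∧ hv y ≤ ⌊y⌋ + 1 ∧ hv y ≤ lv y + w ⌊y⌋ := by
    intro y
    rcases hv1 ⌊y⌋ y (by simpa using Int.floor_le y) (by simpa using Int.lt_floor_add_one y)
      with ⟨a, b⟩ | ⟨a1, a2, a3, a4⟩
    · rw [a, b]; simp; exact hw1 _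
    · rw [hinv] at a2; simp at a3 a4; exact ⟨a3, a4, a2⟩
  have hflo : ∀ y, ⌊lv y⌋ = ⌊y⌋ := by
    intro y
    rw [Int.floor_eq_iff]
    exact ⟨(hvb y).1, (hvp.le y).trans_lt (Int.lt_floor_add_one y)⟩
  have hhieq : ∀ y y', lv y = lv y' → hv y = hv y' := by
    intro y y' h
    have h1 := (hvp.eq y (lv y) le_rfl ((hvp.le y).trans_lt (hvp.lt y))).2
    have h2 := (hvp.eq y' (lv y') le_rfl ((hvp.le y').trans_lt (hvp.lt y'))).2
    rw [← h1, ← h2, h]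
  set s : Bool → ℝ := fun i => lv (c i).2 with hs
  set t : Bool → ℝ := fun i => hv (c i).2 with ht
  have hst : ∀ i, s i ≤ (c i).2 ∧ (c i).2 < t i ∧ t i ≤ s i + ε / 2 := by
    intro i
    exact ⟨hvp.le _, hvp.lt _, (hvb _).2.2.trans (by linarith [hwε ⌊(c i).2⌋])⟩
  have hrowdisj : ∀ i j, i ≠ j → ∀ y, y ∈ Icc (s i) (t i) → y ∉ Icc (s j) (t j) := by
    have aux : ∀ y, y ∈ Icc (s true) (t true) → y ∉ Icc (s false) (t false) := by
      intro y h1 h2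
      have a := hst true
      have b := hst false
      have := hε2.2
      have : |(c true).2 - (c false).2| ≤ ε := by
        rw [abs_le]; constructor <;> linarith [h1.1, h1.2, h2.1, h2.2]
      linarith
    intro i j hij y h1 h2
    cases i <;> cases j
    · exact hij rfl
    · exact aux y h2 h1
    · exact aux y h1 h2
    · exact hij rfl
  have hsne : s true ≠ s false := by
    intro e
    refine hrowdisj true false (by simp) (s true) ⟨le_rfl, ?_⟩ ⟨e.ge, ?_⟩
    · linarith [(hst true).1, (hst true).2.1]
    · rw [e]; linarith [(hst false).1, (hst false).2.1]
  have hcr : ∀ i, ∃ l, τ i ≤ l ∧ l ≤ 1 ∧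
      (∀ l' < l, ∀ z ∈ Icc (c i).1 ((c i).1 + l') ×ˢ Icc (s i) (t i),
        F z ∉ Icc (c i).1 ((c i).1 + l') ×ˢ Icc (s i) (t i)) ∧
      ((∃ z ∈ Icc (c i).1 ((c i).1 + l) ×ˢ Icc (s i) (t i),
        F z ∈ Icc (c i).1 ((c i).1 + l) ×ˢ Icc (s i) (t i)) ∨ l = 1) := by
    intro i
    apply crit_exists F _ _ _ _ (hτ1 i)
    have hsub : Icc (c i).1 ((c i).1 + τ i) ×ˢ Icc (s i) (t i) ⊆
        Metric.thickening ε (Icc (c i).1 ((c i).1 + τ i) ×ˢ {(c i).2}) := by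
      rintro ⟨x, y⟩ ⟨hx, hy⟩
      rw [Metric.mem_thickening_iff]
      refine ⟨(x, (c i).2), ⟨hx, rfl⟩, ?_⟩
      have a := hst i
      rw [Prod.dist_eq]
      simp only [dist_self]
      rw [max_eq_right dist_nonneg, Real.dist_eq, abs_lt]
      simp only [mem_Icc] at hy
      constructor <;> linarith [hy.1, hy.2]
    exact fun z hz hFz => hε1 i z (hsub hz) (hsub hFz)
  choose l hlτ hl1 hlfree hlcrit using hcr
  have hl0 : ∀ i, 0 < l i := fun i => (hτ0 i).trans_le (hlτ i)
  set cs : ℝ → ℝ := fun y => if y = s true then (c true).1 else if y = s false then (c false).1 else 0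
    with hcs
  set ls : ℝ → ℝ := fun y => if y = s true then l true else if y = s false then l false else w ⌊y⌋
    with hls
  have hcsi : ∀ i, cs (s i) = (c i).1 := by
    intro i; cases i
    · simp [hcs, hsne.symm]
    · simp [hcs]
  have hlsi : ∀ i, ls (s i) = l i := by
    intro i; cases i
    · simp [hls, hsne.symm]
    · simp [hls]
  have hlso : ∀ y, (∀ i, y ≠ s i) → ls y = w ⌊y⌋ := by
    intro y h
    simp [hls, h true, h false]
  have hls0 : ∀ y, 0 < ls y ∧ ls y ≤ 1 := by
    intro y
    by_cases h : ∀ i, y ≠ s i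
    · rw [hlso y h]; exact ⟨hw0 _, hw1 _⟩
    · push Not at h
      obtain ⟨i, rfl⟩ := h
      rw [hlsi]; exact ⟨hl0 i, hl1 i⟩
  have hh := fun y : ℝ => part_exists (cs y) (fun _ => ls y) (fun _ => 1 / w ⌊y⌋) (fun _ => (hls0 y).1)
    (fun _ => (hls0 y).2) (fun _ => by have := hw0 ⌊y⌋; positivity)
  choose lh hh hhp hh1 hh2 hh3 using hh
  have hh3 : ∀ y (k : ℤ) x, lh y (x + k) = lh y x + k ∧ hh y (x + k) = hh y x + k :=
    fun y => hh3 y (fun _ _ => rfl) (fun _ _ => rfl)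
  set cell : Plane → Set Plane := fun p =>
    Icc (lh (lv p.2) p.1) (hh (lv p.2) p.1) ×ˢ Icc (lv p.2) (hv p.2) with hcell
  have hmem : ∀ p, p ∈ cell p := fun p =>
    ⟨⟨(hhp _).le _, ((hhp _).lt _).le⟩, ⟨hvp.le _, (hvp.lt _).le⟩⟩
  have hintr : ∀ p, interior (cell p) =
      Ioo (lh (lv p.2) p.1) (hh (lv p.2) p.1) ×ˢ Ioo (lv p.2) (hv p.2) := by
    intro p; simp only [hcell, interior_prod_eq, interior_Icc]
  have hcelleq : ∀ p q, q ∈ interior (cell p) → cell q = cell p := by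
    intro p q hq
    rw [hintr] at hq
    have a := hvp.eq p.2 q.2 hq.2.1.le hq.2.2
    have b := (hhp (lv p.2)).eq p.1 q.1 hq.1.1.le hq.1.2
    simp only [hcell, a.1, a.2, b.1, b.2]
  -- classification
  have hclass : ∀ p, (∀ z ∈ cell p, F z ∉ cell p) ∨
      ∃ i, ∃ k : ℤ, cell p = Icc ((c i).1 + k) ((c i).1 + k + l i) ×ˢ Icc (s i) (t i) := by
    intro p
    have small : hh (lv p.2) p.1 ≤ lh (lv p.2) p.1 + w ⌊p.2⌋ → ∀ z ∈ cell p, F z ∉ cell p := by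
      intro hsm z hz hFz
      have hb := hvb p.2
      have h1 := hδ ⌊p.2⌋ z (hb.1.trans hz.2.1) (hz.2.2.trans hb.2.1)
      have h2 : dist (F z) z ≤ w ⌊p.2⌋ := by
        rw [Prod.dist_eq, Real.dist_eq, Real.dist_eq]
        refine max_le ?_ ?_ <;> rw [abs_le] <;> constructor
        · linarith [hz.1.1, hz.1.2, hFz.1.1, hFz.1.2]
        · linarith [hz.1.1, hz.1.2, hFz.1.1, hFz.1.2]
        · linarith [hz.2.1, hz.2.2, hFz.2.1, hFz.2.2]
        · linarith [hz.2.1, hz.2.2, hFz.2.1, hFz.2.2]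
      linarith [hwδ ⌊p.2⌋, hδ0 ⌊p.2⌋]
    have hn1 := Int.floor_le (p.1 - cs (lv p.2))
    have hn2 := Int.lt_floor_add_one (p.1 - cs (lv p.2))
    rcases hh1 (lv p.2) ⌊p.1 - cs (lv p.2)⌋ p.1 (by linarith) (by linarith) with ⟨a, b⟩ | ⟨a1, a2, -, -⟩
    · by_cases h : ∀ i, lv p.2 ≠ s i
      · left
        apply small
        rw [a, b, hlso _ h, hflo]
      · right
        push Not at h
        obtain ⟨i, hi⟩ := h
        refine ⟨i, ⌊p.1 - cs (lv p.2)⌋, ?_⟩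
        have e2 : hv p.2 = t i := hhieq _ _ hi
        simp only [hcell, a, b, e2]
        rw [hi, hcsi, hlsi]
    · left
      apply small
      rw [hinv, hflo] at a2
      exact a2
  have hspfree : ∀ i, ∀ k : ℤ, ∀ l' < l i, ∀ z ∈ Icc ((c i).1 + k) ((c i).1 + k + l') ×ˢ Icc (s i) (t i),
      F z ∉ Icc ((c i).1 + k) ((c i).1 + k + l') ×ˢ Icc (s i) (t i) := by
    intro i k l' hl' z hz hFz
    have hk : F (Tr (-k) z) = Tr (-k) (F z) := hT _ _
    apply hlfree i l' hl' (Tr (-k) z)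
    · refine ⟨⟨?_, ?_⟩, hz.2⟩
      · simp only [Tr]; push_cast; linarith [hz.1.1]
      · simp only [Tr]; push_cast; linarith [hz.1.2]
    · rw [hk]
      refine ⟨⟨?_, ?_⟩, hFz.2⟩
      · simp only [Tr]; push_cast; linarith [hFz.1.1]
      · simp only [Tr]; push_cast; linarith [hFz.1.2]
  have hTcell : ∀ k p, Tr k '' cell p = cell (Tr k p) := by
    intro k p
    have h := hh3 (lv p.2) k p.1
    ext z
    constructor
    · rintro ⟨q, hq, rfl⟩
      refine ⟨⟨?_, ?_⟩, hq.2⟩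
      · simp only [Tr]; rw [h.1]; linarith [hq.1.1]
      · simp only [Tr]; rw [h.2]; linarith [hq.1.2]
    · intro hz
      have h1 := hz.1.1
      have h2 := hz.1.2
      simp only [Tr] at h1 h2
      rw [h.1] at h1; rw [h.2] at h2
      refine ⟨Tr (-k) z, ⟨⟨?_, ?_⟩, hz.2⟩, Tr_self_neg _ _⟩
      · simp only [Tr]; push_cast; linarith
      · simp only [Tr]; push_cast; linarith
  have hdec : Decomp F (range cell) := by
    refine ⟨⟨?_, ?_, ?_, ?_, ?_, ?_⟩, ?_, ?_, ?_, ?_⟩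
    · rintro _ ⟨p, rfl⟩
      exact (convex_Icc _ _).prod (convex_Icc _ _)
    · rintro _ ⟨p, rfl⟩
      exact isClosed_Icc.prod isClosed_Icc
    · rintro _ ⟨p, rfl⟩
      rw [hintr]
      exact (nonempty_Ioo.2 (((hhp _).le _).trans_lt ((hhp _).lt _))).prod
        (nonempty_Ioo.2 ((hvp.le _).trans_lt (hvp.lt _)))
    · rintro _ ⟨p, rfl⟩ _ ⟨p', rfl⟩ hne
      rw [Set.disjoint_left]
      intro q h1 h2
      exact hne ((hcelleq _ _ h1).symm.trans (hcelleq _ _ h2))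
    · rintro _ ⟨p, rfl⟩ z hz hFz
      rcases hclass p with h | ⟨i, k, h⟩
      · exact h z (interior_subset hz) (interior_subset hFz)
      · rw [h, interior_prod_eq, interior_Icc, interior_Icc] at hz hFz
        have h1 := hz.1.2
        have h2 := hFz.1.2
        refine hspfree i k (max (z.1 - ((c i).1 + k)) ((F z).1 - ((c i).1 + k))) ?_ z
          ⟨⟨hz.1.1.le, ?_⟩, hz.2.1.le, hz.2.2.le⟩ ⟨⟨hFz.1.1.le, ?_⟩, hFz.2.1.le, hFz.2.2.le⟩
        · exact max_lt (by linarith) (by linarith)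
        · linarith [le_max_left (z.1 - ((c i).1 + k)) ((F z).1 - ((c i).1 + k))]
        · linarith [le_max_right (z.1 - ((c i).1 + k)) ((F z).1 - ((c i).1 + k))]
    · rintro _ ⟨p, rfl⟩ _ ⟨p', rfl⟩ hne z hz hz' hFz hFz'
      rcases hclass p with h | ⟨i, k, h⟩
      · exact h z hz hFz
      rcases hclass p' with h' | ⟨i', k', h'⟩
      · exact h' z hz' hFz'
      rw [h] at hz hFz
      rw [h'] at hz' hFz'
      by_cases hii : i = i'
      · subst hii
        have aux : ∀ k k' : ℤ, k < k' → z ∈ Icc ((c i).1 + k) ((c i).1 + k + l i) ×ˢ Icc (s i) (t i) →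
            F z ∈ Icc ((c i).1 + k) ((c i).1 + k + l i) ×ˢ Icc (s i) (t i) →
            z ∈ Icc ((c i).1 + k') ((c i).1 + k' + l i) ×ˢ Icc (s i) (t i) →
            F z ∈ Icc ((c i).1 + k') ((c i).1 + k' + l i) ×ˢ Icc (s i) (t i) → False := by
          intro k k' hkk hz hFz hz' hFz'
          have hkk' : (k:ℝ) + 1 ≤ k' := by exact_mod_cast hkk
          have := hl1 i
          refine hspfree i k' 0 (hl0 i) z ⟨⟨hz'.1.1, ?_⟩, hz'.2⟩ ⟨⟨hFz'.1.1, ?_⟩, hFz'.2⟩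
          · linarith [hz.1.2]
          · linarith [hFz.1.2]
        rcases lt_trichotomy k k' with hk | hk | hk
        · exact aux k k' hk hz hFz hz' hFz'
        · subst hk; exact hne (h.trans h'.symm)
        · exact aux k' k hk hz' hFz' hz hFz
      · exact hrowdisj i i' hii z.2 hz.2 hz'.2
    · intro z; exact ⟨cell z, ⟨z, rfl⟩, hmem z⟩
    · intro z
      refine ⟨Metric.ball z 1, Metric.ball_mem_nhds z one_pos, ?_⟩
      -- all cells meeting the ball
      set K := ‖z‖ + 3 with hK
      have hfin : {b : Set Plane | ∃ p : Plane, ‖p‖ ≤ K ∧ b = cell p}.Finite := by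
        refine Set.Finite.subset (s := ⋃ q ∈ {q : ℝ × ℝ | ∃ x, |x| ≤ K ∧ q = (lv x, hv x)},
          (fun q' : ℝ × ℝ => Icc q'.1 q'.2 ×ˢ Icc q.1 q.2) ''
            {q' : ℝ × ℝ | ∃ x, |x| ≤ K ∧ q' = (lh q.1 x, hh q.1 x)}) ?_ ?_
        · exact (hvp.fin K).biUnion fun q _ => ((hhp q.1).fin K).image _
        · rintro b ⟨p, hp, rfl⟩
          simp only [mem_iUnion]
          have hp1 : |p.1| ≤ K := (norm_fst_le p).trans hp
          have hp2 : |p.2| ≤ K := (norm_snd_le p).trans hp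
          exact ⟨(lv p.2, hv p.2), ⟨p.2, hp2, rfl⟩, (lh (lv p.2) p.1, hh (lv p.2) p.1),
            ⟨p.1, hp1, rfl⟩, rfl⟩
      refine Set.Finite.subset (hfin.preimage (Subtype.val_injective.injOn)) ?_
      rintro ⟨_, p, rfl⟩ ⟨q, hq, hqz⟩
      refine ⟨p, ?_, rfl⟩
      have hd : dist p q ≤ 1 := by
        have a1 := (hhp (lv p.2)).wid p.1
        have a2 := hvp.wid p.2
        have b := hmem p
        have hq : q ∈ cell p := hq
        rw [Prod.dist_eq, Real.dist_eq, Real.dist_eq]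
        refine max_le ?_ ?_ <;> rw [abs_le] <;> constructor
        · linarith [hq.1.1, hq.1.2, b.1.1, b.1.2]
        · linarith [hq.1.1, hq.1.2, b.1.1, b.1.2]
        · linarith [hq.2.1, hq.2.2, b.2.1, b.2.2]
        · linarith [hq.2.1, hq.2.2, b.2.1, b.2.2]
      have h2 : dist p z ≤ 2 := by
        rw [Metric.mem_ball] at hqz
        linarith [dist_triangle p q z]
      rw [dist_eq_norm] at h2
      have := norm_le_norm_add_norm_sub' p z
      linarith
    · rintro _ ⟨p, rfl⟩ k
      rw [hTcell]; exact ⟨_, rfl⟩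
    · rintro _ ⟨p, rfl⟩ k hk he
      rw [hTcell] at he
      have h := hh3 (lv p.2) k p.1
      have h1 : lh (lv p.2) p.1 ≤ hh (lv p.2) p.1 := ((hhp _).le _).trans ((hhp _).lt _).le
      have h2 : lv p.2 ≤ hv p.2 := (hvp.le _).trans (hvp.lt _).le
      have m1 : ((lh (lv p.2) p.1, lv p.2) : Plane) ∈ cell p := ⟨⟨le_rfl, h1⟩, ⟨le_rfl, h2⟩⟩
      have m2 : ((hh (lv p.2) p.1, lv p.2) : Plane) ∈ cell p := ⟨⟨h1, le_rfl⟩, ⟨le_rfl, h2⟩⟩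
      rw [← he] at m1 m2
      have n1 := m1.1.1
      have n2 := m2.1.2
      simp only [Tr] at n1 n2
      rw [h.1] at n1; rw [h.2] at n2
      have : (k : ℝ) = 0 := by linarith
      exact hk (by exact_mod_cast this)
  refine ⟨range cell, hdec, fun i => ⟨cell (c i), ⟨_, rfl⟩, ?_⟩⟩
  have hci : cell (c i) = Icc ((c i).1) ((c i).1 + l i) ×ˢ Icc (s i) (t i) := by
    have h := hh2 (s i) 0 (c i).1 (by simp [hcsi]) (by simp [hcsi, hlsi, hl0])
    simp only [Int.cast_zero, add_zero, hcsi, hlsi] at h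
    simp only [hcell]
    change Icc (lh (s i) (c i).1) (hh (s i) (c i).1) ×ˢ Icc (s i) (t i) = _
    rw [h.1, h.2]
  rw [hci]
  constructor
  · rintro z ⟨hz1, hz2⟩
    rw [mem_singleton_iff] at hz2
    refine ⟨⟨hz1.1, by linarith [hz1.2, hlτ i]⟩, ?_⟩
    rw [hz2]; exact ⟨(hst i).1, (hst i).2.1.le⟩
  · rcases hlcrit i with h | h
    · exact Or.inl h
    · right
      have hsi : s i ≤ t i := (hst i).1.trans (hst i).2.1.le
      refine ⟨((c i).1, s i), ⟨⟨le_rfl, by linarith⟩, le_rfl, hsi⟩, ⟨?_, le_rfl, hsi⟩⟩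
      simp only [Tr, Int.cast_one, h]
      constructor <;> linarith

theorem JoinedIn.tr {O : Set Plane} (hO : ∀ k, ∀ z ∈ O, Tr k z ∈ O) {a b : Plane}
    (h : JoinedIn O a b) (k : ℤ) : JoinedIn O (Tr k a) (Tr k b) := by
  have := h.map_continuousOn (f := Tr k) (Tr_cont k).continuousOn
  exact this.mono (by rintro _ ⟨z, hz, rfl⟩; exact hO k z hz)

theorem infDist_Tr {B : Set Plane} (hB : ∀ k, ∀ z ∈ B, Tr k z ∈ B) (k : ℤ) (z : Plane) :
    Metric.infDist (Tr k z) B = Metric.infDist z B := by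
  have key : ∀ k z, Metric.infDist (Tr k z) B ≤ Metric.infDist z B := by
    intro k z
    rcases B.eq_empty_or_nonempty with h | h
    · subst h; simp
    · refine le_of_forall_gt_imp_ge_of_dense fun r hr => ?_
      obtain ⟨y, hy, hyr⟩ := (Metric.infDist_lt_iff h).1 hr
      refine (Metric.infDist_le_dist_of_mem (hB k y hy)).trans ?_
      rw [dist_Tr]; exact hyr.le
  refine le_antisymm (key k z) ?_
  have := key (-k) (Tr k z)
  rwa [Tr_neg_self] at this

/-- integer valued function on an open invariant set without essential loops -/
theorem height_exists (O : Set Plane) (hO : IsOpen O) (hT : ∀ k, ∀ z ∈ O, Tr k z ∈ O)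
    (hno : ∀ z k, k ≠ 0 → ¬ JoinedIn O z (Tr k z)) :
    ∃ u : Plane → ℤ, (∀ z ∈ O, ∀ᶠ w in 𝓝 z, u w = u z) ∧ ∀ z ∈ O, u (Tr 1 z) = u z + 1 := by
  classical
  set S : Plane → Set Plane := fun z => {y | ∃ k : ℤ, JoinedIn O (Tr k y) z} with hS
  set sel : Set Plane → Plane := fun s => if h : s.Nonempty then h.some else 0 with hsel
  have hself : ∀ z ∈ O, JoinedIn O z z := fun z hz => JoinedIn.refl hz
  have hselm : ∀ z ∈ O, sel (S z) ∈ S z := by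
    intro z hz
    have hne : (S z).Nonempty := ⟨z, 0, by rw [Tr_zero]; exact hself z hz⟩
    simp only [hsel, dif_pos hne]
    exact hne.some_mem
  have hu : ∀ z, ∃ k : ℤ, z ∈ O → JoinedIn O (Tr k (sel (S z))) z := by
    intro z
    by_cases hz : z ∈ O
    · obtain ⟨k, hk⟩ := hselm z hz
      exact ⟨k, fun _ => hk⟩
    · exact ⟨0, fun h => absurd h hz⟩
  choose u hu using hu
  have huniq : ∀ r z k k', JoinedIn O (Tr k r) z → JoinedIn O (Tr k' r) z → k = k' := by
    intro r z k k' h1 h2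
    by_contra hne
    apply hno (Tr k r) (k' - k) (sub_ne_zero.2 (Ne.symm hne))
    rw [← Tr_add, sub_add_cancel]
    exact h1.trans h2.symm
  have hSj : ∀ z w, JoinedIn O z w → S z = S w := by
    intro z w h
    ext y
    exact ⟨fun ⟨k, hk⟩ => ⟨k, hk.trans h⟩, fun ⟨k, hk⟩ => ⟨k, hk.trans h.symm⟩⟩
  have hST : ∀ z, S (Tr 1 z) = S z := by
    intro z
    ext y
    constructor
    · rintro ⟨k, hk⟩
      refine ⟨-1 + k, ?_⟩
      have := JoinedIn.tr hT hk (-1)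
      rwa [← Tr_add, Tr_neg_self] at this
    · rintro ⟨k, hk⟩
      refine ⟨1 + k, ?_⟩
      have := JoinedIn.tr hT hk 1
      rwa [← Tr_add] at this
  refine ⟨u, ?_, ?_⟩
  · intro z hz
    obtain ⟨ε, hε, hb⟩ := Metric.isOpen_iff.1 hO z hz
    filter_upwards [Metric.ball_mem_nhds z hε] with w hw
    have hj : JoinedIn O z w :=
      (((convex_ball z ε).isPathConnected ⟨z, Metric.mem_ball_self hε⟩).joinedIn z
        (Metric.mem_ball_self hε) w hw).mono hb
    have h1 := hu w (hb hw)
    rw [← hSj z w hj] at h1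
    exact huniq _ w _ _ h1 ((hu z hz).trans hj)
  · intro z hz
    have h1 := hu _ (hT 1 z hz)
    rw [hST] at h1
    have h2 := JoinedIn.tr hT (hu z hz) 1
    rw [← Tr_add, add_comm] at h2
    exact huniq _ _ _ _ h1 h2

theorem annular_sep (B V : Set Plane) (hB : IsClosed B) (hV : IsOpen V) (hBV : B ⊆ V)
    (hBT : ∀ k, ∀ z ∈ B, Tr k z ∈ B) (hVT : ∀ k, ∀ z ∈ V, Tr k z ∈ V)
    (S1 S2 : Set Plane) (h1 : S1 ⊆ B) (h2 : ∀ z ∈ S2, z ∉ V) (hc1 : IsPreconnected S1)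
    (hc2 : IsPreconnected S2) (z1 z2 : Plane) (k1 k2 : ℤ) (hk1 : k1 ≠ 0) (hk2 : k2 ≠ 0)
    (hz1 : z1 ∈ S1) (hz1' : Tr k1 z1 ∈ S1) (hz2 : z2 ∈ S2) (hz2' : Tr k2 z2 ∈ S2) :
    ∃ z k, k ≠ 0 ∧ JoinedIn (V \ B) z (Tr k z) := by
  classical
  by_contra hcon
  push Not at hcon
  have hO : IsOpen (V \ B) := hV.sdiff hB
  have hBT' : ∀ k z, Tr k z ∈ B ↔ z ∈ B := fun k z =>
    ⟨fun h => by have := hBT (-k) _ h; rwa [Tr_neg_self] at this, hBT k z⟩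
  have hVT' : ∀ k z, Tr k z ∈ V ↔ z ∈ V := fun k z =>
    ⟨fun h => by have := hVT (-k) _ h; rwa [Tr_neg_self] at this, hVT k z⟩
  have hOT : ∀ k z, Tr k z ∈ V \ B ↔ z ∈ V \ B := by
    intro k z; rw [Set.mem_sdiff, Set.mem_sdiff, hBT', hVT']
  obtain ⟨u, hu1, hu2⟩ := height_exists (V \ B) hO (fun k z => (hOT k z).2) hcon
  have hBne : B.Nonempty := ⟨z1, h1 hz1⟩
  have hVne : (Vᶜ).Nonempty := ⟨z2, h2 _ hz2⟩
  set a : Plane → ℝ := fun z => Metric.infDist z Vᶜ with ha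
  set b : Plane → ℝ := fun z => Metric.infDist z B with hb
  have hac : Continuous a := Metric.continuous_infDist_pt _
  have hbc : Continuous b := Metric.continuous_infDist_pt _
  have ha0 : ∀ z, z ∉ V → a z = 0 := fun z hz => Metric.infDist_zero_of_mem hz
  have hb0 : ∀ z, z ∈ B → b z = 0 := fun z hz => Metric.infDist_zero_of_mem hz
  have hap : ∀ z, z ∈ V → 0 < a z := fun z hz =>
    (hV.isClosed_compl.notMem_iff_infDist_pos hVne).1 (by simpa using hz)
  have hbp : ∀ z, z ∉ B → 0 < b z := fun z hz => (hB.notMem_iff_infDist_pos hBne).1 hz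
  have han : ∀ z, 0 ≤ a z := fun z => Metric.infDist_nonneg
  have hbn : ∀ z, 0 ≤ b z := fun z => Metric.infDist_nonneg
  have hab : ∀ z, 0 < a z + b z := by
    intro z
    by_cases hz : z ∈ V
    · linarith [hap z hz, hbn z]
    · linarith [hbp z (fun h => hz (hBV h)), han z]
  set l0 : Plane → ℝ := fun z => a z / (a z + b z) with hl0
  have hl0c : Continuous l0 := hac.div (hac.add hbc) fun z => (hab z).ne'
  set l : Plane → ℝ := fun z => max 0 (min 1 (3 * l0 z - 1)) with hl
  have hlc : Continuous l := by fun_prop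
  have hlT : ∀ z, l (Tr 1 z) = l z := by
    intro z
    have e1 : a (Tr 1 z) = a z := infDist_Tr (fun k z hz => by
      rw [mem_compl_iff, hVT']; exact hz) 1 z
    have e2 : b (Tr 1 z) = b z := infDist_Tr hBT 1 z
    simp only [hl, hl0, e1, e2]
  have hlB : ∀ z ∈ B, ∀ᶠ w in 𝓝 z, l w = 1 := by
    intro z hz
    have : (2/3 : ℝ) < l0 z := by
      simp only [hl0, hb0 z hz, add_zero, div_self (hap z (hBV hz)).ne']; norm_num
    filter_upwards [hl0c.continuousAt.eventually (lt_mem_nhds this)] with w hw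
    simp only [hl]
    rw [min_eq_left (by linarith)]; simp
  have hlV : ∀ z, z ∉ V → ∀ᶠ w in 𝓝 z, l w = 0 := by
    intro z hz
    have : l0 z < (1/3 : ℝ) := by
      simp only [hl0, ha0 z hz, zero_div]; norm_num
    filter_upwards [hl0c.continuousAt.eventually (gt_mem_nhds this)] with w hw
    simp only [hl]
    apply max_eq_left
    exact (min_le_right _ _).trans (by linarith)
  set g : Plane → ℂ := fun z => if z ∈ V \ B then
    Complex.exp ((l z : ℂ) * u z * (2 * Real.pi * Complex.I)) else 1 with hg
  have hexp : ∀ n : ℤ, Complex.exp ((n : ℂ) * (2 * Real.pi * Complex.I)) = 1 :=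
    Complex.exp_int_mul_two_pi_mul_I
  have hg1 : ∀ z ∉ V \ B, g z = 1 := fun z hz => if_neg hz
  have hgc : Continuous g := by
    rw [continuous_iff_continuousAt]
    intro z
    by_cases hz : z ∈ V \ B
    · have : ContinuousAt (fun w => Complex.exp ((l w : ℂ) * u z * (2 * Real.pi * Complex.I))) z := by
        apply Continuous.continuousAt
        fun_prop
      refine this.congr ?_
      filter_upwards [hO.mem_nhds hz, hu1 z hz] with w hw hw2
      simp only [hg]
      rw [if_pos hw, hw2]
    · have : ∀ᶠ w in 𝓝 z, g w = 1 := by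
        by_cases hzV : z ∈ V
        · have hzB : z ∈ B := by by_contra h; exact hz ⟨hzV, h⟩
          filter_upwards [hlB z hzB] with w hw
          simp only [hg]
          split_ifs
          · rw [hw]; simpa using hexp (u w)
          · rfl
        · filter_upwards [hlV z hzV] with w hw
          simp only [hg]
          split_ifs
          · rw [hw]; simp
          · rfl
      exact (continuousAt_const (y := (1:ℂ))).congr (this.mono fun w hw => hw.symm)
  have hgn : ∀ z, g z ≠ 0 := by
    intro z; simp only [hg]; split_ifs
    · exact Complex.exp_ne_zero _
    · exact one_ne_zero
  obtain ⟨W, hWc, hW⟩ := log_lift g hgc hgn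
  have hstep : ∀ z, g (Tr 1 z) = g z * Complex.exp ((l z : ℂ) * (2 * Real.pi * Complex.I)) := by
    intro z
    by_cases hz : z ∈ V \ B
    · simp only [hg]
      rw [if_pos hz, if_pos ((hOT 1 z).2 hz), hlT, hu2 z hz, ← Complex.exp_add]
      congr 1
      push_cast; ring
    · rw [hg1 z hz, hg1 _ (fun h => hz ((hOT 1 z).1 h))]
      by_cases hzV : z ∈ V
      · have hzB : z ∈ B := by by_contra h; exact hz ⟨hzV, h⟩
        rw [(hlB z hzB).self_of_nhds]
        simpa using (hexp 1).symm
      · rw [(hlV z hzV).self_of_nhds]; simp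
  set D : Plane → ℂ := fun z => W (Tr 1 z) - W z - (l z : ℂ) * (2 * Real.pi * Complex.I) with hD
  have hDc : Continuous D := by
    have := Tr_cont 1
    fun_prop
  have hD1 : ∀ z, Complex.exp (D z) = 1 := by
    intro z
    simp only [hD, Complex.exp_sub, hW, hstep]
    field_simp [hgn z, Complex.exp_ne_zero]
  have hDk : ∀ z w, D z = D w := exp_const D hDc fun x y => by rw [hD1, hD1]
  have hlTk : ∀ (k : ℤ) z, l (Tr k z) = l z := by
    intro k z
    induction k using Int.induction_on with
    | zero => rw [Tr_zero]
    | succ n ih => rw [add_comm, Tr_add, hlT, ih]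
    | pred n ih =>
      rw [← ih]
      have : Tr (-(n:ℤ)) z = Tr 1 (Tr (-(n:ℤ) - 1) z) := by rw [← Tr_add]; congr 1; ring
      rw [this, hlT]
  have hWk : ∀ z (k : ℤ), W (Tr k z) = W z + k * ((l z : ℂ) * (2 * Real.pi * Complex.I) + D 0) := by
    intro z k
    have st : ∀ w, W (Tr 1 w) = W w + ((l w : ℂ) * (2 * Real.pi * Complex.I) + D 0) := by
      intro w; rw [hDk 0 w]; simp only [hD]; ring
    induction k using Int.induction_on with
    | zero => rw [Tr_zero]; simp
    | succ n ih => rw [add_comm, Tr_add, st, ih, hlTk]; push_cast; ring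
    | pred n ih =>
      have : Tr (-(n:ℤ)) z = Tr 1 (Tr (-(n:ℤ) - 1) z) := by rw [← Tr_add]; congr 1; ring
      rw [this, st, hlTk] at ih
      push_cast at ih ⊢
      linear_combination ih
  have hconst : ∀ S : Set Plane, IsPreconnected S → (∀ z ∈ S, z ∉ V \ B) → ∀ x ∈ S, ∀ y ∈ S, W x = W y := by
    intro S hS hSO x hx y hy
    have : PreconnectedSpace S := Subtype.preconnectedSpace hS
    exact exp_const (fun s : S => W s) (hWc.comp continuous_subtype_val)
      (fun s t => by rw [hW, hW, hg1 _ (hSO s s.2), hg1 _ (hSO t t.2)]) ⟨x, hx⟩ ⟨y, hy⟩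
  have e1 := hconst S1 hc1 (fun z hz h => h.2 (h1 hz)) _ hz1' _ hz1
  have e2 := hconst S2 hc2 (fun z hz h => h2 z hz h.1) _ hz2' _ hz2
  rw [hWk, (hlB z1 (h1 hz1)).self_of_nhds] at e1
  rw [hWk, (hlV z2 (h2 _ hz2)).self_of_nhds] at e2
  have k1' : (k1 : ℂ) ≠ 0 := by exact_mod_cast hk1
  have k2' : (k2 : ℂ) ≠ 0 := by exact_mod_cast hk2
  have f2 : D 0 = 0 := by simpa [k2'] using e2
  rw [f2] at e1
  simp [k1', Real.pi_ne_zero] at e1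

theorem Tr_image_image (a b : ℤ) (s : Set Plane) : Tr a '' (Tr b '' s) = Tr (a + b) '' s := by
  rw [image_image]; simp only [Tr_add]

theorem Tr_image_zero (s : Set Plane) : Tr 0 '' s = s := by
  have : Tr 0 = id := funext Tr_zero
  rw [this, image_id]

theorem Arr.tr {F : Plane ≃ₜ Plane} {C} (hT : ∀ k z, F (Tr k z) = Tr k (F z)) (hD : Decomp F C)
    {b b'} (h : Arr F C b b') (k : ℤ) : Arr F C (Tr k '' b) (Tr k '' b') := by
  obtain ⟨h1, h2, h3, z, hz, hFz⟩ := h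
  refine ⟨hD.inv _ h1 k, hD.inv _ h2 k, fun h => h3 ((Tr_inj k).image_injective h), Tr k z,
    ⟨z, hz, rfl⟩, ?_⟩
  rw [hT]; exact ⟨_, hFz, rfl⟩

theorem rch_tr {F : Plane ≃ₜ Plane} {C} (hT : ∀ k z, F (Tr k z) = Tr k (F z)) (hD : Decomp F C)
    {b b'} (h : Relation.ReflTransGen (Arr F C) b b') (k : ℤ) :
    Relation.ReflTransGen (Arr F C) (Tr k '' b) (Tr k '' b') :=
  h.lift (fun s => Tr k '' s) fun _ _ h => h.tr hT hD k

/-- unions of cells are closed -/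
theorem Decomp.closed_union {F C} (hD : Decomp F C) (P : Set (Set Plane)) :
    IsClosed {z : Plane | ∃ b ∈ C, b ∈ P ∧ z ∈ b} := by
  have h : LocallyFinite (fun b : {b : C // (b : Set Plane) ∈ P} => ((b : C) : Set Plane)) :=
    hD.lf.comp_injective Subtype.val_injective
  have := h.isClosed_iUnion (fun b => hD.closed _ b.1.2)
  convert this using 1
  ext z
  simp only [mem_iUnion]
  constructor
  · rintro ⟨b, hb, hP, hz⟩
    exact ⟨⟨⟨b, hb⟩, hP⟩, hz⟩
  · rintro ⟨⟨⟨b, hb⟩, hP⟩, hz⟩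
    exact ⟨b, hb, hP, hz⟩

theorem Decomp.mem_int {F C} (hD : Decomp F C) (P : Set (Set Plane)) (z : Plane)
    (h : ∀ b ∈ C, z ∈ b → b ∈ P) : z ∈ interior {z : Plane | ∃ b ∈ C, b ∈ P ∧ z ∈ b} := by
  rw [mem_interior]
  refine ⟨{z : Plane | ∃ b ∈ C, b ∈ Pᶜ ∧ z ∈ b}ᶜ, ?_, (hD.closed_union Pᶜ).isOpen_compl, ?_⟩
  · intro w hw
    obtain ⟨b, hb, hwb⟩ := hD.cover w
    refine ⟨b, hb, ?_, hwb⟩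
    by_contra hP
    exact hw ⟨b, hb, hP, hwb⟩
  · rintro ⟨b, hb, hP, hz⟩
    exact hP (h b hb hz)

theorem Decomp.notMem_int {F C} (hD : Decomp F C) (P : Set (Set Plane)) (R) (hR : R ∈ C) (hRP : R ∉ P)
    (z : Plane) (hz : z ∈ R) : z ∉ interior {z : Plane | ∃ b ∈ C, b ∈ P ∧ z ∈ b} := by
  intro h
  obtain ⟨w, hw1, hw2⟩ := mem_closure_iff.1 (hD.toCellSys.sub hR hz) _ isOpen_interior h
  obtain ⟨b, hb, hP, hwb⟩ := interior_subset hw1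
  exact hD.toCellSys.disj' hR hb (by rintro rfl; exact hRP hP) hw2 hwb

theorem chain_conn (F : Plane ≃ₜ Plane)
    (R : Set Plane) (hR : IsPreconnected R)
    (hcrit : (∃ z ∈ R, F z ∈ R) ∨ ∃ z ∈ R, Tr 1 z ∈ R) (x y : Plane) (hx : x ∈ R) (hy : y ∈ R)
    (q : ℕ) (p : ℤ) (hp : p ≠ 0) (hq : F^[q] x = Tr p y) :
    ∃ S, IsPreconnected S ∧ ∃ z k, k ≠ 0 ∧ z ∈ S ∧ Tr k z ∈ S ∧
      ∀ w ∈ S, (∃ i, ∃ v ∈ R, w = F^[i] v) ∨ ∃ j, ∃ v ∈ R, w = Tr j v := by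
  rcases hcrit with ⟨z, hz, hFz⟩ | ⟨z, hz, hFz⟩
  · refine ⟨(⋃ i : ℕ, F^[i] '' R) ∪ Tr p '' R, ?_, x, p, hp, ?_, ?_, ?_⟩
    · refine IsPreconnected.union (Tr p y) ?_ ⟨y, hy, rfl⟩ ?_ ?_
      · exact mem_iUnion.2 ⟨q, x, hx, hq⟩
      · apply IsPreconnected.iUnion_of_chain
        · intro n
          exact hR.image _ (F.continuous.iterate n).continuousOn
        · intro n
          refine ⟨F^[n] (F z), ⟨F z, hFz, rfl⟩, z, hz, ?_⟩
          exact Function.iterate_succ_apply _ _ _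
      · exact hR.image _ (Tr_cont p).continuousOn
    · exact Or.inl (mem_iUnion.2 ⟨0, x, hx, rfl⟩)
    · exact Or.inr ⟨x, hx, rfl⟩
    · rintro w (h | ⟨v, hv, rfl⟩)
      · obtain ⟨i, v, hv, rfl⟩ := mem_iUnion.1 h
        exact Or.inl ⟨i, v, hv, rfl⟩
      · exact Or.inr ⟨p, v, hv, rfl⟩
  · exact ⟨R, hR, z, 1, one_ne_zero, hz, hFz, fun w hw => Or.inl ⟨0, w, hw, rfl⟩⟩

theorem iter_symm (F : Plane ≃ₜ Plane) (n : ℕ) (z : Plane) : F.symm^[n] (F^[n] z) = z := by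
  have : Function.LeftInverse F.symm F := F.symm_apply_apply
  exact this.iterate n z

theorem symm_tr (F : Plane ≃ₜ Plane) (hT : ∀ k z, F (Tr k z) = Tr k (F z)) (k : ℤ) (z : Plane) :
    F.symm (Tr k z) = Tr k (F.symm z) := by
  rw [Homeomorph.symm_apply_eq, hT, Homeomorph.apply_symm_apply]

theorem iter_tr (F : Plane → Plane) (hT : ∀ k z, F (Tr k z) = Tr k (F z)) (n : ℕ) (k : ℤ) (z : Plane) :
    F^[n] (Tr k z) = Tr k (F^[n] z) := by
  induction n generalizing z with
  | zero => rfl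
  | succ n ih => rw [Function.iterate_succ_apply, hT, ih, Function.iterate_succ_apply]

theorem attractor_sep (F : Plane ≃ₜ Plane) (hT : ∀ k z, F (Tr k z) = Tr k (F z)) {C}
    (hD : Decomp F C) (R R' : Set Plane) (hR : R ∈ C) (hR' : R' ∈ C)
    (hcrit : (∃ z ∈ R, F z ∈ R) ∨ ∃ z ∈ R, Tr 1 z ∈ R)
    (hcrit' : (∃ z ∈ R', F z ∈ R') ∨ ∃ z ∈ R', Tr 1 z ∈ R')
    (x y : Plane) (hx : x ∈ R) (hy : y ∈ R) (q : ℕ) (p : ℤ) (hp : p ≠ 0) (hq : F^[q] x = Tr p y)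
    (x' y' : Plane) (hx' : x' ∈ R') (hy' : y' ∈ R') (q' : ℕ) (p' : ℤ) (hp' : p' ≠ 0)
    (hq' : F^[q'] x' = Tr p' y')
    (hno : ∀ k, ¬ Relation.ReflTransGen (Arr F C) R (Tr k '' R')) :
    ∃ A : Set Plane, (∀ z ∈ A, F z ∈ interior A) ∧ (∀ k, ∀ z ∈ A, Tr k z ∈ A) ∧ IsClosed A ∧
      ∃ z k, k ≠ 0 ∧ JoinedIn (interior A \ F '' A) z (Tr k z) := by
  set P : Set (Set Plane) := {b | ∃ k : ℤ, Relation.ReflTransGen (Arr F C) (Tr k '' R) b} with hP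
  set A : Set Plane := {z : Plane | ∃ b ∈ C, b ∈ P ∧ z ∈ b} with hA
  have hAc : IsClosed A := hD.closed_union P
  have hAF : ∀ z ∈ A, F z ∈ interior A := by
    rintro z ⟨b, hb, ⟨k, hk⟩, hz⟩
    apply hD.mem_int
    intro b' hb' hFz
    by_cases hbb : b = b'
    · rw [← hbb]; exact ⟨k, hk⟩
    · exact ⟨k, hk.tail ⟨hb, hb', hbb, z, hz, hFz⟩⟩
  have hAT : ∀ k, ∀ z ∈ A, Tr k z ∈ A := by
    rintro k z ⟨b, hb, ⟨j, hj⟩, hz⟩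
    refine ⟨_, hD.inv b hb k, ⟨k + j, ?_⟩, z, hz, rfl⟩
    rw [← Tr_image_image]
    exact rch_tr hT hD hj k
  have hAi : ∀ k, ∀ z ∈ interior A, Tr k z ∈ interior A := by
    intro k z hz
    have ho : IsOpen (Tr (-k) ⁻¹' interior A) := isOpen_interior.preimage (Tr_cont _)
    refine mem_interior.2 ⟨_, ?_, ho, ?_⟩
    · intro w hw
      have := hAT k _ (interior_subset hw)
      rwa [Tr_self_neg] at this
    · rw [mem_preimage, Tr_neg_self]; exact hz
  have hRA : ∀ z ∈ R, z ∈ A := fun z hz => ⟨R, hR, ⟨0, by rw [Tr_image_zero]⟩, hz⟩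
  have hR'A : ∀ k, ∀ z ∈ R', Tr k z ∉ interior A := by
    intro k z hz
    refine hD.notMem_int P (Tr k '' R') (hD.inv _ hR' k) ?_ _ ⟨z, hz, rfl⟩
    rintro ⟨j, hj⟩
    have := rch_tr hT hD hj (-j)
    rw [Tr_image_image, Tr_image_image, neg_add_cancel, Tr_image_zero] at this
    exact hno _ this
  refine ⟨A, hAF, hAT, hAc, ?_⟩
  obtain ⟨S1, hc1, z1, k1, hk1, hz1, hz1', hS1⟩ := chain_conn F R (hD.conv R hR).isPreconnected hcrit
    x y hx hy q p hp hq
  obtain ⟨S2, hc2, z2, k2, hk2, hz2, hz2', hS2⟩ := chain_conn F.symm R' (hD.conv R' hR').isPreconnected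
    (by
      rcases hcrit' with ⟨z, hz, hFz⟩ | h
      · exact Or.inl ⟨F z, hFz, by simpa using hz⟩
      · exact Or.inr h) y' x' hy' hx' q' (-p') (neg_ne_zero.2 hp') (by
      have h1 : y' = Tr (-p') (F^[q'] x') := by rw [hq', Tr_neg_self]
      rw [h1, iter_tr _ (symm_tr F hT), iter_symm])
  refine annular_sep (F '' A) (interior A) ((F.isClosedMap) _ hAc) isOpen_interior ?_ ?_ hAi
    (F '' S1) S2 ?_ ?_ (hc1.image _ F.continuous.continuousOn) hc2 (F z1) z2 k1 k2 hk1 hk2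
    ⟨z1, hz1, rfl⟩ ⟨Tr k1 z1, hz1', hT _ _⟩ hz2 hz2'
  · rintro _ ⟨z, hz, rfl⟩; exact hAF z hz
  · rintro k _ ⟨z, hz, rfl⟩; exact ⟨Tr k z, hAT k z hz, hT _ _⟩
  · apply image_mono
    intro w hw
    rcases hS1 w hw with ⟨i, v, hv, rfl⟩ | ⟨j, v, hv, rfl⟩
    · clear hw
      induction i with
      | zero => exact hRA v hv
      | succ n ih => rw [Function.iterate_succ_apply']; exact interior_subset (hAF _ ih)
    · exact hAT j v (hRA v hv)
  · intro w hw
    rcases hS2 w hw with ⟨i, v, hv, rfl⟩ | ⟨j, v, hv, rfl⟩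
    · clear hw
      induction i with
      | zero => have := hR'A 0 v hv; rwa [Tr_zero] at this
      | succ n ih =>
        rw [Function.iterate_succ_apply']
        intro h
        apply ih
        have := hAF _ (interior_subset h)
        rwa [Homeomorph.apply_symm_apply] at this
    · exact hR'A j v hv

/-- piecewise linear interpolation -/
def lin (a : ℤ → ℝ) (t : ℝ) : ℝ := a ⌊t⌋ + Int.fract t * (a (⌊t⌋ + 1) - a ⌊t⌋)

theorem lin_eq (a : ℤ → ℝ) (n : ℤ) (t : ℝ) (h1 : (n:ℝ) ≤ t) (h2 : t ≤ n + 1) :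
    lin a t = a n + (t - n) * (a (n + 1) - a n) := by
  rcases h2.eq_or_lt with h | h
  · have : t = ((n + 1 : ℤ) : ℝ) := by push_cast; exact h
    subst this
    simp only [lin, Int.floor_intCast, Int.fract_intCast]
    push_cast; ring
  · have : ⌊t⌋ = n := Int.floor_eq_iff.2 ⟨h1, h⟩
    simp only [lin, this, Int.fract]

theorem lin_cont (a : ℤ → ℝ) : Continuous (lin a) := by
  rw [continuous_iff_continuousAt]
  intro t
  have aff : ∀ n : ℤ, Continuous fun t : ℝ => a n + (t - n) * (a (n + 1) - a n) := by
    intro n; fun_prop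
  rw [continuousAt_iff_continuous_left_right]
  constructor
  · -- left
    set n := ⌈t⌉ - 1 with hn
    have h1 : (n : ℝ) < t := by have := Int.ceil_lt_add_one t; rw [hn]; push_cast; linarith
    have h2 : t ≤ n + 1 := by have := Int.le_ceil t; rw [hn]; push_cast; linarith
    refine ((aff n).continuousAt.continuousWithinAt).congr_of_eventuallyEq ?_ (lin_eq a n t h1.le h2)
    filter_upwards [self_mem_nhdsWithin, mem_nhdsWithin_of_mem_nhds (lt_mem_nhds h1)] with s hs hs'
    exact lin_eq a n s (le_of_lt hs') (le_trans hs h2)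
  · set n := ⌊t⌋ with hn
    have h1 : (n : ℝ) ≤ t := Int.floor_le t
    have h2 : t < n + 1 := Int.lt_floor_add_one t
    refine ((aff n).continuousAt.continuousWithinAt).congr_of_eventuallyEq ?_ (lin_eq a n t h1 h2.le)
    filter_upwards [self_mem_nhdsWithin, mem_nhdsWithin_of_mem_nhds (gt_mem_nhds h2)] with s hs hs'
    exact lin_eq a n s (le_trans h1 hs) (le_of_lt hs')

def ept (N : ℕ) (v : ℤ × ℤ) : Plane := ((v.1 : ℝ) / N, (v.2 : ℝ) / N)

/-- admissible unit step -/
def GA (O : Set Plane) (N : ℕ) (v v' : ℤ × ℤ) : Prop :=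
  |v'.1 - v.1| + |v'.2 - v.2| = 1 ∧ segment ℝ (ept N v) (ept N v') ⊆ O

theorem ept_tr (N : ℕ) (hN : 0 < N) (v : ℤ × ℤ) (k : ℤ) : ept N (v + (k * N, 0)) = Tr k (ept N v) := by
  have : (N:ℝ) ≠ 0 := by positivity
  simp only [ept, Tr, Prod.fst_add, Prod.snd_add, add_zero]
  push_cast
  congr 1
  field_simp

theorem GA_tr {O : Set Plane} (hO : ∀ k, ∀ z ∈ O, Tr k z ∈ O) {N : ℕ} (hN : 0 < N) {v v'}
    (h : GA O N v v') (k : ℤ) : GA O N (v + (k * N, 0)) (v' + (k * N, 0)) := by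
  refine ⟨?_, ?_⟩
  · simpa using h.1
  · rw [ept_tr N hN, ept_tr N hN, Tr_eq_add, Tr_eq_add]
    rintro _ ⟨a, b, ha, hb, hab, rfl⟩
    have := hO k _ (h.2 ⟨a, b, ha, hb, hab, rfl⟩)
    rw [Tr_eq_add] at this
    convert this using 1
    have : b = 1 - a := by linarith
    subst this
    ext <;> simp <;> ring

theorem floor_close (a b : ℝ) (h : |a - b| < 1) : |⌊a⌋ - ⌊b⌋| ≤ 1 := by
  rw [abs_lt] at h
  have h1 := Int.floor_le a
  have h2 := Int.lt_floor_add_one a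
  have h3 := Int.floor_le b
  have h4 := Int.lt_floor_add_one b
  have e1 : ((⌊a⌋ - ⌊b⌋ : ℤ) : ℝ) < 2 := by push_cast; linarith
  have e2 : ((-2 : ℤ) : ℝ) < ((⌊a⌋ - ⌊b⌋ : ℤ) : ℝ) := by push_cast; linarith
  have e1' : ⌊a⌋ - ⌊b⌋ < 2 := by exact_mod_cast e1
  have e2' : -2 < ⌊a⌋ - ⌊b⌋ := by exact_mod_cast e2
  rw [abs_le]; constructor <;> omega

def rnd (N : ℕ) (z : Plane) : ℤ × ℤ := (⌊N * z.1⌋, ⌊N * z.2⌋)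

theorem rnd_tr (N : ℕ) (z : Plane) (k : ℤ) : rnd N (Tr k z) = rnd N z + (k * N, 0) := by
  simp only [rnd, Tr, Prod.mk_add_mk, add_zero]
  congr 1
  rw [mul_add, ← Int.floor_add_intCast]
  congr 1; push_cast; ring

theorem rnd_step (O : Set Plane) (N : ℕ) (hN : 0 < N) (a b : Plane) (hab : dist a b < 1 / N)
    (hO : Metric.ball a (3 / N) ⊆ O) :
    Relation.ReflTransGen (GA O N) (rnd N a) (rnd N b) := by
  have hNr : (0:ℝ) < N := by positivity
  have sc : ∀ x y : ℝ, |x - y| < 1 / N → |N * x - N * y| < 1 := by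
    intro x y h
    rw [← mul_sub, abs_mul, abs_of_pos hNr]
    calc N * |x - y| < N * (1 / N) := by gcongr
      _ = 1 := by field_simp
  have d1 : |a.1 - b.1| < 1 / N := lt_of_le_of_lt (by rw [← Real.dist_eq, Prod.dist_eq]; exact le_max_left _ _) hab
  have d2 : |a.2 - b.2| < 1 / N := lt_of_le_of_lt (by rw [← Real.dist_eq, Prod.dist_eq]; exact le_max_right _ _) hab
  have f1 := floor_close _ _ (sc _ _ d1)
  have f2 := floor_close _ _ (sc _ _ d2)
  set u := ⌊N * a.1⌋ with hu
  set v := ⌊N * a.2⌋ with hv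
  set u' := ⌊N * b.1⌋ with hu'
  set v' := ⌊N * b.2⌋ with hv'
  have near : ∀ (x : ℝ) (m : ℤ), |m - ⌊N * x⌋| ≤ 1 → |(m : ℝ) / N - x| < 3 / N := by
    intro x m hm
    have h1 := Int.floor_le (N * x)
    have h2 := Int.lt_floor_add_one (N * x)
    rw [abs_le] at hm
    have m1 : (-1 : ℝ) ≤ m - ⌊N * x⌋ := by exact_mod_cast hm.1
    have m2 : (m - ⌊N * x⌋ : ℝ) ≤ 1 := by exact_mod_cast hm.2
    have : (m : ℝ) / N - x = (m - N * x) / N := by field_simp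
    rw [this, abs_div, abs_of_pos hNr]
    gcongr
    rw [abs_lt]; constructor <;> linarith
  have mem : ∀ m n : ℤ, |m - u| ≤ 1 → |n - v| ≤ 1 → ept N (m, n) ∈ Metric.ball a (3 / N) := by
    intro m n hm hn
    rw [Metric.mem_ball, Prod.dist_eq, Real.dist_eq, Real.dist_eq]
    exact max_lt (near _ _ hm) (near _ _ hn)
  have seg : ∀ m n m' n' : ℤ, |m - u| ≤ 1 → |n - v| ≤ 1 → |m' - u| ≤ 1 → |n' - v| ≤ 1 →
      segment ℝ (ept N (m, n)) (ept N (m', n')) ⊆ O := fun m n m' n' h1 h2 h3 h4 =>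
    ((convex_ball a (3 / N)).segment_subset (mem m n h1 h2) (mem m' n' h3 h4)).trans hO
  have g1 : |u' - u| ≤ 1 := by rw [abs_sub_comm]; exact f1
  have g2 : |v' - v| ≤ 1 := by rw [abs_sub_comm]; exact f2
  have s1 : Relation.ReflTransGen (GA O N) (u, v) (u', v) := by
    by_cases h : u = u'
    · rw [h]
    · refine Relation.ReflTransGen.single ⟨?_, seg _ _ _ _ (by simp) (by simp) g1 (by simp)⟩
      have : 0 < |u' - u| := abs_pos.2 (sub_ne_zero.2 (Ne.symm h))
      simp only [sub_self, abs_zero, add_zero]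
      omega
  have s2 : Relation.ReflTransGen (GA O N) (u', v) (u', v') := by
    by_cases h : v = v'
    · rw [h]
    · refine Relation.ReflTransGen.single ⟨?_, seg _ _ _ _ g1 (by simp) g1 g2⟩
      have : 0 < |v' - v| := abs_pos.2 (sub_ne_zero.2 (Ne.symm h))
      simp only [sub_self, abs_zero, zero_add]
      omega
  exact s1.trans s2

theorem grid_walk (O : Set Plane) (hO : IsOpen O) (z : Plane) (k : ℤ) (h : JoinedIn O z (Tr k z)) :
    ∃ N : ℕ, 3 ≤ N ∧ ∃ v : ℤ × ℤ, Relation.ReflTransGen (GA O N) v (v + (k * N, 0)) := by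
  obtain ⟨γ, hγ⟩ := h
  have hK : IsCompact (range γ) := isCompact_range γ.continuous
  obtain ⟨δ, hδ, hsub⟩ := hK.exists_thickening_subset_open hO (by rintro _ ⟨t, rfl⟩; exact hγ t)
  obtain ⟨M, hM⟩ := exists_nat_gt (3 / δ)
  set N := max M 3 with hNdef
  have hN3 : 3 ≤ N := le_max_right _ _
  have hNr : (0:ℝ) < N := by positivity
  have hNδ : 3 / (N:ℝ) ≤ δ := by
    have : (M:ℝ) ≤ N := by exact_mod_cast le_max_left _ _
    rw [div_le_iff₀ hNr]
    rw [div_lt_iff₀ hδ] at hM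
    nlinarith
  have hball : ∀ t, Metric.ball (γ t) (3 / N) ⊆ O := fun t =>
    (Metric.ball_subset_ball hNδ).trans ((Metric.ball_subset_thickening (mem_range_self t) δ).trans hsub)
  refine ⟨N, hN3, rnd N z, ?_⟩
  rw [← rnd_tr]
  have := PreconnectedSpace.induction₂' (α := unitInterval)
    (fun s t => Relation.ReflTransGen (GA O N) (rnd N (γ s)) (rnd N (γ t))) (fun s => by
      have : ∀ᶠ t in 𝓝 s, dist (γ t) (γ s) < 1 / N :=
        γ.continuous.continuousAt.eventually (Metric.ball_mem_nhds _ (by positivity))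
      filter_upwards [this] with t ht
      exact ⟨rnd_step O N (by omega) _ _ (by rwa [dist_comm]) (hball s),
        rnd_step O N (by omega) _ _ ht (hball t)⟩)
    ⟨fun a b c h1 h2 => h1.trans h2⟩ 0 1
  simpa using this

theorem walk_of_rtg {α : Type*} {r : α → α → Prop} {a b : α} (h : Relation.ReflTransGen r a b) :
    ∃ n, ∃ w : ℕ → α, w 0 = a ∧ w n = b ∧ ∀ i < n, r (w i) (w (i + 1)) := by
  induction h with
  | refl => exact ⟨0, fun _ => a, rfl, rfl, by simp⟩
  | @tail b c _ hbc ih =>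
    obtain ⟨n, w, h0, hn, hw⟩ := ih
    refine ⟨n + 1, fun i => if i ≤ n then w i else c, by simp [h0], by simp, ?_⟩
    intro i hi
    rcases Nat.lt_succ_iff_lt_or_eq.1 hi with h | h
    · simp only [if_pos h.le, if_pos (Nat.succ_le_of_lt h)]; exact hw i h
    · subst h; simp [hn, hbc]

theorem edge_int (x y dx dy x' y' dx' dy' : ℤ) (θ θ' : ℝ) (h0 : 0 ≤ θ) (h1 : θ < 1) (h0' : 0 ≤ θ')
    (h1' : θ' < 1) (hd : |dx| + |dy| = 1) (hd' : |dx'| + |dy'| = 1)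
    (e1 : x + θ * dx = x' + θ' * dx') (e2 : y + θ * dy = y' + θ' * dy') :
    (x = x' ∧ y = y' ∧ θ = θ') ∨ (x = x' + dx' ∧ y = y' + dy' ∧ x' = x + dx ∧ y' = y + dy) := by
  have cls : ∀ a b : ℤ, |a| + |b| = 1 → (a = 1 ∧ b = 0) ∨ (a = -1 ∧ b = 0) ∨ (a = 0 ∧ b = 1) ∨ (a = 0 ∧ b = -1) := by
    intro a b h
    rcases abs_cases a with ⟨h1, _⟩ | ⟨h1, _⟩ <;> rcases abs_cases b with ⟨h2, _⟩ | ⟨h2, _⟩ <;> omega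
  have hA : ∃ A : ℤ, x' = x + A := ⟨x' - x, by ring⟩
  have hB : ∃ A : ℤ, y' = y + A := ⟨y' - y, by ring⟩
  obtain ⟨A, rfl⟩ := hA
  obtain ⟨B, rfl⟩ := hB
  push_cast at e1 e2
  have rng : ∀ (A a a' : ℤ), |a| ≤ 1 → |a'| ≤ 1 → (A : ℝ) = θ * a - θ' * a' → -1 ≤ A ∧ A ≤ 1 := by
    intro A a a' ha ha' h
    rw [abs_le] at ha ha'
    have b1 : (-1:ℝ) ≤ a := by exact_mod_cast ha.1
    have b2 : (a:ℝ) ≤ 1 := by exact_mod_cast ha.2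
    have b3 : (-1:ℝ) ≤ a' := by exact_mod_cast ha'.1
    have b4 : (a':ℝ) ≤ 1 := by exact_mod_cast ha'.2
    have u1 : (A:ℝ) < (2:ℤ) := by push_cast; nlinarith
    have u2 : ((-2:ℤ):ℝ) < A := by push_cast; nlinarith
    have u1' : A < 2 := by exact_mod_cast u1
    have u2' : -2 < A := by exact_mod_cast u2
    omega
  have rA := rng A dx dx' (by have := abs_nonneg dy; omega) (by have := abs_nonneg dy'; omega) (by linarith)
  have rB := rng B dy dy' (by have := abs_nonneg dx; omega) (by have := abs_nonneg dx'; omega) (by linarith)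
  obtain ⟨rA1, rA2⟩ := rA
  obtain ⟨rB1, rB2⟩ := rB
  rcases cls _ _ hd with ⟨rfl, rfl⟩ | ⟨rfl, rfl⟩ | ⟨rfl, rfl⟩ | ⟨rfl, rfl⟩ <;>
  rcases cls _ _ hd' with ⟨rfl, rfl⟩ | ⟨rfl, rfl⟩ | ⟨rfl, rfl⟩ | ⟨rfl, rfl⟩ <;>
  interval_cases A <;> interval_cases B <;> push_cast at e1 e2 <;>
  first
    | (exfalso; linarith)
    | (left; refine ⟨by omega, by omega, by linarith⟩)
    | (right; refine ⟨by omega, by omega, by omega, by omega⟩)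

theorem min_walk (O : Set Plane) (N : ℕ) (hN : 3 ≤ N)
    (v : ℤ × ℤ) (k : ℤ) (hk : k ≠ 0) (hw : Relation.ReflTransGen (GA O N) v (v + (k * N, 0))) :
    ∃ (n : ℕ) (w : ℕ → ℤ × ℤ) (k : ℤ), 0 < n ∧ k ≠ 0 ∧ w n = w 0 + (k * N, 0) ∧
      (∀ i < n, GA O N (w i) (w (i + 1))) ∧
      ∀ i < n, ∀ j < n, ∀ m : ℤ, w i = w j + (m * N, 0) → i = j := by
  classical
  have hex : ∃ n, ∃ w : ℕ → ℤ × ℤ, ∃ k : ℤ, k ≠ 0 ∧ w n = w 0 + (k * N, 0) ∧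
      ∀ i < n, GA O N (w i) (w (i + 1)) := by
    obtain ⟨n, w, h0, hn, h⟩ := walk_of_rtg hw
    exact ⟨n, w, k, hk, by rw [hn, h0], h⟩
  have hmin := fun m => @Nat.find_min _ _ hex m
  obtain ⟨w, k, hk, hwn, hst⟩ := Nat.find_spec hex
  set n := Nat.find hex
  have hn : 0 < n := by
    rcases Nat.eq_zero_or_pos n with h | h
    · rw [h] at hwn
      have := congrArg Prod.fst hwn
      simp only [Prod.fst_add] at this
      have h2 : k * (N:ℤ) = 0 := by omega
      rcases mul_eq_zero.1 h2 with h3 | h3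
      · exact absurd h3 hk
      · omega
    · exact h
  have key : ∀ i j, i < j → j < n → ∀ m : ℤ, w j ≠ w i + (m * N, 0) := by
    intro i j hij hj m he
    by_cases hm : m = 0
    · subst hm
      simp only [zero_mul] at he
      have he : w j = w i := by rw [he]; ext <;> simp
      refine hmin (n - (j - i)) (by omega) ⟨fun l => if l ≤ i then w l else w (l + (j - i)), k, hk, ?_, ?_⟩
      · simp only [Nat.zero_le, if_true]
        rw [if_neg (by omega), ← hwn]; congr 1; omega
      · intro l hl
        by_cases h1 : l + 1 ≤ i
        · simp only [if_pos h1, if_pos (Nat.le_of_succ_le h1)]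
          exact hst l (by omega)
        · by_cases h2 : l ≤ i
          · have : l = i := by omega
            subst this
            simp only [le_refl, if_true, if_neg h1]
            rw [← he]
            have := hst j hj
            have e : l + 1 + (j - l) = j + 1 := by omega
            rwa [e]
          · simp only [if_neg h1, if_neg h2]
            have := hst (l + (j - i)) (by omega)
            have e : l + 1 + (j - i) = l + (j - i) + 1 := by omega
            rwa [e]
    · refine hmin (j - i) (by omega) ⟨fun l => w (i + l), m, hm, ?_, ?_⟩
      · simp only [add_zero]
        rw [← he]; congr 1; omega
      · intro l hl
        exact hst (i + l) (by omega)
  refine ⟨n, w, k, hn, hk, hwn, hst, ?_⟩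
  intro i hi j hj m he
  rcases lt_trichotomy i j with h | h | h
  · exfalso
    refine key i j h hj (-m) ?_
    rw [he]; ext <;> simp
  · exact h
  · exact absurd he (key j i h hi m)

/-- Bi-infinite periodic walk. -/
theorem per_walk (O : Set Plane) (hT : ∀ k, ∀ z ∈ O, Tr k z ∈ O) (N : ℕ) (hN : 3 ≤ N)
    (v : ℤ × ℤ) (k : ℤ) (hk : k ≠ 0) (hw : Relation.ReflTransGen (GA O N) v (v + (k * N, 0))) :
    ∃ (n : ℤ) (W : ℤ → ℤ × ℤ) (k : ℤ), 0 < n ∧ k ≠ 0 ∧ (∀ i, W (i + n) = W i + (k * N, 0)) ∧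
      (∀ i, GA O N (W i) (W (i + 1))) ∧
      ∀ i j, ∀ m : ℤ, W i = W j + (m * N, 0) → n ∣ i - j := by
  obtain ⟨n, w, k, hn, hk, hwn, hst, hd⟩ := min_walk O N hN v k hk hw
  have hn' : (0:ℤ) < n := by exact_mod_cast hn
  have hlt : ∀ i : ℤ, (i % n).toNat < n := fun i => by
    have := Int.emod_lt_of_pos i hn'
    have := Int.emod_nonneg i hn'.ne'
    omega
  refine ⟨n, fun i => w (i % n).toNat + (i / n * k * N, 0), k, hn', hk, ?_, ?_, ?_⟩
  · intro i
    simp only [Int.add_emod_right, Int.add_ediv_of_dvd_right (dvd_refl (n:ℤ)), Int.ediv_self hn'.ne']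
    rw [add_assoc]; congr 1
    ext <;> simp; ring
  · intro i
    have h1 := hst _ (hlt i)
    have h2 := GA_tr hT (by omega) h1 (i / n * k)
    have hi := Int.emod_add_mul_ediv i n
    have r1 := Int.emod_lt_of_pos i hn'
    have r2 := Int.emod_nonneg i hn'.ne'
    convert h2 using 1
    by_cases h : i % n + 1 < n
    · have e1 : (i + 1) / n = i / n ∧ (i + 1) % n = i % n + 1 := by
        rw [Int.ediv_emod_unique hn']
        refine ⟨by linarith, by omega, h⟩
      beta_reduce
      rw [e1.1, e1.2]
      congr 2
      omega
    · have h' : i % n + 1 = n := by omega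
      have e1 : (i + 1) / n = i / n + 1 ∧ (i + 1) % n = 0 := by
        rw [Int.ediv_emod_unique hn']
        refine ⟨by linarith, le_rfl, hn'⟩
      beta_reduce
      rw [e1.1, e1.2]
      have e2 : (i % n).toNat + 1 = n := by omega
      rw [e2, hwn]
      ext <;> simp; ring
  · intro i j m he
    simp only at he
    have := hd _ (hlt i) _ (hlt j) (m + j / n * k - i / n * k) (by
      have h1 := congrArg Prod.fst he
      have h2 := congrArg Prod.snd he
      simp only [Prod.fst_add, Prod.snd_add, add_zero] at h1 h2
      ext
      · simp only [Prod.fst_add]; linear_combination h1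
      · simpa using h2)
    have r2 := Int.emod_nonneg i hn'.ne'
    have r2' := Int.emod_nonneg j hn'.ne'
    have e : i % n = j % n := by omega
    exact Int.ModEq.dvd (Eq.symm e)

theorem lin_add (a : ℤ → ℝ) (n : ℤ) (c : ℝ) (h : ∀ i, a (i + n) = a i + c) (t : ℝ) :
    lin a (t + n) = lin a t + c := by
  simp only [lin, Int.floor_add_intCast, Int.fract_add_intCast]
  have : ⌊t⌋ + n + 1 = ⌊t⌋ + 1 + n := by ring
  rw [this, h, h]; ring

theorem simple_curve (O : Set Plane) (hO : IsOpen O) (hT : ∀ k, ∀ z ∈ O, Tr k z ∈ O) (z : Plane)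
    (k : ℤ) (hk : k ≠ 0) (h : JoinedIn O z (Tr k z)) :
    ∃ (γ : ℝ → Plane) (k : ℤ), k ≠ 0 ∧ Continuous γ ∧ (∀ s, γ (s + 1) = Tr k (γ s)) ∧ (∀ s, γ s ∈ O) ∧
      ∀ s s' m, γ s = Tr m (γ s') → ∃ n : ℤ, s - s' = n := by
  obtain ⟨N, hN, v, hv⟩ := grid_walk O hO z k h
  obtain ⟨n, W, k, hn, hk, hper, hst, hd⟩ := per_walk O hT N hN v k hk hv
  have hNr : (0:ℝ) < N := by positivity
  have hnr : (0:ℝ) < n := by exact_mod_cast hn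
  set a : ℤ → ℝ := fun i => ((W i).1 : ℝ) with ha
  set b : ℤ → ℝ := fun i => ((W i).2 : ℝ) with hb
  refine ⟨fun s => (lin a (n * s) / N, lin b (n * s) / N), k, hk, ?_, ?_, ?_, ?_⟩
  · have := lin_cont a
    have := lin_cont b
    fun_prop
  · intro s
    have e1 := lin_add a n (k * N) (fun i => by simp [ha, hper]) (n * s)
    have e2 := lin_add b n 0 (fun i => by simp [hb, hper]) (n * s)
    beta_reduce
    rw [mul_add, mul_one, e1, e2]
    simp only [Tr, add_zero]
    congr 1
    field_simp
  · intro s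
    refine (hst ⌊n * s⌋).2 ?_
    have f0 := Int.fract_nonneg (n * s)
    have f1 := (Int.fract_lt_one (n * s)).le
    refine ⟨1 - Int.fract (n * s), Int.fract (n * s), by linarith, f0, by ring, ?_⟩
    simp only [ept, lin, ha, hb]
    ext
    · simp; ring
    · simp; ring
  · intro s s' m he
    simp only [Tr, Prod.mk.injEq] at he
    obtain ⟨he1, he2⟩ := he
    set t := n * s with ht
    set t' := n * s' with ht'
    have he1 : lin a t = lin a t' + m * N := by field_simp at he1; linarith
    have he2 : lin b t = lin b t' := by field_simp at he2; linarith
    have c := edge_int (W ⌊t⌋).1 (W ⌊t⌋).2 ((W (⌊t⌋ + 1)).1 - (W ⌊t⌋).1) ((W (⌊t⌋ + 1)).2 - (W ⌊t⌋).2)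
      ((W ⌊t'⌋).1 + m * N) (W ⌊t'⌋).2 ((W (⌊t'⌋ + 1)).1 - (W ⌊t'⌋).1) ((W (⌊t'⌋ + 1)).2 - (W ⌊t'⌋).2)
      (Int.fract t) (Int.fract t') (Int.fract_nonneg _) (Int.fract_lt_one _) (Int.fract_nonneg _)
      (Int.fract_lt_one _) (hst _).1 (hst _).1 (by
        simp only [lin, ha] at he1; push_cast; linarith) (by
        simp only [lin, hb] at he2; push_cast; linarith)
    rcases c with ⟨c1, c2, c3⟩ | ⟨c1, c2, c3, c4⟩
    · obtain ⟨l, hl⟩ := hd ⌊t⌋ ⌊t'⌋ m (by ext; exact c1; simpa using c2)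
      refine ⟨l, ?_⟩
      have e : t - t' = n * l := by
        have hl' : ((⌊t⌋:ℝ) - ⌊t'⌋) = n * l := by exact_mod_cast hl
        rw [← hl']
        have g1 := Int.floor_add_fract t
        have g2 := Int.floor_add_fract t'
        linarith
      have e' : (n:ℝ) * (s - s') = n * l := by rw [← e, ht, ht']; ring
      exact mul_left_cancel₀ hnr.ne' e'
    · exfalso
      have d1 := hd ⌊t⌋ (⌊t'⌋ + 1) m (by
        ext
        · simp only [Prod.fst_add]; linarith
        · simp only [Prod.snd_add]; linarith)
      have d2 := hd (⌊t⌋ + 1) ⌊t'⌋ m (by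
        ext
        · simp only [Prod.fst_add]; linarith
        · simp only [Prod.snd_add]; linarith)
      have d3 : n ∣ 2 := by
        have := dvd_sub d2 d1
        have e : ⌊t⌋ + 1 - ⌊t'⌋ - (⌊t⌋ - (⌊t'⌋ + 1)) = 2 := by ring
        rwa [e] at this
      have hle := Int.le_of_dvd (by norm_num) d3
      have s1 : |(W 1).1 - (W 0).1| ≤ 1 := by
        have := (hst 0).1
        have := abs_nonneg ((W (0+1)).2 - (W 0).2)
        simp only [zero_add] at *
        omega
      have s2 : |(W 2).1 - (W 1).1| ≤ 1 := by
        have := (hst 1).1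
        have := abs_nonneg ((W (1+1)).2 - (W 1).2)
        simp only [Int.reduceAdd] at *
        omega
      have pr := congrArg Prod.fst (hper 0)
      simp only [zero_add, Prod.fst_add] at pr
      have kN : 3 ≤ |k * (N:ℤ)| := by
        rw [abs_mul]
        have : 1 ≤ |k| := Int.one_le_abs hk
        have : |(N:ℤ)| = N := abs_of_nonneg (by positivity)
        rw [this]
        have : (3:ℤ) ≤ N := by exact_mod_cast hN
        nlinarith
      rw [abs_le] at s1 s2
      have : n = 1 ∨ n = 2 := by omega
      rcases this with rfl | rfl
      · have := abs_le.2 (show -2 ≤ k * (N:ℤ) ∧ k * (N:ℤ) ≤ 2 by constructor <;> linarith)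
        omega
      · have := abs_le.2 (show -2 ≤ k * (N:ℤ) ∧ k * (N:ℤ) ≤ 2 by constructor <;> linarith)
        omega

theorem coe_const {X : Type*} [TopologicalSpace X] [PreconnectedSpace X] (φ : X → ℝ)
    (hφ : Continuous φ) (h : ∀ x y, (φ x : AddCircle (1:ℝ)) = φ y) (x y : X) : φ x = φ y := by
  have key := exp_const (fun x => ((2 * Real.pi * φ x : ℝ) : ℂ) * Complex.I) (by fun_prop) (fun x y => by
    have := congrArg (fun a => (AddCircle.toCircle a : ℂ)) (h x y)
    simp only [AddCircle.toCircle_apply_mk, Circle.coe_exp, div_one] at this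
    exact this) x y
  have := mul_right_cancel₀ Complex.I_ne_zero key
  have h2 : 2 * Real.pi * φ x = 2 * Real.pi * φ y := by exact_mod_cast this
  exact mul_left_cancel₀ (by positivity) h2

theorem circle_lift {X : Type*} [NormedAddCommGroup X] [NormedSpace ℝ X] (g : X → AddCircle (1:ℝ))
    (hg : Continuous g) : ∃ θ : X → ℝ, Continuous θ ∧ ∀ x, (θ x : AddCircle (1:ℝ)) = g x := by
  obtain ⟨Θ, hc, h⟩ := log_lift (fun x => (AddCircle.toCircle (g x) : ℂ))
    (continuous_subtype_val.comp (AddCircle.continuous_toCircle.comp hg)) (fun x => Circle.coe_ne_zero _)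
  refine ⟨fun x => (Θ x).im / (2 * Real.pi), by fun_prop, fun x => ?_⟩
  have hre : (Θ x).re = 0 := by
    have := congrArg norm (h x)
    rw [Complex.norm_exp, Circle.norm_coe] at this
    exact Real.exp_eq_one_iff _ |>.1 this
  apply AddCircle.injective_toCircle one_ne_zero
  apply Circle.coe_injective
  rw [← h x, AddCircle.toCircle_apply_mk, Circle.coe_exp]
  have e : 2 * Real.pi / 1 * ((Θ x).im / (2 * Real.pi)) = (Θ x).im := by field_simp
  rw [e]
  congr 1
  apply Complex.ext
  · simp [hre]
  · simp

theorem coe_eq_iff (a b : ℝ) : (a : AddCircle (1:ℝ)) = b ↔ ∃ m : ℤ, a = b + m := by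
  rw [← sub_eq_zero, ← AddCircle.coe_sub, AddCircle.coe_eq_zero_iff]
  constructor
  · rintro ⟨n, hn⟩
    refine ⟨n, ?_⟩
    simp at hn; linarith
  · rintro ⟨n, hn⟩
    refine ⟨n, ?_⟩
    simp; linarith

theorem prj_eq_iff (z w : Plane) : prj z = prj w ↔ ∃ m, z = Tr m w := by
  simp only [prj, Prod.mk.injEq, coe_eq_iff]
  constructor
  · rintro ⟨⟨m, h⟩, h2⟩; exact ⟨m, Prod.ext h h2⟩
  · rintro ⟨m, rfl⟩; exact ⟨⟨m, rfl⟩, rfl⟩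

theorem prj_cont : Continuous prj := by
  unfold prj
  exact ((AddCircle.continuous_mk' 1).comp continuous_fst).prodMk continuous_snd

theorem no_free_curve (f : Ann ≃ₜ Ann) (F : Plane ≃ₜ Plane) (hint : IntersectionProperty f)
    (hlift : IsLift f F) (γ : ℝ → Plane) (k : ℤ) (hk : k ≠ 0) (hγ : Continuous γ)
    (hper : ∀ s, γ (s + 1) = Tr k (γ s)) (hinj : ∀ s s' m, γ s = Tr m (γ s') → ∃ n : ℤ, s - s' = n)
    (hfree : ∀ s s' m, F (γ s) ≠ Tr m (γ s')) : False := by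
  have hp : Function.Periodic (fun s => prj (γ s)) (1:ℝ) := by
    intro s
    exact (prj_eq_iff _ _).2 ⟨k, hper s⟩
  have hc : Continuous (hp.lift : AddCircle (1:ℝ) → Ann) := by
    refine (QuotientAddGroup.isQuotientMap_mk _).continuous_iff.2 ?_
    exact prj_cont.comp hγ
  set φ : C(AddCircle (1:ℝ), Ann) := ⟨hp.lift, hc⟩ with hφ
  have hφs : ∀ s : ℝ, φ (s : AddCircle (1:ℝ)) = prj (γ s) := fun s => hp.lift_coe s
  have hsur : ∀ a : AddCircle (1:ℝ), ∃ s : ℝ, (s : AddCircle (1:ℝ)) = a := QuotientAddGroup.mk_surjective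
  have hess : IsEssentialCircle (range φ) := by
    refine ⟨φ, ?_, rfl, ?_⟩
    · intro a b hab
      obtain ⟨s, rfl⟩ := hsur a
      obtain ⟨s', rfl⟩ := hsur b
      rw [hφs, hφs, prj_eq_iff] at hab
      obtain ⟨m, hm⟩ := hab
      obtain ⟨n, hn⟩ := hinj _ _ _ hm
      exact (coe_eq_iff _ _).2 ⟨n, by linarith⟩
    · rintro ⟨pt, ⟨H⟩⟩
      obtain ⟨θ, hθc, hθ⟩ := circle_lift (X := ℝ × ℝ)
        (fun q => (H (projIcc 0 1 zero_le_one q.1, (q.2 : AddCircle (1:ℝ)))).1) (by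
          refine continuous_fst.comp (H.continuous.comp ?_)
          exact (continuous_projIcc.comp continuous_fst).prodMk
            ((AddCircle.continuous_mk' 1).comp continuous_snd))
      have hD := coe_const (fun q : ℝ × ℝ => θ (q.1, q.2 + 1) - θ q) (by fun_prop) (fun x y => by
        have : ∀ x : ℝ × ℝ, ((θ (x.1, x.2 + 1) - θ x : ℝ) : AddCircle (1:ℝ)) = 0 := by
          intro x
          rw [AddCircle.coe_sub, hθ, hθ, sub_eq_zero]
          simp only
          rw [AddCircle.coe_add_period]
        rw [this, this])
      have h1 := coe_const (fun s : ℝ => θ (1, s)) (by fun_prop) (fun x y => by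
        rw [hθ, hθ]; simp) 1 0
      have h0 := coe_const (fun s : ℝ => θ (0, s) - (γ s).1) (by fun_prop) (fun x y => by
        have : ∀ x : ℝ, ((θ (0, x) - (γ x).1 : ℝ) : AddCircle (1:ℝ)) = 0 := by
          intro x
          rw [AddCircle.coe_sub, hθ, sub_eq_zero]
          simp only [projIcc_left]
          have : H ((⟨0, left_mem_Icc.2 zero_le_one⟩ : unitInterval), (x : AddCircle (1:ℝ))) = φ x :=
            H.apply_zero _
          rw [this, hφs]; rfl
        rw [this, this]) 1 0
      have hd := hD (0, 0) (1, 0)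
      simp only [zero_add] at hd h1 h0
      have h2 := congrArg Prod.fst (hper 0)
      rw [Tr_fst, zero_add] at h2
      apply hk
      have : (k:ℝ) = 0 := by linarith
      exact_mod_cast this
  obtain ⟨c, ⟨a, rfl⟩, ⟨_, ⟨b, rfl⟩, hb⟩⟩ := hint _ hess
  obtain ⟨s', rfl⟩ := hsur a
  obtain ⟨s, rfl⟩ := hsur b
  rw [hφs, hφs, ← hlift, prj_eq_iff] at hb
  obtain ⟨m, hm⟩ := hb
  exact hfree _ _ _ hm

theorem lift_facts (f : Ann ≃ₜ Ann) (F : Plane ≃ₜ Plane) (hiso : IsotopicToId f) (hlift : IsLift f F) :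
    IsoId F ∧ ∀ k z, F (Tr k z) = Tr k (F z) := by
  obtain ⟨H, hHc, hHh, hH0, hH1⟩ := hiso
  obtain ⟨θ, hθc, hθ⟩ := circle_lift (X := ℝ × Plane) (fun q => (H q.1 (prj q.2)).1) (by
    refine continuous_fst.comp (hHc.comp (continuous_fst.prodMk (prj_cont.comp continuous_snd))))
  -- normalise
  have hz := coe_const (fun z : Plane => θ (0, z) - z.1) (by fun_prop) (fun x y => by
    have : ∀ z : Plane, ((θ (0, z) - z.1 : ℝ) : AddCircle (1:ℝ)) = 0 := by
      intro z
      rw [AddCircle.coe_sub, hθ, sub_eq_zero]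
      simp only [hH0]; rfl
    rw [this, this])
  have h00 : ((θ (0, 0) : ℝ) : AddCircle (1:ℝ)) = 0 := by
    rw [hθ]; simp only [hH0]; simp [prj]
  set X : ℝ → Plane → Plane := fun t z => (θ (t, z) - θ (0, 0), (H t (prj z)).2) with hX
  have hXc : Continuous fun q : ℝ × Plane => X q.1 q.2 := by
    refine Continuous.prodMk (by fun_prop) ?_
    exact continuous_snd.comp (hHc.comp (continuous_fst.prodMk (prj_cont.comp continuous_snd)))
  have hXp : ∀ t z, prj (X t z) = H t (prj z) := by
    intro t z
    simp only [hX, prj]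
    refine Prod.ext ?_ rfl
    simp only [AddCircle.coe_sub, h00, sub_zero, hθ]; rfl
  have hX0 : ∀ z, X 0 z = z := by
    intro z
    refine Prod.ext ?_ ?_
    · have := hz z 0
      simp at this
      simp only [hX]; linarith
    · simp only [hX, hH0]; rfl
  have hXT : ∀ t k z, X t (Tr k z) = Tr k (X t z) := by
    intro t k z
    have hpr : prj (Tr k z) = prj z := (prj_eq_iff _ _).2 ⟨k, rfl⟩
    have hTk := Tr_cont k
    have := coe_const (fun q : ℝ × Plane => (X q.1 (Tr k q.2)).1 - (X q.1 q.2).1) (by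
        refine Continuous.sub ?_ (continuous_fst.comp hXc)
        exact continuous_fst.comp (hXc.comp (continuous_fst.prodMk (hTk.comp continuous_snd)))) (fun x y => by
      have : ∀ q : ℝ × Plane, (((X q.1 (Tr k q.2)).1 - (X q.1 q.2).1 : ℝ) : AddCircle (1:ℝ)) = 0 := by
        intro q
        have e : prj (Tr k q.2) = prj q.2 := (prj_eq_iff _ _).2 ⟨k, rfl⟩
        have e2 : prj (X q.1 (Tr k q.2)) = prj (X q.1 q.2) := by rw [hXp, hXp, e]
        rw [AddCircle.coe_sub, sub_eq_zero]
        exact congrArg Prod.fst e2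
      rw [this, this]) (t, z) (0, z)
    simp only [hX0, Tr_fst] at this
    refine Prod.ext ?_ ?_
    · rw [Tr_fst]; linarith
    · simp only [hX, Tr_snd, hpr]
  have hXi : ∀ t, Function.Injective (X t) := by
    intro t z w he
    obtain ⟨h, hh⟩ := hHh t
    have e1 : h (prj z) = h (prj w) := by rw [← hh, ← hh, ← hXp, ← hXp, he]
    obtain ⟨m, rfl⟩ := (prj_eq_iff _ _).1 (h.injective e1)
    rw [hXT] at he
    by_cases hm : m = 0
    · rw [hm, Tr_zero]
    · exact absurd he (Tr_ne hm _)
  have hF : ∃ m : ℤ, ∀ z, F z = Tr m (X 1 z) := by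
    have hpe : ∀ z, prj (F z) = prj (X 1 z) := fun z => by rw [hlift, hXp, hH1]
    have hcn := coe_const (fun z : Plane => (F z).1 - (X 1 z).1) (by
      refine Continuous.sub (continuous_fst.comp F.continuous) ?_
      exact continuous_fst.comp (hXc.comp (continuous_const.prodMk continuous_id))) (fun x y => by
      have : ∀ z : Plane, (((F z).1 - (X 1 z).1 : ℝ) : AddCircle (1:ℝ)) = 0 := by
        intro z
        rw [AddCircle.coe_sub, sub_eq_zero]
        exact congrArg Prod.fst (hpe z)
      rw [this, this])
    obtain ⟨m, hm⟩ := (prj_eq_iff _ _).1 (hpe 0)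
    refine ⟨m, fun z => Prod.ext ?_ ?_⟩
    · have := hcn z 0
      have h2 := congrArg Prod.fst hm
      rw [Tr_fst] at h2 ⊢
      linarith
    · have h3 : (prj (F z)).2 = (prj (X 1 z)).2 := congrArg Prod.snd (hpe z)
      exact h3
  obtain ⟨m, hm⟩ := hF
  constructor
  · refine ⟨fun t z => X t z + (t * m, 0), ?_, ?_, ?_, ?_⟩
    · have : Continuous fun q : ℝ × Plane => ((q.1 * m, 0) : Plane) := by fun_prop
      exact hXc.add this
    · intro t z w h
      exact hXi t (add_right_cancel h)
    · intro z; simp [hX0]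
    · intro z; rw [hm, Tr_eq_add]; simp
  · intro k z
    rw [hm, hm, hXT, ← Tr_add, ← Tr_add, add_comm]

theorem punctured_ball (p : Plane) (r : ℝ) : IsPreconnected (Metric.ball p r \ {p}) := by
  rcases le_or_gt r 0 with hr | hr
  · rw [Metric.ball_eq_empty.2 hr]; simp [isPreconnected_empty]
  have hL : Convex ℝ (Metric.ball p r ∩ {z : Plane | z.1 < p.1}) :=
    (convex_ball p r).inter (convex_halfSpace_lt (IsLinearMap.mk (by simp) (by simp)) _)
  have hR : Convex ℝ (Metric.ball p r ∩ {z : Plane | p.1 < z.1}) :=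
    (convex_ball p r).inter (convex_halfSpace_gt (IsLinearMap.mk (by simp) (by simp)) _)
  have hB : Convex ℝ (Metric.ball p r ∩ {z : Plane | z.2 < p.2}) :=
    (convex_ball p r).inter (convex_halfSpace_lt (IsLinearMap.mk (by simp) (by simp)) _)
  have hU : Convex ℝ (Metric.ball p r ∩ {z : Plane | p.2 < z.2}) :=
    (convex_ball p r).inter (convex_halfSpace_gt (IsLinearMap.mk (by simp) (by simp)) _)
  have hm : ∀ a b : ℝ, |a| < r → |b| < r → (p.1 + a, p.2 + b) ∈ Metric.ball p r := by
    intro a b ha hb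
    rw [Metric.mem_ball, Prod.dist_eq, Real.dist_eq, Real.dist_eq]
    simp [ha, hb]
  have hh : |r / 2| < r := by rw [abs_of_pos (by linarith)]; linarith
  have hh' : |-(r / 2)| < r := by rw [abs_neg]; exact hh
  have e : Metric.ball p r \ {p} = (Metric.ball p r ∩ {z : Plane | z.1 < p.1} ∪
      Metric.ball p r ∩ {z : Plane | z.2 < p.2}) ∪ Metric.ball p r ∩ {z : Plane | p.1 < z.1} ∪
      Metric.ball p r ∩ {z : Plane | p.2 < z.2} := by
    ext z
    simp only [mem_diff, mem_singleton_iff, mem_union, mem_inter_iff, mem_setOf_eq, Prod.ext_iff]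
    constructor
    · rintro ⟨h1, h2⟩
      rcases lt_trichotomy z.1 p.1 with h | h | h
      · tauto
      · rcases lt_trichotomy z.2 p.2 with h' | h' | h'
        · tauto
        · exact absurd ⟨h, h'⟩ h2
        · tauto
      · tauto
    · rintro (((⟨h1, h2⟩ | ⟨h1, h2⟩) | ⟨h1, h2⟩) | ⟨h1, h2⟩) <;>
      · refine ⟨h1, fun h => ?_⟩
        first | exact h2.ne h.1 | exact h2.ne h.2 | exact h2.ne' h.1 | exact h2.ne' h.2
  rw [e]
  refine IsPreconnected.union (p.1 + r / 2, p.2 + r / 2) (Or.inr ⟨hm _ _ hh hh, ?_⟩)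
    ⟨hm _ _ hh hh, ?_⟩ (IsPreconnected.union (p.1 + r / 2, p.2 + -(r / 2))
    (Or.inr ⟨hm _ _ hh hh', ?_⟩) ⟨hm _ _ hh hh', ?_⟩
    (IsPreconnected.union (p.1 + -(r / 2), p.2 + -(r / 2)) ⟨hm _ _ hh' hh', ?_⟩
    ⟨hm _ _ hh' hh', ?_⟩ hL.isPreconnected hB.isPreconnected) hR.isPreconnected) hU.isPreconnected
  all_goals simp only [mem_setOf_eq]; linarith

theorem preconn_diff_pt {U : Set Plane} (hUo : IsOpen U) (hU : IsPreconnected U) (p : Plane) :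
    IsPreconnected (U \ {p}) := by
  by_cases hp : p ∈ U
  swap
  · rwa [Set.diff_singleton_eq_self hp]
  obtain ⟨r, hr, hrU⟩ := Metric.isOpen_iff.1 hUo p hp
  have hpb := punctured_ball p r
  have key : ∀ A B : Set Plane, IsOpen A → IsOpen B → U \ {p} ⊆ A ∪ B →
      (U \ {p} ∩ B).Nonempty → ¬ (U \ {p} ∩ (A ∩ B)).Nonempty →
      Metric.ball p r \ {p} ⊆ A → False := by
    intro A B hA hB hAB hBn hn hs
    obtain ⟨w, hw, hwB⟩ := hBn
    obtain ⟨z, hz, hz1, hz2⟩ := hU (A ∪ Metric.ball p r) (B \ {p}) (hA.union Metric.isOpen_ball)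
      (hB.sdiff isClosed_singleton) (by
        intro z hz
        by_cases hzp : z = p
        · left; right; rw [hzp]; exact Metric.mem_ball_self hr
        · rcases hAB ⟨hz, hzp⟩ with h | h
          · exact Or.inl (Or.inl h)
          · exact Or.inr ⟨h, hzp⟩) ⟨p, hp, Or.inr (Metric.mem_ball_self hr)⟩
      ⟨w, hw.1, hwB, hw.2⟩
    refine hn ⟨z, ⟨hz, hz2.2⟩, ?_, hz2.1⟩
    rcases hz1 with h | h
    · exact h
    · exact hs ⟨h, hz2.2⟩
  intro A B hA hB hAB hAn hBn
  by_contra hn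
  have hsub : Metric.ball p r \ {p} ⊆ A ∪ B := fun z hz => hAB ⟨hrU hz.1, hz.2⟩
  have hd : ¬ ((Metric.ball p r \ {p}) ∩ (A ∩ B)).Nonempty := by
    rintro ⟨z, hz, h⟩
    exact hn ⟨z, ⟨hrU hz.1, hz.2⟩, h⟩
  by_cases h1 : (Metric.ball p r \ {p} ∩ A).Nonempty
  · by_cases h2 : (Metric.ball p r \ {p} ∩ B).Nonempty
    · exact hd (hpb A B hA hB hsub h1 h2)
    · refine key A B hA hB hAB hBn hn fun z hz => ?_
      rcases hsub hz with h | h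
      · exact h
      · exact absurd ⟨z, hz, h⟩ h2
  · refine key B A hB hA (by rwa [union_comm]) hAn (by rwa [inter_comm B A]) fun z hz => ?_
    rcases hsub hz with h | h
    · exact absurd ⟨z, hz, h⟩ h1
    · exact h

theorem preconn_diff_finset {U : Set Plane} (hUo : IsOpen U) (hU : IsPreconnected U)
    (P : Finset Plane) : IsPreconnected (U \ (P : Set Plane)) := by
  classical
  induction P using Finset.induction_on with
  | empty => simpa using hU
  | insert a s _ ih =>
    have : U \ ((insert a s : Finset Plane) : Set Plane) = (U \ (s : Set Plane)) \ {a} := by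
      ext z; simp only [Finset.coe_insert, mem_diff, mem_insert_iff, mem_singleton_iff]; tauto
    rw [this]
    exact preconn_diff_pt (hUo.sdiff s.finite_toSet.isClosed) ih a

theorem place {U J : Set Plane} (hUo : IsOpen U) (hU : IsPreconnected U) (hN : NFree ⊤ U)
    (hJU : J ⊆ U) (hJ : J.Infinite) (P : Finset Plane) (hP : ∀ x ∈ P, x ∈ U) :
    ∃ g : Plane ≃ₜ Plane, GoodPush ⊤ U g ∧ ∀ x ∈ P, g x ∈ J := by
  classical
  induction P using Finset.induction_on with
  | empty => exact ⟨_, GoodPush.refl ⊤ U, by simp⟩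
  | insert x s hxs ih =>
    obtain ⟨g, hg, hgJ⟩ := ih fun y hy => hP y (Finset.mem_insert_of_mem hy)
    obtain ⟨b, hb, hbs⟩ := hJ.exists_notMem_finset (s.image g)
    have hVN : NFree ⊤ (U \ ((s.image g : Finset Plane) : Set Plane)) :=
      fun k hk h0 z hz h => hN k hk h0 z hz.1 h.1
    obtain ⟨h, hh, hhb⟩ := push_open ⊤ hVN (hUo.sdiff (s.image g).finite_toSet.isClosed)
      (preconn_diff_finset hUo hU (s.image g)) (a := g x) (b := b)
      ⟨hg.maps _ (hP x (Finset.mem_insert_self x s)), by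
        intro hc
        obtain ⟨y, hy, e⟩ := Finset.mem_image.1 (Finset.mem_coe.1 hc)
        exact hxs (g.injective e ▸ hy)⟩ ⟨hJU hb, fun hc => hbs (Finset.mem_coe.1 hc)⟩
    refine ⟨g.trans h, hg.trans (hh.mono diff_subset hN), ?_⟩
    intro y hy
    rcases Finset.mem_insert.1 hy with rfl | hy
    · simp only [Homeomorph.trans_apply]; rw [hhb]; exact hb
    · simp only [Homeomorph.trans_apply]
      rw [hh.supp]
      · exact hgJ y hy
      · intro k hk hc
        by_cases hk0 : k = 0
        · subst hk0
          rw [Tr_zero] at hc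
          exact hc.2 (Finset.mem_coe.2 (Finset.mem_image_of_mem g hy))
        · exact hN k hk hk0 _ (hJU (hgJ y hy)) hc.1

theorem thick_tr {K L : Set Plane} (hK : IsCompact K) (hL : IsCompact L) (S : Set ℤ)
    (h : ∀ k ∈ S, ∀ z ∈ K, Tr k z ∉ L) :
    ∀ᶠ δ in 𝓝[>] (0:ℝ), ∀ k ∈ S, ∀ z ∈ Metric.thickening δ K, Tr k z ∉ Metric.thickening δ L := by
  obtain ⟨M, hM⟩ := (hK.isBounded.union hL.isBounded).subset_closedBall (0 : Plane)
  obtain ⟨n, hn⟩ := exists_nat_gt (2 * M + 2)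
  have e1 : ∀ᶠ δ in 𝓝[>] (0:ℝ), ∀ k ∈ Finset.Icc (-(n:ℤ)) n, k ∈ S →
      ∀ z ∈ Metric.thickening δ K, Tr k z ∉ Metric.thickening δ L := by
    rw [Filter.eventually_all_finset]
    intro k _
    by_cases hkS : k ∈ S
    · have hd : Disjoint (Tr k '' K) L := by
        rw [Set.disjoint_left]; rintro _ ⟨z, hz, rfl⟩; exact h k hkS z hz
      filter_upwards [thick_disj (hK.image (Tr_cont k)) hL hd] with δ hδ _ z hz
      refine Set.disjoint_left.1 hδ ?_
      obtain ⟨x, hx, hxz⟩ := Metric.mem_thickening_iff.1 hz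
      exact Metric.mem_thickening_iff.2 ⟨Tr k x, ⟨x, hx, rfl⟩, by rwa [dist_Tr]⟩
    · exact Eventually.of_forall fun _ h => absurd h hkS
  filter_upwards [e1, Ioo_mem_nhdsGT (zero_lt_one' ℝ)] with δ h1 hδ k hk z hz hz'
  by_cases hkn : k ∈ Finset.Icc (-(n:ℤ)) n
  · exact h1 k hkn hk z hz hz'
  · obtain ⟨x, hx, hxz⟩ := Metric.mem_thickening_iff.1 hz
    obtain ⟨y, hy, hyz⟩ := Metric.mem_thickening_iff.1 hz'
    have hx1 := hM (Or.inl hx)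
    have hy1 := hM (Or.inr hy)
    rw [Metric.mem_closedBall, Prod.dist_eq] at hx1 hy1
    rw [Prod.dist_eq] at hxz hyz
    have a1 := (le_max_left _ _).trans hx1
    have a2 := (le_max_left _ _).trans hy1
    have a3 := (le_max_left _ _).trans hxz.le
    have a4 := (le_max_left _ _).trans hyz.le
    rw [Real.dist_eq, abs_le] at a1 a2 a3 a4
    rw [Tr_fst] at a4
    simp only [Prod.fst_zero] at a1 a2
    apply hkn
    rw [Finset.mem_Icc]
    constructor
    · have : (-(n:ℝ)) ≤ k := by linarith [hδ.2]
      exact_mod_cast this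
    · have : (k : ℝ) ≤ n := by linarith [hδ.2]
      exact_mod_cast this

theorem seg_exists {U : Set Plane} (hU : IsOpen U) {c0 : Plane} (hc : c0 ∈ U) (h : ℝ) :
    ∃ (c : Plane) (τ : ℝ), 0 < τ ∧ τ ≤ 1 ∧ c.2 ≠ h ∧ Icc c.1 (c.1 + τ) ×ˢ {c.2} ⊆ U := by
  obtain ⟨r, hr, hrU⟩ := Metric.isOpen_iff.1 hU c0 hc
  have key : ∀ b : ℝ, 0 ≤ b → b < r →
      Icc c0.1 (c0.1 + min (r/2) 1) ×ˢ {c0.2 + b} ⊆ U := by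
    rintro b hb hbr ⟨x, y⟩ ⟨⟨h1, h2⟩, h3⟩
    apply hrU
    simp only [mem_singleton_iff] at h1 h2 h3
    have := min_le_left (r/2) 1
    rw [Metric.mem_ball, Prod.dist_eq, Real.dist_eq, Real.dist_eq, max_lt_iff, abs_lt, abs_lt]
    refine ⟨⟨?_, ?_⟩, ?_, ?_⟩ <;> simp only <;> linarith
  have hτ : 0 < min (r/2) 1 := lt_min (by linarith) one_pos
  by_cases hc : c0.2 = h
  · refine ⟨(c0.1, c0.2 + r/2), _, hτ, min_le_right _ _, ?_, key (r/2) (by linarith) (by linarith)⟩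
    simp only; intro hc'; linarith
  · refine ⟨c0, _, hτ, min_le_right _ _, hc, ?_⟩
    have := key 0 le_rfl hr
    rwa [add_zero] at this

theorem seg_inf (c : Plane) {τ : ℝ} (h : 0 < τ) :
    (Icc c.1 (c.1 + τ) ×ˢ ({c.2} : Set ℝ)).Infinite := by
  apply Set.Infinite.prod_left (Icc_infinite (by linarith)) (singleton_nonempty _)

/-- conjugate homeomorphism -/
def cj (Φ F : Plane ≃ₜ Plane) : Plane ≃ₜ Plane := Φ.symm.trans (F.trans Φ)

theorem cj_apply (Φ F : Plane ≃ₜ Plane) (z) : cj Φ F z = Φ (F (Φ.symm z)) := rfl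

theorem cj_iter (Φ F : Plane ≃ₜ Plane) (n : ℕ) (z) : (cj Φ F)^[n] (Φ z) = Φ (F^[n] z) := by
  induction n with
  | zero => rfl
  | succ n ih => rw [Function.iterate_succ_apply', ih, Function.iterate_succ_apply', cj_apply]; simp

theorem cj_fpf (Φ F : Plane ≃ₜ Plane) (h : ∀ z, F z ≠ z) : ∀ z, cj Φ F z ≠ z := by
  intro z hz
  rw [cj_apply] at hz
  apply h (Φ.symm z)
  apply Φ.injective
  simpa using hz

theorem cj_tr (Φ F : Plane ≃ₜ Plane) (hF : ∀ k z, F (Tr k z) = Tr k (F z))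
    (hΦ : ∀ k z, Φ (Tr k z) = Tr k (Φ z)) (k : ℤ) (z) : cj Φ F (Tr k z) = Tr k (cj Φ F z) := by
  have : Φ.symm (Tr k z) = Tr k (Φ.symm z) := by
    apply Φ.injective; rw [hΦ]; simp
  rw [cj_apply, cj_apply, this, hF, hΦ]

theorem cj_iso (Φ F : Plane ≃ₜ Plane) (hF : IsoId F) : IsoId (cj Φ F) := hF.conj Φ

theorem cj_free (Φ F : Plane ≃ₜ Plane) {U : Set Plane} (hU : ∀ z ∈ U, F z ∉ U)
    (hΦ : ∀ z, Φ z ∈ U ↔ z ∈ U) : ∀ z ∈ U, cj Φ F z ∉ U := by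
  intro z hz h
  rw [cj_apply, hΦ] at h
  refine hU _ ?_ h
  rw [← hΦ]; simpa using hz

theorem orbit_chain (F : Plane ≃ₜ Plane) {C} (hD : Decomp F C) (n : ℕ) :
    ∀ (R R' : Set Plane), R ∈ C → R' ∈ C → ∀ x ∈ R, F^[n+1] x ∈ R' →
      Relation.ReflTransGen (Arr F C) R R' := by
  have step : ∀ (R R' : Set Plane), R ∈ C → R' ∈ C → ∀ x ∈ R, F x ∈ R' →
      Relation.ReflTransGen (Arr F C) R R' := by
    intro R R' hR hR' x hx h
    by_cases e : R = R'
    · rw [e]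
    · exact Relation.ReflTransGen.single ⟨hR, hR', e, x, hx, h⟩
  induction n with
  | zero => exact step
  | succ n ih =>
    intro R R' hR hR' x hx h
    obtain ⟨b, hb, hxb⟩ := hD.cover (F x)
    exact (step R b hR hb x hx hxb).trans (ih b R' hb hR' _ hxb h)

theorem orbit_chain' (F : Plane ≃ₜ Plane) {C} (hD : Decomp F C) {q : ℕ} (hq : 0 < q)
    {R : Set Plane} (hR : R ∈ C) {x y : Plane} (hx : x ∈ R) (hy : y ∈ R) {p : ℤ}
    (h : F^[q] x = Tr p y) : Relation.ReflTransGen (Arr F C) R (Tr p '' R) := by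
  obtain ⟨n, rfl⟩ : ∃ n, q = n + 1 := ⟨q - 1, by omega⟩
  exact orbit_chain F hD n R _ hR (hD.inv R hR p) x hx (h ▸ ⟨y, hy, rfl⟩)

theorem rch_mul (F : Plane ≃ₜ Plane) (hT : ∀ k z, F (Tr k z) = Tr k (F z)) {C} (hD : Decomp F C)
    {R : Set Plane} {p : ℤ} (h : Relation.ReflTransGen (Arr F C) R (Tr p '' R)) (n : ℕ) :
    Relation.ReflTransGen (Arr F C) R (Tr (n * p) '' R) := by
  induction n with
  | zero => simp only [Nat.cast_zero, zero_mul, Tr_image_zero]; exact Relation.ReflTransGen.refl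
  | succ n ih =>
    have := rch_tr hT hD ih p
    rw [Tr_image_image] at this
    have e : ((n + 1 : ℕ) : ℤ) * p = p + n * p := by push_cast; ring
    rw [e]
    exact h.trans this

theorem no_loop (F : Plane ≃ₜ Plane) (hI : IsoId F) (hfpf : ∀ z, F z ≠ z)
    (hT : ∀ k z, F (Tr k z) = Tr k (F z)) {C} (hD : Decomp F C)
    {R : Set Plane} (hR : R ∈ C) (a b : ℕ) (ha : 0 < a) (hb : 0 < b)
    (h1 : Relation.ReflTransGen (Arr F C) R (Tr (a:ℤ) '' R))
    (h2 : Relation.ReflTransGen (Arr F C) R (Tr (-(b:ℤ)) '' R)) : False := by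
  have e1 := rch_mul F hT hD h1 b
  have e2 := rch_tr hT hD (rch_mul F hT hD h2 a) (b * a)
  rw [Tr_image_image] at e2
  have : (b:ℤ) * a + a * -(b:ℤ) = 0 := by ring
  rw [this, Tr_image_zero] at e2
  have hne : (b:ℤ) * a ≠ 0 := by positivity
  rcases Relation.reflTransGen_iff_eq_or_transGen.1 e1 with h | h
  · exact hD.moved R hR _ hne h
  · exact acyclic F hI hfpf hD.toCellSys R (h.trans_left e2)

/-- horizontal segment -/
def sg (c : Plane) (τ : ℝ) : Set Plane := Icc c.1 (c.1 + τ) ×ˢ {c.2}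

theorem core1 (F : Plane ≃ₜ Plane) (hI : IsoId F) (hfpf : ∀ z, F z ≠ z)
    (hT : ∀ k z, F (Tr k z) = Tr k (F z)) (c : Plane) (τ : ℝ) (h0 : 0 < τ) (h1 : τ ≤ 1)
    (hf : ∀ z ∈ sg c τ, F z ∉ sg c τ) (x y x' y' : Plane) (hx : x ∈ sg c τ) (hy : y ∈ sg c τ)
    (hx' : x' ∈ sg c τ) (hy' : y' ∈ sg c τ) (p q p' q' : ℕ) (hp : 0 < p) (hq : 0 < q)
    (hp' : 0 < p') (hq' : 0 < q') (e : F^[q] x = Tr (p:ℤ) y) (e' : F^[q'] x' = Tr (-(p':ℤ)) y') :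
    False := by
  obtain ⟨δ, hδ, hδ0⟩ := ((thick_free (isCompact_singleton (x := ((c.1, c.2 + 1) : Plane))) F
    (by rintro _ rfl; exact hfpf _)).and self_mem_nhdsWithin).exists
  obtain ⟨c', τ', ht0, ht1, hne, hs⟩ := seg_exists Metric.isOpen_thickening
    (Metric.self_subset_thickening hδ0 _ (mem_singleton ((c.1, c.2 + 1) : Plane))) c.2
  obtain ⟨C, hD, hC⟩ := decomp_exists F hT hfpf (fun i => cond i c' c) hne
    (fun i => cond i τ' τ) (by rintro (_|_) <;> simpa) (by rintro (_|_) <;> simpa) (by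
      rintro (_|_)
      · exact hf
      · exact fun z hz h => hδ z (hs hz) (hs h))
  obtain ⟨R, hR, hRs, -⟩ := hC false
  have hRs : sg c τ ⊆ R := hRs
  exact no_loop F hI hfpf hT hD hR p p' hp hp'
    (orbit_chain' F hD hq hR (hRs hx) (hRs hy) e) (orbit_chain' F hD hq' hR (hRs hx') (hRs hy') e')

/-- there is no free essential curve -/
def NoCurve (F : Plane → Plane) : Prop :=
  ∀ (γ : ℝ → Plane) (k : ℤ), k ≠ 0 → Continuous γ → (∀ s, γ (s+1) = Tr k (γ s)) →
    (∀ s s' m, γ s = Tr m (γ s') → ∃ n : ℤ, s - s' = n) →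
    (∀ s s' m, F (γ s) ≠ Tr m (γ s')) → False

theorem NoCurve.cj {F : Plane ≃ₜ Plane} (h : NoCurve F) (Φ : Plane ≃ₜ Plane)
    (hΦ : ∀ k z, Φ (Tr k z) = Tr k (Φ z)) : NoCurve (cj Φ F) := by
  intro γ k hk hγ hper hinj hfree
  have hs : ∀ k z, Φ.symm (Tr k z) = Tr k (Φ.symm z) := by
    intro k z; apply Φ.injective; rw [hΦ]; simp
  refine h (fun s => Φ.symm (γ s)) k hk (Φ.symm.continuous.comp hγ) ?_ ?_ ?_
  · intro s; rw [hper, hs]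
  · intro s s' m hm
    rw [← hs] at hm
    exact hinj s s' m (Φ.symm.injective hm)
  · intro s s' m hm
    apply hfree s s' m
    rw [cj_apply, hm, hΦ]; simp

theorem reach_of_nocurve (F : Plane ≃ₜ Plane) (hT : ∀ k z, F (Tr k z) = Tr k (F z)) {C}
    (hN : NoCurve F)
    (hD : Decomp F C) (R R' : Set Plane) (hR : R ∈ C) (hR' : R' ∈ C)
    (hcrit : (∃ z ∈ R, F z ∈ R) ∨ ∃ z ∈ R, Tr 1 z ∈ R)
    (hcrit' : (∃ z ∈ R', F z ∈ R') ∨ ∃ z ∈ R', Tr 1 z ∈ R')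
    (x y : Plane) (hx : x ∈ R) (hy : y ∈ R) (q : ℕ) (p : ℤ) (hp : p ≠ 0) (hq : F^[q] x = Tr p y)
    (x' y' : Plane) (hx' : x' ∈ R') (hy' : y' ∈ R') (q' : ℕ) (p' : ℤ) (hp' : p' ≠ 0)
    (hq' : F^[q'] x' = Tr p' y') :
    ∃ k, Relation.ReflTransGen (Arr F C) R (Tr k '' R') := by
  by_contra hno
  push Not at hno
  obtain ⟨A, hA, hAT, hAc, z, k, hk, hj⟩ := attractor_sep F hT hD R R' hR hR' hcrit hcrit' x y hx hy
    q p hp hq x' y' hx' hy' q' p' hp' hq' hno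
  have hFT : ∀ k, ∀ z ∈ F '' A, Tr k z ∈ F '' A := by
    rintro k _ ⟨w, hw, rfl⟩
    exact ⟨Tr k w, hAT k w hw, hT k w⟩
  have hTi : ∀ k, ∀ z ∈ interior A, Tr k z ∈ interior A := by
    intro k z hz
    have hsub : Tr (-k) ⁻¹' (interior A) ⊆ A := by
      intro w hw
      have := hAT k _ (interior_subset hw)
      rwa [Tr_self_neg] at this
    refine interior_maximal hsub (isOpen_interior.preimage (Tr_cont _)) ?_
    simpa [Tr_neg_self] using hz
  obtain ⟨γ, m, hm, hγ, hper, hO, hinj⟩ := simple_curve (interior A \ F '' A)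
    (isOpen_interior.sdiff (F.isClosedMap _ hAc)) (by
      rintro k z ⟨h1, h2⟩
      refine ⟨hTi k z h1, fun h => h2 ?_⟩
      have := hFT (-k) _ h
      rwa [Tr_neg_self] at this) z k hk hj
  refine hN γ m hm hγ hper hinj ?_
  intro s s' j h
  apply (hO s').2
  have : Tr (-j) (F (γ s)) ∈ F '' A := hFT (-j) _ ⟨γ s, interior_subset (hO s).1, rfl⟩
  rwa [h, Tr_neg_self] at this

theorem core2 (F : Plane ≃ₜ Plane) (hI : IsoId F) (hfpf : ∀ z, F z ≠ z)
    (hT : ∀ k z, F (Tr k z) = Tr k (F z)) (hN : NoCurve F)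
    (c : Plane) (τ : ℝ) (h0 : 0 < τ) (h1 : τ ≤ 1)
    (hf : ∀ z ∈ sg c τ, F z ∉ sg c τ)
    (c' : Plane) (τ' : ℝ) (h0' : 0 < τ') (h1' : τ' ≤ 1)
    (hf' : ∀ z ∈ sg c' τ', F z ∉ sg c' τ') (hne : c'.2 ≠ c.2)
    (x y x' y' : Plane) (hx : x ∈ sg c τ) (hy : y ∈ sg c τ)
    (hx' : x' ∈ sg c' τ') (hy' : y' ∈ sg c' τ') (p q p' q' : ℕ) (hp : 0 < p) (hq : 0 < q)
    (hp' : 0 < p') (hq' : 0 < q') (e : F^[q] x = Tr (p:ℤ) y) (e' : F^[q'] x' = Tr (-(p':ℤ)) y') :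
    False := by
  obtain ⟨C, hD, hC⟩ := decomp_exists F hT hfpf (fun i => cond i c' c) hne
    (fun i => cond i τ' τ) (by rintro (_|_) <;> simpa) (by rintro (_|_) <;> simpa) (by
      rintro (_|_)
      · exact hf
      · exact hf')
  obtain ⟨R, hR, hRs, hcrit⟩ := hC false
  obtain ⟨R', hR', hRs', hcrit'⟩ := hC true
  have hRs : sg c τ ⊆ R := hRs
  have hRs' : sg c' τ' ⊆ R' := hRs'
  have a1 := orbit_chain' F hD hq hR (hRs hx) (hRs hy) e
  have a2 := orbit_chain' F hD hq' hR' (hRs' hx') (hRs' hy') e'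
  have n1 : (p:ℤ) ≠ 0 := by omega
  have n2 : -(p':ℤ) ≠ 0 := by omega
  obtain ⟨k, hk⟩ := reach_of_nocurve F hT hN hD R R' hR hR' hcrit hcrit' x y (hRs hx) (hRs hy) q p n1
    e x' y' (hRs' hx') (hRs' hy') q' _ n2 e'
  obtain ⟨m, hm⟩ := reach_of_nocurve F hT hN hD R' R hR' hR hcrit' hcrit x' y' (hRs' hx') (hRs' hy')
    q' _ n2 e' x y (hRs hx) (hRs hy) q p n1 e
  set n : ℕ := (k + m).toNat + 1
  have b1 := rch_tr hT hD (rch_mul F hT hD a2 n) k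
  rw [Tr_image_image] at b1
  have b2 := rch_tr hT hD hm (k + n * -(p':ℤ))
  rw [Tr_image_image] at b2
  have b3 := (hk.trans b1).trans b2
  have hpos : k + n * -(p':ℤ) + m < 0 := by
    have h1 : k + m < n := by have := Int.self_le_toNat (k + m); push_cast [n]; omega
    have h2 : (1:ℤ) ≤ p' := by omega
    have h3 : (n:ℤ) ≤ n * p' := by nlinarith [Int.natCast_nonneg n]
    linarith
  obtain ⟨b, hb⟩ := Int.exists_eq_neg_ofNat hpos.le
  rw [hb] at b3
  exact no_loop F hI hfpf hT hD hR p b hp (by omega) a1 b3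

theorem path_compact {X : Set Plane} (h : IsPathConnected X) {x y : Plane} (hx : x ∈ X)
    (hy : y ∈ X) : ∃ K ⊆ X, IsCompact K ∧ IsPreconnected K ∧ x ∈ K ∧ y ∈ K := by
  obtain ⟨γ, hγ⟩ := h.joinedIn x hx y hy
  refine ⟨range γ, ?_, isCompact_range γ.continuous, isPreconnected_range γ.continuous,
    ⟨0, γ.source⟩, ⟨1, γ.target⟩⟩
  rintro _ ⟨t, rfl⟩; exact hγ t

theorem pres_iff {U : Set Plane} {g : Plane ≃ₜ Plane} (hg : GoodPush ⊤ U g) (hU : NFree ⊤ U) (z) :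
    g z ∈ U ↔ z ∈ U := ⟨fun h => hg.inv hU h, fun h => hg.maps z h⟩

theorem case1 (F : Plane ≃ₜ Plane) (hI : IsoId F) (hfpf : ∀ z, F z ≠ z)
    (hT : ∀ k z, F (Tr k z) = Tr k (F z)) {X : Set Plane} (hX : IsPathConnected X)
    (hf : ∀ z ∈ X, F z ∉ X) (hXT : ∀ k, k ≠ 0 → ∀ z ∈ X, Tr k z ∉ X)
    (x y x' y' : Plane) (hx : x ∈ X) (hy : y ∈ X) (hx' : x' ∈ X) (hy' : y' ∈ X)
    (p q p' q' : ℕ) (hp : 0 < p) (hq : 0 < q)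
    (hp' : 0 < p') (hq' : 0 < q') (e : F^[q] x = Tr (p:ℤ) y) (e' : F^[q'] x' = Tr (-(p':ℤ)) y') :
    False := by
  classical
  obtain ⟨K1, s1, c1, d1, u1, v1⟩ := path_compact hX hx hy
  obtain ⟨K2, s2, c2, d2, u2, v2⟩ := path_compact hX hx hx'
  obtain ⟨K3, s3, c3, d3, u3, v3⟩ := path_compact hX hx hy'
  set K := K1 ∪ K2 ∪ K3
  have hKc : IsCompact K := (c1.union c2).union c3
  have hKp : IsPreconnected K := (d1.union x u1 u2 d2).union x (Or.inl u1) u3 d3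
  have hKX : K ⊆ X := union_subset (union_subset s1 s2) s3
  obtain ⟨δ, ⟨hδ1, hδ2⟩, hδ⟩ := (((thick_free hKc F
    (fun z hz h => hf z (hKX hz) (hKX h))).and (thick_tr hKc hKc {k | k ≠ 0}
    (fun k hk z hz h => hXT k hk z (hKX hz) (hKX h)))).and self_mem_nhdsWithin).exists
  have hδ : 0 < δ := hδ
  set U := Metric.thickening δ K
  have hUo : IsOpen U := Metric.isOpen_thickening
  have hKU : K ⊆ U := Metric.self_subset_thickening hδ K
  have hN : NFree ⊤ U := fun k _ h0 z hz => hδ2 k h0 z hz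
  have hxU : x ∈ U := hKU (Or.inl (Or.inl u1))
  obtain ⟨c, τ, h0, h1, -, hs⟩ := seg_exists hUo hxU 0
  obtain ⟨g, hg, hgP⟩ := place hUo (preconn_thickening hKp δ hδ) hN hs (seg_inf c h0) {x, y, x', y'}
    (by
      intro w hw
      simp only [Finset.mem_insert, Finset.mem_singleton] at hw
      rcases hw with rfl | rfl | rfl | rfl
      · exact hxU
      · exact hKU (Or.inl (Or.inl v1))
      · exact hKU (Or.inl (Or.inr v2))
      · exact hKU (Or.inr v3))
  have hgT : ∀ k z, g (Tr k z) = Tr k (g z) := fun k z => hg.comm k trivial z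
  have hfr := cj_free g F hδ1 (pres_iff hg hN)
  refine core1 (cj g F) (cj_iso g F hI) (cj_fpf g F hfpf) (cj_tr g F hT hgT) c τ h0 h1
    (fun z hz h => hfr z (hs hz) (hs h)) (g x) (g y) (g x') (g y') (hgP _ (by simp))
    (hgP _ (by simp)) (hgP _ (by simp)) (hgP _ (by simp)) p q p' q' hp hq hp' hq' ?_ ?_
  · rw [cj_iter, e, hgT]
  · rw [cj_iter, e', hgT]

theorem case2 (F : Plane ≃ₜ Plane) (hI : IsoId F) (hfpf : ∀ z, F z ≠ z)
    (hT : ∀ k z, F (Tr k z) = Tr k (F z)) (hC : NoCurve F) {X Y : Set Plane}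
    (hX : IsPathConnected X) (hY : IsPathConnected Y)
    (hf : ∀ z ∈ X, F z ∉ X) (hXT : ∀ k, k ≠ 0 → ∀ z ∈ X, Tr k z ∉ X)
    (hf' : ∀ z ∈ Y, F z ∉ Y) (hYT : ∀ k, k ≠ 0 → ∀ z ∈ Y, Tr k z ∉ Y)
    (hXY : ∀ k, ∀ z ∈ X, Tr k z ∉ Y)
    (x y x' y' : Plane) (hx : x ∈ X) (hy : y ∈ X) (hx' : x' ∈ Y) (hy' : y' ∈ Y)
    (p q p' q' : ℕ) (hp : 0 < p) (hq : 0 < q)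
    (hp' : 0 < p') (hq' : 0 < q') (e : F^[q] x = Tr (p:ℤ) y) (e' : F^[q'] x' = Tr (-(p':ℤ)) y') :
    False := by
  classical
  obtain ⟨K, s1, c1, d1, u1, v1⟩ := path_compact hX hx hy
  obtain ⟨L, s2, c2, d2, u2, v2⟩ := path_compact hY hx' hy'
  obtain ⟨δ, ⟨⟨⟨⟨hδ1, hδ2⟩, hδ3⟩, hδ4⟩, hδ5⟩, hδ⟩ := (((((thick_free c1 F
    (fun z hz h => hf z (s1 hz) (s1 h))).and (thick_tr c1 c1 {k | k ≠ 0}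
    (fun k hk z hz h => hXT k hk z (s1 hz) (s1 h)))).and (thick_free c2 F
    (fun z hz h => hf' z (s2 hz) (s2 h)))).and (thick_tr c2 c2 {k | k ≠ 0}
    (fun k hk z hz h => hYT k hk z (s2 hz) (s2 h)))).and (thick_tr c1 c2 univ
    (fun k hk z hz h => hXY k z (s1 hz) (s2 h)))).and self_mem_nhdsWithin |>.exists
  have hδ : 0 < δ := hδ
  set U := Metric.thickening δ K
  set V := Metric.thickening δ L
  have hUo : IsOpen U := Metric.isOpen_thickening
  have hVo : IsOpen V := Metric.isOpen_thickening
  have hKU : K ⊆ U := Metric.self_subset_thickening hδ K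
  have hLV : L ⊆ V := Metric.self_subset_thickening hδ L
  have hN : NFree ⊤ U := fun k _ h0 z hz => hδ2 k h0 z hz
  have hM : NFree ⊤ V := fun k _ h0 z hz => hδ4 k h0 z hz
  have hUV : ∀ k, ∀ z ∈ U, Tr k z ∉ V := fun k z hz => hδ5 k trivial z hz
  have hVU : ∀ k, ∀ z ∈ V, Tr k z ∉ U := by
    intro k z hz h
    have := hUV (-k) _ h
    rw [Tr_neg_self] at this
    exact this hz
  obtain ⟨c, τ, h0, h1, -, hs⟩ := seg_exists hUo (hKU u1) 0
  obtain ⟨c', τ', h0', h1', hne, hs'⟩ := seg_exists hVo (hLV u2) c.2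
  obtain ⟨g, hg, hgP⟩ := place hUo (preconn_thickening d1 δ hδ) hN hs (seg_inf c h0) {x, y}
    (by
      intro w hw
      simp only [Finset.mem_insert, Finset.mem_singleton] at hw
      rcases hw with rfl | rfl
      · exact hKU u1
      · exact hKU v1)
  obtain ⟨h, hh, hhP⟩ := place hVo (preconn_thickening d2 δ hδ) hM hs' (seg_inf c' h0') {x', y'}
    (by
      intro w hw
      simp only [Finset.mem_insert, Finset.mem_singleton] at hw
      rcases hw with rfl | rfl
      · exact hLV u2
      · exact hLV v2)
  have hgV : ∀ z ∈ V, g z = z := fun z hz => hg.supp z fun k _ => hVU k z hz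
  have hhU : ∀ z ∈ U, h z = z := fun z hz => hh.supp z fun k _ => hUV k z hz
  have gV : ∀ z, g z ∈ V ↔ z ∈ V := by
    intro z
    constructor
    · intro hz
      have := g.injective (hgV _ hz)
      rwa [this] at hz
    · intro hz; rwa [hgV z hz]
  have hU' : ∀ z, h z ∈ U ↔ z ∈ U := by
    intro z
    constructor
    · intro hz
      have := h.injective (hhU _ hz)
      rwa [this] at hz
    · intro hz; rwa [hhU z hz]
  set Φ := g.trans h with hΦ
  have hΦa : ∀ z, Φ z = h (g z) := fun z => rfl
  have hΦT : ∀ k z, Φ (Tr k z) = Tr k (Φ z) := fun k z => (hΦa _).trans (by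
    rw [hg.comm k trivial z, hh.comm k trivial, hΦa])
  have hfr := cj_free Φ F hδ1 (fun z => by rw [hΦa, hU', pres_iff hg hN])
  have hfr' := cj_free Φ F hδ3 (fun z => by rw [hΦa, pres_iff hh hM, gV])
  have m1 : ∀ w ∈ ({x, y} : Finset Plane), Φ w ∈ sg c τ := by
    intro w hw
    rw [hΦa, hhU _ (hs (hgP w hw))]
    exact hgP w hw
  have m2 : ∀ w ∈ ({x', y'} : Finset Plane), Φ w ∈ sg c' τ' := by
    intro w hw
    have hwV : w ∈ V := by
      rw [← pres_iff hh hM]; exact hs' (hhP w hw)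
    rw [hΦa, hgV _ hwV]
    exact hhP w hw
  refine core2 (cj Φ F) (cj_iso Φ F hI) (cj_fpf Φ F hfpf) (cj_tr Φ F hT hΦT) (hC.cj Φ hΦT) c τ h0 h1
    (fun z hz h => hfr z (hs hz) (hs h)) c' τ' h0' h1' (fun z hz h => hfr' z (hs' hz) (hs' h)) hne
    (Φ x) (Φ y) (Φ x') (Φ y') (m1 _ (by simp))
    (m1 _ (by simp)) (m2 _ (by simp)) (m2 _ (by simp)) p q p' q' hp hq hp' hq' ?_ ?_
  · rw [cj_iter, e, hΦT]
  · rw [cj_iter, e', hΦT]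

/-- Lemma 4.1: a Franks-type fixed point lemma. If there are two path-connected sets
`X₁, X₂` in ℝ², each free for `F` and for all nontrivial deck transformations, either equal
or with disjoint deck orbits, such that some positive iterate of `X₁` meets a positive
translate of `X₁` and some positive iterate of `X₂` meets a negative translate of `X₂`,
then `F` has a fixed point. -/
theorem franks_type_fixed_point
    (f : Ann ≃ₜ Ann) (F : Plane ≃ₜ Plane)
    (hiso : IsotopicToId f) (hint : IntersectionProperty f) (hlift : IsLift f F)
    (X₁ X₂ : Set Plane)
    (hpc₁ : IsPathConnected X₁) (hpc₂ : IsPathConnected X₂)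
    (hfree₁ : Disjoint (⇑F '' X₁) X₁) (hfree₂ : Disjoint (⇑F '' X₂) X₂)
    (hT₁ : ∀ k : ℤ, k ≠ 0 → Disjoint (Tr k '' X₁) X₁)
    (hT₂ : ∀ k : ℤ, k ≠ 0 → Disjoint (Tr k '' X₂) X₂)
    (hX₁₂ : X₁ = X₂ ∨ ∀ k : ℤ, Disjoint (Tr k '' X₁) X₂)
    (p₁ q₁ p₂ q₂ : ℕ) (hp₁ : 0 < p₁) (hq₁ : 0 < q₁) (hp₂ : 0 < p₂) (hq₂ : 0 < q₂)
    (hmeet₁ : ((⇑F)^[q₁] '' X₁ ∩ Tr (p₁ : ℤ) '' X₁).Nonempty)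
    (hmeet₂ : ((⇑F)^[q₂] '' X₂ ∩ Tr (-(p₂ : ℤ)) '' X₂).Nonempty) :
    ∃ z : Plane, F z = z := by
  by_contra hno
  push Not at hno
  obtain ⟨hI, hT⟩ := lift_facts f F hiso hlift
  have hC : NoCurve F := fun γ k hk hγ hper hinj hfree =>
    no_free_curve f F hint hlift γ k hk hγ hper hinj hfree
  obtain ⟨_, ⟨x, hx, rfl⟩, y, hy, e⟩ := hmeet₁
  obtain ⟨_, ⟨x', hx', rfl⟩, y', hy', e'⟩ := hmeet₂
  have f1 : ∀ z ∈ X₁, F z ∉ X₁ := fun z hz h => Set.disjoint_left.1 hfree₁ ⟨z, hz, rfl⟩ h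
  have f2 : ∀ z ∈ X₂, F z ∉ X₂ := fun z hz h => Set.disjoint_left.1 hfree₂ ⟨z, hz, rfl⟩ h
  have t1 : ∀ k : ℤ, k ≠ 0 → ∀ z ∈ X₁, Tr k z ∉ X₁ := fun k hk z hz h =>
    Set.disjoint_left.1 (hT₁ k hk) ⟨z, hz, rfl⟩ h
  have t2 : ∀ k : ℤ, k ≠ 0 → ∀ z ∈ X₂, Tr k z ∉ X₂ := fun k hk z hz h =>
    Set.disjoint_left.1 (hT₂ k hk) ⟨z, hz, rfl⟩ h
  rcases hX₁₂ with rfl | hd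
  · exact case1 F hI hno hT hpc₁ f1 t1 x y x' y' hx hy hx' hy' p₁ q₁ p₂ q₂ hp₁ hq₁ hp₂ hq₂
      e.symm e'.symm
  · exact case2 F hI hno hT hC hpc₁ hpc₂ f1 t1 f2 t2
      (fun k z hz h => Set.disjoint_left.1 (hd k) ⟨z, hz, rfl⟩ h)
      x y x' y' hx hy hx' hy' p₁ q₁ p₂ q₂ hp₁ hq₁ hp₂ hq₂ e.symm e'.symm
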